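/- Let Ω = (0,1)×(−1,1). For every u ∈ A ∩ SBV_∞(Ω;ℝ²) there exists a sequence (u_ε)_ε ⊂ W^{1,1}(Ω;ℝ²) with ∫_Ω u_ε dx = ∫_Ω u dx and u_ε ∈ A_ε for all ε, such that u_ε converges weakly* to u in BV(Ω;ℝ²). -/

import Mathlib

open MeasureTheory Set Filter Topology
open scoped ENNReal

noncomputable section

/-- We identify `ℝ²` with maps `Fin 2 → ℝ`; `x 0` is the `x₁` coordinate and
`x 1` the `x₂` coordinate. -/
abbrev V2 := Fin 2 → ℝ

/-- `2 × 2` real matrices. -/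
abbrev Mat2 := Matrix (Fin 2) (Fin 2) ℝ

/-- Proper rotations: `SO(2) = {R : R Rᵀ = 1, det R = 1}`. -/
def SO2 : Set Mat2 := {R | R * R.transpose = 1 ∧ R.det = 1}

def e1 : V2 := ![1, 0]
def e2 : V2 := ![0, 1]

/-- Euclidean norm on `ℝ²`. -/
def vnorm (v : V2) : ℝ := Real.sqrt (v 0 ^ 2 + v 1 ^ 2)

/-- Frobenius norm on `2 × 2` matrices. -/
def mnorm (M : Mat2) : ℝ := Real.sqrt (∑ i, ∑ j, M i j ^ 2)

/-- Euclidean inner product on `ℝ²`. -/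
def dot (v w : V2) : ℝ := ∑ i, v i * w i

/-- Tensor (outer) product `a ⊗ b = a bᵀ` of two vectors. -/
def outer (a b : V2) : Mat2 := Matrix.of fun i j => a i * b j

/-- Identification of `ℝ²` with the Euclidean space `EuclideanSpace ℝ (Fin 2)`. -/
def vToE (v : V2) : EuclideanSpace ℝ (Fin 2) := (EuclideanSpace.equiv (Fin 2) ℝ).symm v

/-- Identification of `2×2` matrices with `EuclideanSpace ℝ (Fin 2 × Fin 2)`
(so that the induced norm is the Frobenius norm). -/
def mToE (M : Mat2) : EuclideanSpace ℝ (Fin 2 × Fin 2) :=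
  (EuclideanSpace.equiv (Fin 2 × Fin 2) ℝ).symm fun p => M p.1 p.2

/-- A vector-valued function of one real variable has bounded variation on `s`
(with respect to the Euclidean norm). -/
def BVv (ψ : ℝ → V2) (s : Set ℝ) : Prop := BoundedVariationOn (fun t => vToE (ψ t)) s

/-- A matrix-valued function of one real variable has bounded variation on `s`
(with respect to the Frobenius norm). -/
def BVm (R : ℝ → Mat2) (s : Set ℝ) : Prop := BoundedVariationOn (fun t => mToE (R t)) s

/-- Componentwise (a.e. pointwise) derivative of a vector-valued function of one variable.
For a one-dimensional `BV` function, the classical derivative exists a.e. and coincides with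
the density of the absolutely continuous part of its distributional derivative
(the approximate derivative). -/
def vecDeriv (ψ : ℝ → V2) (t : ℝ) : V2 := fun i => deriv (fun s => ψ s i) t

/-- Componentwise derivative of a matrix-valued function of one variable. -/
def mDeriv (R : ℝ → Mat2) (t : ℝ) : Mat2 := Matrix.of fun i j => deriv (fun s => R s i j) t

/-- The rigid layers `ε Y_rig = {x : Int.fract (x₂/ε) ∈ [λ, 1)}` (1-periodic extension of
`[0,1) × [λ,1)`, scaled by `ε`). -/
def rigid2 (lam ε : ℝ) : Set V2 := {x | lam ≤ Int.fract (x 1 / ε)}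

/-- The one-dimensional rigid layers `ε I_rig`, where `I_rig` is the 1-periodic extension
of `[λ, 1)`. -/
def rigid1 (lam ε : ℝ) : Set ℝ := {t | lam ≤ Int.fract (t / ε)}

/-- `a_Ω = inf_{x ∈ Ω} x₂`. -/
def aOm (Ω : Set V2) : ℝ := sInf ((fun x : V2 => x 1) '' Ω)

/-- `b_Ω = sup_{x ∈ Ω} x₂`. -/
def bOm (Ω : Set V2) : ℝ := sSup ((fun x : V2 => x 1) '' Ω)

/-- `Ω` is `x₁`-connected: every horizontal slice is a (possibly empty) interval. -/
def X1Connected (Ω : Set V2) : Prop := ∀ t : ℝ, OrdConnected {s : ℝ | ![s, t] ∈ Ω}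

/-- A (nonempty) bounded Lipschitz domain: near every boundary point, after a rotation,
`Ω` is the region above the graph of a Lipschitz function. -/
def IsLipschitzDomain (Ω : Set V2) : Prop :=
  IsOpen Ω ∧ Ω.Nonempty ∧ Bornology.IsBounded Ω ∧
    ∀ x ∈ frontier Ω, ∃ Q ∈ SO2, ∃ L : NNReal, ∃ f : ℝ → ℝ, ∃ r : ℝ, 0 < r ∧
      LipschitzWith L f ∧ ∀ y ∈ Metric.ball x r, (y ∈ Ω ↔ f (Q.mulVec y 0) < Q.mulVec y 1)

/-- Partial derivative `∂_j φ` of a scalar test function. -/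
def pd (j : Fin 2) (φ : V2 → ℝ) (x : V2) : ℝ := fderiv ℝ φ x (Pi.single j 1)

/-- Componentwise integrability of a matrix-valued map. -/
def IntegrableOnM (g : V2 → Mat2) (Ω : Set V2) : Prop :=
  ∀ i j, IntegrableOn (fun x => g x i j) Ω volume

/-- `u ∈ W^{1,1}(Ω;ℝ²)` with weak gradient `gu`, expressed through integration by parts
against smooth compactly supported test functions. -/
structure IsSobolev11On (Ω : Set V2) (u : V2 → V2) (gu : V2 → Mat2) : Prop where
  int_u : IntegrableOn u Ω volume
  int_gu : IntegrableOnM gu Ω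
  ibp : ∀ φ : V2 → ℝ, ContDiff ℝ (⊤ : ℕ∞) φ → HasCompactSupport φ → tsupport φ ⊆ Ω →
    ∀ i j, ∫ x in Ω, u x i * pd j φ x = - ∫ x in Ω, φ x * gu x i j

/-- `u ∈ BV(Ω;ℝ²)`, with distributional derivative `Du = gu · L² + gs · σ`.
Here `gu` is the approximate differential (density of the absolutely continuous part),
`σ = |D^s u|` is the total variation measure of the singular part (a finite measure,
concentrated on `Ω` and singular with respect to Lebesgue measure), and `gs` is the
polar density of the singular part, of unit Frobenius norm `σ`-a.e. -/
structure HasBVDerivOn (Ω : Set V2) (u : V2 → V2) (gu : V2 → Mat2)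
    (σ : Measure V2) (gs : V2 → Mat2) : Prop where
  int_u : IntegrableOn u Ω volume
  int_gu : IntegrableOnM gu Ω
  fin : σ Set.univ ≠ ⊤
  conc : σ Ωᶜ = 0
  perp : σ ⟂ₘ (volume : Measure V2)
  meas_gs : ∀ i j, AEMeasurable (fun x => gs x i j) σ
  unit : ∀ᵐ x ∂σ, mnorm (gs x) = 1
  ibp : ∀ φ : V2 → ℝ, ContDiff ℝ (⊤ : ℕ∞) φ → HasCompactSupport φ → tsupport φ ⊆ Ω →
    ∀ i j, ∫ x in Ω, u x i * pd j φ x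
        = (- ∫ x in Ω, φ x * gu x i j) - ∫ x, φ x * gs x i j ∂σ

/-- `L¹(Ω;ℝ²)` convergence of a sequence. -/
def L1ConvOn (Ω : Set V2) (un : ℕ → V2 → V2) (u : V2 → V2) : Prop :=
  Tendsto (fun n => ∫ x in Ω, vnorm (un n x - u x)) atTop (𝓝 0)

/-- Weak* convergence of the measures `gn n · L²∟Ω` to `gu · L²∟Ω + gs · σ`
in `M(Ω; ℝ^{2×2})`, tested against continuous functions compactly supported in `Ω`. -/
def MeasConv (Ω : Set V2) (gn : ℕ → V2 → Mat2) (gu : V2 → Mat2)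
    (σ : Measure V2) (gs : V2 → Mat2) : Prop :=
  ∀ φ : V2 → ℝ, Continuous φ → HasCompactSupport φ → tsupport φ ⊆ Ω → ∀ i j,
    Tendsto (fun n => ∫ x in Ω, φ x * gn n x i j) atTop
      (𝓝 ((∫ x in Ω, φ x * gu x i j) + ∫ x, φ x * gs x i j ∂σ))

/-- Weak* convergence in `BV(Ω;ℝ²)` of a sequence of `W^{1,1}` maps to a `BV` limit:
`L¹` convergence together with weak* convergence of the derivative measures. -/
def WeakStarToBV (Ω : Set V2) (un : ℕ → V2 → V2) (u : V2 → V2) : Prop :=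
  ∃ gu σ gs, HasBVDerivOn Ω u gu σ gs ∧ L1ConvOn Ω un u ∧
    ∀ gn : ℕ → V2 → Mat2, (∀ n, IsSobolev11On Ω (un n) (gn n)) → MeasConv Ω gn gu σ gs

/-- `u ∈ A_ε`, witnessed by the data `R ∈ L^∞(Ω;SO(2))` and `γ ∈ L¹(Ω)`:
`u ∈ W^{1,1}(Ω;ℝ²)` with `∇u = R (I + γ e₁⊗e₂)` a.e. and `γ = 0` a.e. on `εY_rig ∩ Ω`. -/
structure MemAeps (Ω : Set V2) (lam ε : ℝ) (u : V2 → V2)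
    (R : V2 → Mat2) (γ : V2 → ℝ) : Prop where
  so2 : ∀ᵐ x ∂(volume.restrict Ω), R x ∈ SO2
  int_γ : IntegrableOn γ Ω volume
  sob : IsSobolev11On Ω u fun x => R x * (1 + γ x • outer e1 e2)
  rig : ∀ᵐ x ∂(volume.restrict (Ω ∩ rigid2 lam ε)), γ x = 0

/-- The elastoplastic energy `E_ε(u) = ∫_Ω |γ| dx` for `u ∈ A_ε`, `∞` otherwise,
as an `ℝ≥0∞`-valued functional (the decomposition data is essentially unique). -/
def Eeps (Ω : Set V2) (lam ε : ℝ) (u : V2 → V2) : ℝ≥0∞ :=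
  sInf {c | ∃ R γ, MemAeps Ω lam ε u R γ ∧ c = ∫⁻ x in Ω, ENNReal.ofReal |γ x|}

/-- `u ∈ A` relative to the vertical interval `(a, b)`:
`u ∈ BV(Ω;ℝ²)` with `u(x) = R(x₂)x + ψ(x₂)` a.e., `R ∈ BV(a,b;SO(2))`,
`ψ ∈ BV(a,b;ℝ²)` and `det ∇u = 1` a.e. in `Ω`. -/
def memAOn (Ω : Set V2) (a b : ℝ) (u : V2 → V2) : Prop :=
  ∃ gu σ gs, HasBVDerivOn Ω u gu σ gs ∧
    (∃ R : ℝ → Mat2, ∃ ψ : ℝ → V2, (∀ t ∈ Ioo a b, R t ∈ SO2) ∧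
      BVm R (Ioo a b) ∧ BVv ψ (Ioo a b) ∧
      ∀ᵐ x ∂(volume.restrict Ω), u x = (R (x 1)).mulVec x + ψ (x 1)) ∧
    ∀ᵐ x ∂(volume.restrict Ω), (gu x).det = 1

/-- `u ∈ A`. -/
def memA (Ω : Set V2) (u : V2 → V2) : Prop := memAOn Ω (aOm Ω) (bOm Ω) u

/-- `u ∈ A∥` relative to the vertical interval `(a,b)`:
`u(x) = Rx + ϑ(x₂) R e₁ + c` a.e. with a constant rotation `R ∈ SO(2)`,
`ϑ ∈ BV(a,b)` and `c ∈ ℝ²`. -/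
def memAparOn (Ω : Set V2) (a b : ℝ) (u : V2 → V2) : Prop :=
  ∃ R ∈ SO2, ∃ ϑ : ℝ → ℝ, ∃ c : V2, BoundedVariationOn ϑ (Ioo a b) ∧
    ∀ᵐ x ∂(volume.restrict Ω), u x = R.mulVec x + ϑ (x 1) • R.mulVec e1 + c

/-- `u ∈ A∥`. -/
def memApar (Ω : Set V2) (u : V2 → V2) : Prop := memAparOn Ω (aOm Ω) (bOm Ω) u

/-- The limit energy `E(u) = ∫_Ω |ψ'·Re₁| dx + |D^s u|(Ω)` for `u ∈ A`, `∞` otherwise. -/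
def Efun (Ω : Set V2) (u : V2 → V2) : ℝ≥0∞ :=
  sInf {c | ∃ gu σ gs, HasBVDerivOn Ω u gu σ gs ∧
    ∃ R : ℝ → Mat2, ∃ ψ : ℝ → V2,
      (∀ t ∈ Ioo (aOm Ω) (bOm Ω), R t ∈ SO2) ∧ BVm R (Ioo (aOm Ω) (bOm Ω)) ∧
      BVv ψ (Ioo (aOm Ω) (bOm Ω)) ∧
      (∀ᵐ x ∂(volume.restrict Ω), u x = (R (x 1)).mulVec x + ψ (x 1)) ∧
      (∀ᵐ x ∂(volume.restrict Ω), (gu x).det = 1) ∧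
      c = (∫⁻ x in Ω, ENNReal.ofReal |dot (vecDeriv ψ (x 1)) ((R (x 1)).mulVec e1)|)
          + σ Set.univ}

/-- The limit energy on `A∥`: `E(u) = ∫_Ω |ϑ'(x₂)| dx + |D^s u|(Ω)` for `u ∈ A∥`,
`∞` otherwise. -/
def EparFun (Ω : Set V2) (u : V2 → V2) : ℝ≥0∞ :=
  sInf {c | ∃ gu σ gs, HasBVDerivOn Ω u gu σ gs ∧
    ∃ R ∈ SO2, ∃ ϑ : ℝ → ℝ, ∃ c0 : V2, BoundedVariationOn ϑ (Ioo (aOm Ω) (bOm Ω)) ∧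
      (∀ᵐ x ∂(volume.restrict Ω), u x = R.mulVec x + ϑ (x 1) • R.mulVec e1 + c0) ∧
      c = (∫⁻ x in Ω, ENNReal.ofReal |deriv ϑ (x 1)|) + σ Set.univ}

/-- The regularized limit energy `E^δ(u) = ∫_Ω |ϑ'| dx + |D^s u|(Ω) + δ|Ω|` on `A∥`,
`∞` otherwise. -/
def EDelta (Ω : Set V2) (δ : ℝ) (u : V2 → V2) : ℝ≥0∞ :=
  EparFun Ω u + ENNReal.ofReal δ * volume Ω

/-- `‖v‖_{W^{1,p}(Ω;ℝ²)}^p = ∫_Ω |v|^p + ∫_Ω |Dv|^p` for a map `v` with weak Jacobian `G`. -/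
def Wp1 (p : ℝ) (Ω : Set V2) (v : V2 → V2) (G : V2 → Mat2) : ℝ≥0∞ :=
  (∫⁻ x in Ω, ENNReal.ofReal (vnorm (v x) ^ p)) + ∫⁻ x in Ω, ENNReal.ofReal (mnorm (G x) ^ p)

/-- The regularized energy
`E^δ_ε(u) = ∫_Ω |γ| dx + δ ‖∂₁ u‖_{W^{1,p}(Ω;ℝ²)}^p` for `u ∈ A_ε` with
`∂₁u = R e₁ ∈ W^{1,p}(Ω;ℝ²)`, and `∞` otherwise. -/
def EepsDelta (Ω : Set V2) (lam ε δ p : ℝ) (u : V2 → V2) : ℝ≥0∞ :=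
  sInf {c | ∃ R γ, MemAeps Ω lam ε u R γ ∧
    ∃ G : V2 → Mat2, IsSobolev11On Ω (fun x => (R x).mulVec e1) G ∧
      c = (∫⁻ x in Ω, ENNReal.ofReal |γ x|) +
          ENNReal.ofReal δ * Wp1 p Ω (fun x => (R x).mulVec e1) G}

/-- `x` is an approximate jump point of `u`, with one-sided approximate limits `a ≠ b`
relative to a unit normal `ν`. -/
def JumpPt (u : V2 → V2) (x : V2) : Prop :=
  ∃ a b ν : V2, a ≠ b ∧ vnorm ν = 1 ∧
    Tendsto (fun r : ℝ =>
        (∫⁻ z in {z | z ∈ Metric.ball x r ∧ 0 < dot (z - x) ν},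
            ENNReal.ofReal (vnorm (u z - a))) / volume (Metric.ball x r))
      (𝓝[>] 0) (𝓝 0) ∧
    Tendsto (fun r : ℝ =>
        (∫⁻ z in {z | z ∈ Metric.ball x r ∧ dot (z - x) ν < 0},
            ENNReal.ofReal (vnorm (u z - b))) / volume (Metric.ball x r))
      (𝓝[>] 0) (𝓝 0)

/-- The jump set `J_u` of `u` in `Ω`. -/
def jumpSet (Ω : Set V2) (u : V2 → V2) : Set V2 := {x ∈ Ω | JumpPt u x}

/-- `u ∈ SBV_∞(Ω;ℝ²)`: `u ∈ BV` with singular part concentrated on the jump set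
(no Cantor part), `∇u ∈ L^∞(Ω;ℝ^{2×2})` and `H¹(J_u) < ∞`. -/
def memSBVinf (Ω : Set V2) (u : V2 → V2) : Prop :=
  ∃ gu σ gs, HasBVDerivOn Ω u gu σ gs ∧
    σ {x | ¬ JumpPt u x} = 0 ∧
    (∃ M : ℝ, ∀ᵐ x ∂(volume.restrict Ω), mnorm (gu x) ≤ M) ∧
    Measure.hausdorffMeasure (1 : ℝ) (jumpSet Ω u) ≠ ⊤

/-- Piecewise constant functions on `(a,b)` with finitely many jumps
(the class `PC(a,b)`). -/
def PCOn {α : Type*} (a b : ℝ) (f : ℝ → α) : Prop :=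
  ∃ S : Finset ℝ, ∀ s₁ ∈ Ioo a b, ∀ s₂ ∈ Ioo a b, s₁ ≤ s₂ →
    (∀ r ∈ S, r ∉ Icc s₁ s₂) → f s₁ = f s₂

/-- Piecewise Lipschitz functions on `(a,b)` with finitely many jump points:
the class `SBV_∞(a,b;ℝ²)` of one-dimensional special functions of bounded variation
with bounded derivative and finitely many jumps. -/
def PLipOn (a b : ℝ) (f : ℝ → V2) : Prop :=
  ∃ S : Finset ℝ, ∃ L : ℝ, 0 ≤ L ∧ ∀ s₁ ∈ Ioo a b, ∀ s₂ ∈ Ioo a b, s₁ ≤ s₂ →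
    (∀ r ∈ S, r ∉ Icc s₁ s₂) → vnorm (f s₂ - f s₁) ≤ L * (s₂ - s₁)

/-- The rectangle `Ω = (0,1) × (−1,1)`. -/
def Rect : Set V2 := {x | x 0 ∈ Ioo (0:ℝ) 1 ∧ x 1 ∈ Ioo (-1:ℝ) 1}

/-- `f ∈ W^{1,1}(a,b)`: `f` has an integrable weak derivative on `(a,b)`
(absolutely continuous representative). -/
def IsW11On (f : ℝ → ℝ) (a b : ℝ) : Prop :=
  ∃ g : ℝ → ℝ, IntegrableOn g (Ioo a b) volume ∧
    ∀ s ∈ Ioo a b, ∀ t ∈ Ioo a b, f t - f s = ∫ r in s..t, g r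

/-!
A map `u ∈ A` has the form `u x = x₁ a(x₂) + x₂ a(x₂)^⊥ + ψ(x₂)` with `a` a unit vector field.
If `u` has no Cantor part and `H¹(J_u) < ∞`, then `u` jumps at finitely many heights only, since
each of them contributes a segment of length one to `J_u`. On a jump-free strip the profile is
Lipschitz, and `det ∇u = 1` becomes affine in `x₁`: its linear coefficient forces `a' = 0`, and the
remaining identity forces `ψ'` to be parallel to `a`.

Conversely, such a profile is approximated layer by layer. A map whose gradient is a rotation on a
stiff layer moves horizontal segments there rigidly, and in a soft layer a shear slides a segment
along its own direction, at a cost equal to the sliding distance. Hence following `ψ` between two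
jumps costs its variation. At a jump, a soft layer is divided into four sublayers, in which sliding
and turning (by two shears on either side of a diagonal) join two arbitrary unit segments at
bounded cost.
-/

/-! ### Planar vectors -/

/-- The wedge (scalar cross) product `det (a | b)` of planar vectors. -/
def wedge (a b : V2) : ℝ := a 0 * b 1 - a 1 * b 0

/-- The counterclockwise rotation of a planar vector by a right angle. -/
def perp (a : V2) : V2 := ![-a 1, a 0]

lemma dot_eq (a b : V2) : dot a b = a 0 * b 0 + a 1 * b 1 := Fin.sum_univ_two _

@[simp] lemma perp_zero (a : V2) : perp a 0 = -a 1 := rfl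

@[simp] lemma perp_one (a : V2) : perp a 1 = a 0 := rfl

lemma dot_add_right (a b c : V2) : dot a (b + c) = dot a b + dot a c := by
  simp only [dot_eq, Pi.add_apply]; ring

lemma dot_smul_right (r : ℝ) (a b : V2) : dot a (r • b) = r * dot a b := by
  simp only [dot_eq, Pi.smul_apply, smul_eq_mul]; ring

lemma dot_smul_left (r : ℝ) (a b : V2) : dot (r • a) b = r * dot a b := by
  simp only [dot_eq, Pi.smul_apply, smul_eq_mul]; ring

lemma wedge_add_right (a b c : V2) : wedge a (b + c) = wedge a b + wedge a c := by
  simp only [wedge, Pi.add_apply]; ring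

lemma wedge_sub_right (a b c : V2) : wedge a (b - c) = wedge a b - wedge a c := by
  simp only [wedge, Pi.sub_apply]; ring

lemma wedge_smul_right (r : ℝ) (a b : V2) : wedge a (r • b) = r * wedge a b := by
  simp only [wedge, Pi.smul_apply, smul_eq_mul]; ring

lemma wedge_smul_left (r : ℝ) (a b : V2) : wedge (r • a) b = r * wedge a b := by
  simp only [wedge, Pi.smul_apply, smul_eq_mul]; ring

@[simp] lemma wedge_self (a : V2) : wedge a a = 0 := by
  simp only [wedge]; ring

lemma wedge_perp (a b : V2) : wedge a (perp b) = dot a b := by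
  simp only [wedge, dot_eq, perp_zero, perp_one]; ring

lemma wedge_eq_dot_perp (a b : V2) : wedge a b = dot (perp a) b := by
  simp only [wedge, dot_eq, perp_zero, perp_one]; ring

lemma dot_perp_perp (a b : V2) : dot (perp a) (perp b) = dot a b := by
  simp only [dot_eq, perp_zero, perp_one]; ring

lemma dot_perp_self (a : V2) : dot a (perp a) = 0 := by
  simp only [dot_eq, perp_zero, perp_one]; ring

lemma wedge_sq_add_dot_sq (a b : V2) : wedge a b ^ 2 + dot a b ^ 2 = dot a a * dot b b := by
  simp only [wedge, dot_eq]; ring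

lemma continuous_perp : Continuous perp := by
  unfold perp; fun_prop

lemma norm_perp_le (a : V2) : ‖perp a‖ ≤ ‖a‖ := by
  rw [pi_norm_le_iff_of_nonneg (norm_nonneg _), Fin.forall_fin_two, perp_zero, perp_one, norm_neg]
  exact ⟨norm_le_pi_norm a 1, norm_le_pi_norm a 0⟩

lemma norm_le_one_of_dot_self {a : V2} (ha : dot a a = 1) : ‖a‖ ≤ 1 := by
  rw [dot_eq] at ha
  rw [pi_norm_le_iff_of_nonneg zero_le_one, Fin.forall_fin_two, Real.norm_eq_abs, Real.norm_eq_abs,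
    abs_le_one_iff_mul_self_le_one, abs_le_one_iff_mul_self_le_one]
  constructor <;> nlinarith [mul_self_nonneg (a 0), mul_self_nonneg (a 1)]

lemma abs_dot_le (a b : V2) : |dot a b| ≤ 2 * ‖a‖ * ‖b‖ := by
  rw [dot_eq]
  calc |a 0 * b 0 + a 1 * b 1| ≤ ‖a 0‖ * ‖b 0‖ + ‖a 1‖ * ‖b 1‖ := by
        rw [← norm_mul, ← norm_mul]; exact norm_add_le (a 0 * b 0) (a 1 * b 1)
    _ ≤ ‖a‖ * ‖b‖ + ‖a‖ * ‖b‖ := by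
        gcongr
        exacts [norm_le_pi_norm a 0, norm_le_pi_norm b 0, norm_le_pi_norm a 1, norm_le_pi_norm b 1]
    _ = 2 * ‖a‖ * ‖b‖ := by ring

lemma abs_dot_le_of_unit {a : V2} (ha : dot a a = 1) (b : V2) : |dot a b| ≤ 2 * ‖b‖ := by
  have := norm_le_one_of_dot_self ha
  nlinarith [abs_dot_le a b, norm_nonneg b]

lemma abs_wedge_le_of_unit {a : V2} (ha : dot a a = 1) (b : V2) : |wedge a b| ≤ 2 * ‖b‖ := by
  rw [wedge_eq_dot_perp]
  exact abs_dot_le_of_unit ((dot_perp_perp a a).trans ha) b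

lemma abs_le_vnorm (v : V2) (i : Fin 2) : |v i| ≤ vnorm v := by
  refine Real.abs_le_sqrt ?_
  fin_cases i
  · exact le_add_of_nonneg_right (sq_nonneg (v 1))
  · exact le_add_of_nonneg_left (sq_nonneg (v 0))

lemma vnorm_nonneg (v : V2) : 0 ≤ vnorm v := Real.sqrt_nonneg _

lemma norm_le_vnorm (v : V2) : ‖v‖ ≤ vnorm v :=
  (pi_norm_le_iff_of_nonneg (vnorm_nonneg v)).2 (abs_le_vnorm v)

lemma vnorm_le_two_mul_norm (v : V2) : vnorm v ≤ 2 * ‖v‖ := by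
  refine Real.sqrt_le_iff.2 ⟨by positivity, ?_⟩
  have h (i : Fin 2) : v i ^ 2 ≤ ‖v‖ ^ 2 := by
    simpa only [Real.norm_eq_abs, sq_abs] using
      pow_le_pow_left₀ (norm_nonneg _) (norm_le_pi_norm v i) 2
  nlinarith [h 0, h 1, sq_nonneg ‖v‖]

lemma continuous_vnorm : Continuous vnorm := by
  unfold vnorm; fun_prop

/-! ### Pointwise gradients of shears -/

/-- The classical Jacobian matrix `(∂ⱼ vᵢ)`; partial derivatives that do not exist are `0`. -/
def jac (v : V2 → V2) (x : V2) : Mat2 :=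
  Matrix.of fun i j => lineDeriv ℝ (fun y => v y i) x (Pi.single j 1)

/-- The shear coefficient `γ = ∂₁v · ∂₂v` of a planar map. -/
def shear (v : V2 → V2) (x : V2) : ℝ := dot ((jac v x).col 0) ((jac v x).col 1)

/-- The pointwise form of the constraint defining `A_ε`: `∇v = R (I + γ e₁ ⊗ e₂)` with `R ∈ SO(2)`
holds if and only if `|∂₁v| = 1` and `det ∇v = 1`, and then `γ = ∂₁v · ∂₂v`. -/
structure AdmissibleAt (lam ε : ℝ) (v : V2 → V2) (x : V2) : Prop where
  unit : dot ((jac v x).col 0) ((jac v x).col 0) = 1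
  area : wedge ((jac v x).col 0) ((jac v x).col 1) = 1
  rigid : x ∈ rigid2 lam ε → shear v x = 0

lemma jac_congr {v v' : V2 → V2} {x : V2} (h : v =ᶠ[𝓝 x] v') : jac v x = jac v' x := by
  ext i j
  exact EventuallyEq.lineDeriv_eq (h.fun_comp (· i))

lemma jac_add_const (v : V2 → V2) (c x : V2) : jac (fun y => v y + c) x = jac v x := by
  ext i j
  simp only [jac, Matrix.of_apply, lineDeriv, Pi.add_apply, deriv_add_const]

lemma shear_congr {v v' : V2 → V2} {x : V2} (h : jac v x = jac v' x) : shear v x = shear v' x := by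
  rw [shear, shear, h]

lemma AdmissibleAt.congr {lam ε : ℝ} {v v' : V2 → V2} {x : V2} (hv : AdmissibleAt lam ε v x)
    (h : jac v x = jac v' x) : AdmissibleAt lam ε v' x :=
  ⟨h ▸ hv.unit, h ▸ hv.area, fun hx => shear_congr h ▸ hv.rigid hx⟩

lemma jac_layered_col {α ω : ℝ → V2} {x : V2} (hα : DifferentiableAt ℝ α (x 1))
    (hω : DifferentiableAt ℝ ω (x 1)) :
    (jac (fun y => y 0 • α (y 1) + ω (y 1)) x).col 0 = α (x 1) ∧
      (jac (fun y => y 0 • α (y 1) + ω (y 1)) x).col 1 = x 0 • deriv α (x 1) + deriv ω (x 1) := by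
  have hline (j : Fin 2) : HasDerivAt
      (fun t : ℝ => (x + t • (Pi.single j 1 : V2)) 0 • α ((x + t • (Pi.single j 1 : V2)) 1) +
        ω ((x + t • (Pi.single j 1 : V2)) 1))
      ((x 0 • (Pi.single j 1 : V2) 1 • deriv α (x 1) + (Pi.single j 1 : V2) 0 • α (x 1)) +
        (Pi.single j 1 : V2) 1 • deriv ω (x 1)) 0 := by
    have h (k : Fin 2) : HasDerivAt (fun t : ℝ => (x + t • (Pi.single j 1 : V2)) k)
        ((Pi.single j 1 : V2) k) 0 := by
      simpa using ((hasDerivAt_id (0 : ℝ)).mul_const ((Pi.single j 1 : V2) k)).const_add (x k)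
    have hα' := hα.hasDerivAt.scomp_of_eq (0 : ℝ) (h 1) (by simp)
    have hω' := hω.hasDerivAt.scomp_of_eq (0 : ℝ) (h 1) (by simp)
    simpa using ((h 0).smul hα').fun_add hω'
  have hjac (i j : Fin 2) := (hasDerivAt_pi.1 (hline j) i).deriv
  constructor <;> ext i
  · exact (hjac i 0).trans (by simp)
  · exact (hjac i 1).trans (by simp)

lemma jac_affine_col (p r c x : V2) :
    (jac (fun y => y 0 • p + y 1 • r + c) x).col 0 = p ∧
      (jac (fun y => y 0 • p + y 1 • r + c) x).col 1 = r := by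
  have hdiff : DifferentiableAt ℝ (fun s : ℝ => s • r + c) (x 1) := by fun_prop
  have hderiv : deriv (fun s : ℝ => s • r + c) (x 1) = r := by
    simpa using (((hasDerivAt_id (x 1)).smul_const r).add_const c).deriv
  have hjac := jac_layered_col (differentiableAt_const p) hdiff
  rw [hderiv, deriv_const, smul_zero, zero_add] at hjac
  simpa only [add_assoc] using hjac

/-- The horizontal strip `(0, 1) × (p, q)`. -/
def strip (p q : ℝ) : Set V2 := {x | x 0 ∈ Ioo (0 : ℝ) 1 ∧ x 1 ∈ Ioo p q}

lemma isOpen_strip (p q : ℝ) : IsOpen (strip p q) :=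
  (isOpen_Ioo.preimage (continuous_apply 0)).inter (isOpen_Ioo.preimage (continuous_apply 1))

lemma isBounded_strip (p q : ℝ) : Bornology.IsBounded (strip p q) := by
  refine (Metric.isBounded_Icc (![0, p] : V2) ![1, q]).subset fun x hx =>
    ⟨fun i => ?_, fun i => ?_⟩
  all_goals fin_cases i
  exacts [hx.1.1.le, hx.2.1.le, hx.1.2.le, hx.2.2.le]

lemma strip_subset_Rect {p q : ℝ} (hpq : Ioo p q ⊆ Ioo (-1) 1) : strip p q ⊆ Rect :=
  fun _ hx => ⟨hx.1, hpq hx.2⟩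

lemma isOpen_Rect : IsOpen Rect := isOpen_strip (-1) 1

lemma isBounded_Rect : Bornology.IsBounded Rect := isBounded_strip (-1) 1

lemma measurableSet_Rect : MeasurableSet Rect := isOpen_Rect.measurableSet

lemma ae_ne_of_line {p q : ℝ} (r : ℝ) (h : p ≠ 0 ∨ q ≠ 0) :
    ∀ᵐ x : V2, p * x 0 + q * x 1 ≠ r := by
  let f : V2 →ₗ[ℝ] ℝ := p • LinearMap.proj 0 + q • LinearMap.proj 1
  let S : AffineSubspace ℝ V2 := (AffineSubspace.mk' r ⊥).comap f.toAffineMap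
  have mem_S (x : V2) : x ∈ S ↔ p * x 0 + q * x 1 = r := by simp [S, f, sub_eq_zero]
  have hS : S ≠ ⊤ := by
    intro htop
    have mem (x : V2) : p * x 0 + q * x 1 = r := (mem_S x).1 (htop ▸ AffineSubspace.mem_top ℝ V2 x)
    have h₀ := mem 0
    have h₁ := mem ![1, 0]
    have h₂ := mem ![0, 1]
    simp at h₀ h₁ h₂
    rcases h with h | h <;> apply h <;> linarith
  rw [ae_iff]
  exact measure_mono_null (fun x hx => (mem_S x).2 (not_not.1 hx))
    (Measure.addHaar_affineSubspace volume S hS)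

lemma ae_snd_ne (t : ℝ) : ∀ᵐ x : V2, x 1 ≠ t := by
  simpa using ae_ne_of_line t (p := 0) (q := 1) (Or.inr one_ne_zero)

lemma volume_Rect_strip_le (T h : ℝ) :
    volume (Rect ∩ {x : V2 | x 1 ∈ Ico T (T + h)}) ≤ ENNReal.ofReal h := by
  have hsub : Rect ∩ {x : V2 | x 1 ∈ Ico T (T + h)} ⊆
      Set.pi univ ![Ioo (0 : ℝ) 1, Ico T (T + h)] := by
    intro x hx
    simp only [Set.mem_pi, mem_univ, forall_const, Fin.forall_fin_two]
    exact ⟨hx.1.1, hx.2⟩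
  refine (measure_mono hsub).trans ?_
  rw [volume_pi_pi]
  simp [Fin.prod_univ_two]

/-! ### Crossing one strip -/

/-- The conditions under which the segment `r ↦ r • a + w`, `r ∈ [0, 1]`, carried by the line
`x₂ = T`, can be joined to the segment `r ↦ r • a' + w'` at height `T + h` by a map with `|∂₁v| = 1`
and `det ∇v = 1` which is affine on each of the two triangles cut out by the diagonal of
`[0, 1] × [T, T + h]`. -/
structure IsShearStrip (h : ℝ) (a w a' w' : V2) : Prop where
  unit : dot a a = 1
  unit' : dot a' a' = 1
  wedge_lower : wedge a (w' - w + a') = h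
  wedge_upper : wedge a' (w' - w) = h

/-- The displacement at abscissa `r` and relative height `s ∈ [0, 1]` that joins the segment
`r ↦ r • a₀ + w₀` to `r ↦ r • a₁ + w₁`, affine on either side of the diagonal `s = r`. -/
def stripShift (a₀ w₀ a₁ w₁ : V2) (s r : ℝ) : V2 :=
  s • (w₁ - w₀ - a₀ + a₁) + max 0 (s - r) • (a₀ - a₁)

/-- The relative height `(t - T) / h`, clamped to `[0, 1]`. -/
def ramp (T h t : ℝ) : ℝ := max 0 (min 1 ((t - T) / h))

/-- The continuation of `v` across the strip `[T, T + h]`. -/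
def extendAcross (v : V2 → V2) (T h : ℝ) (a w a' w' : V2) (x : V2) : V2 :=
  v x + stripShift a w a' w' (ramp T h (x 1)) (x 0)

section Strip

variable {v : V2 → V2} {T h : ℝ} {a w a' w' x : V2}

lemma ramp_of_le (hh : 0 < h) {t : ℝ} (ht : t ≤ T) : ramp T h t = 0 :=
  max_eq_left ((min_le_right _ _).trans (div_nonpos_of_nonpos_of_nonneg (by linarith) hh.le))

lemma ramp_of_ge (hh : 0 < h) {t : ℝ} (ht : T + h ≤ t) : ramp T h t = 1 := by
  have : 1 ≤ (t - T) / h := by rw [le_div_iff₀ hh]; linarith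
  rw [ramp, min_eq_left this, max_eq_right zero_le_one]

lemma ramp_of_mem (hh : 0 < h) {t : ℝ} (ht : t ∈ Icc T (T + h)) : ramp T h t = (t - T) / h := by
  have h₀ : 0 ≤ (t - T) / h := div_nonneg (by linarith [ht.1]) hh.le
  have h₁ : (t - T) / h ≤ 1 := by rw [div_le_one hh]; linarith [ht.2]
  rw [ramp, min_eq_right h₁, max_eq_right h₀]

lemma exists_lipschitzWith_ramp (T h : ℝ) : ∃ C, LipschitzWith C (ramp T h) := by
  have hlin : LipschitzWith (‖h⁻¹‖₊ * (1 + 0)) fun t : ℝ => h⁻¹ * (t - T) :=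
    (lipschitzWith_smul h⁻¹).comp (LipschitzWith.id.sub (LipschitzWith.const T))
  simp only [inv_mul_eq_div] at hlin
  exact ⟨_, (hlin.const_min 1).const_max 0⟩

lemma exists_lipschitzWith_extendAcross (hv : ∃ C, LipschitzWith C v) (T h : ℝ)
    (a w a' w' : V2) : ∃ C, LipschitzWith C (extendAcross v T h a w a' w') := by
  obtain ⟨C, hv⟩ := hv
  obtain ⟨D, hramp⟩ := exists_lipschitzWith_ramp T h
  have hs : LipschitzWith (D * 1) fun x : V2 => ramp T h (x 1) :=
    hramp.comp (LipschitzWith.eval 1)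
  have hmax := (hs.sub (LipschitzWith.eval (0 : Fin 2))).const_max 0
  have hsmul (b : V2) := (ContinuousLinearMap.toSpanSingleton ℝ b).lipschitz
  exact ⟨_, hv.add (((hsmul (w' - w - a + a')).comp hs).add ((hsmul (a - a')).comp hmax))⟩

lemma extendAcross_of_le (hh : 0 < h) (hx₀ : 0 ≤ x 0) (hx₁ : x 1 ≤ T) :
    extendAcross v T h a w a' w' x = v x := by
  rw [extendAcross, stripShift, ramp_of_le hh hx₁, max_eq_left (by linarith), zero_smul, zero_smul,
    add_zero, add_zero]

variable (hv : ∀ x : V2, T ≤ x 1 → x 0 ∈ Icc (0 : ℝ) 1 → v x = x 0 • a + w)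
include hv

lemma extendAcross_of_mem (hh : 0 < h) (hx₀ : x 0 ∈ Icc (0 : ℝ) 1) (hx₁ : x 1 ∈ Icc T (T + h)) :
    extendAcross v T h a w a' w' x =
      x 0 • a + w + stripShift a w a' w' ((x 1 - T) / h) (x 0) := by
  rw [extendAcross, ramp_of_mem hh hx₁, hv x hx₁.1 hx₀]

lemma extendAcross_of_ge (hh : 0 < h) (hx₀ : x 0 ∈ Icc (0 : ℝ) 1) (hx₁ : T + h ≤ x 1) :
    extendAcross v T h a w a' w' x = x 0 • a' + w' := by
  rw [extendAcross, stripShift, ramp_of_ge hh hx₁, hv x (by linarith) hx₀,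
    max_eq_right (by linarith [hx₀.2])]
  module

lemma eventually_extendAcross_eq (hh : 0 < h) (hx₀ : x 0 ∈ Ioo (0 : ℝ) 1)
    (hx₁ : x 1 ∈ Ioo T (T + h)) :
    extendAcross v T h a w a' w' =ᶠ[𝓝 x]
      fun y => y 0 • a + w + stripShift a w a' w' ((y 1 - T) / h) (y 0) := by
  filter_upwards [(continuous_apply 0).continuousAt.eventually (isOpen_Ioo.mem_nhds hx₀),
    (continuous_apply 1).continuousAt.eventually (isOpen_Ioo.mem_nhds hx₁)] with y hy₀ hy₁
  exact extendAcross_of_mem hv hh (Ioo_subset_Icc_self hy₀) (Ioo_subset_Icc_self hy₁)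

lemma jac_extendAcross_lower (hh : 0 < h) (hx₀ : x 0 ∈ Ioo (0 : ℝ) 1) (hx₁ : x 1 ∈ Ioo T (T + h))
    (hx : (x 1 - T) / h < x 0) :
    (jac (extendAcross v T h a w a' w') x).col 0 = a ∧
      (jac (extendAcross v T h a w a' w') x).col 1 = h⁻¹ • (w' - w - a + a') := by
  have hcont : Continuous fun y : V2 => (y 1 - T) / h - y 0 := by fun_prop
  have heq : extendAcross v T h a w a' w' =ᶠ[𝓝 x] fun y => y 0 • a +
      y 1 • (h⁻¹ • (w' - w - a + a')) + (w - (T / h) • (w' - w - a + a')) := by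
    filter_upwards [eventually_extendAcross_eq hv hh hx₀ hx₁,
      hcont.continuousAt.eventually (gt_mem_nhds (sub_neg.2 hx))] with y hy hlt
    rw [hy, stripShift, max_eq_left hlt.le]
    module
  rw [jac_congr heq]
  exact jac_affine_col _ _ _ x

lemma jac_extendAcross_upper (hh : 0 < h) (hx₀ : x 0 ∈ Ioo (0 : ℝ) 1) (hx₁ : x 1 ∈ Ioo T (T + h))
    (hx : x 0 < (x 1 - T) / h) :
    (jac (extendAcross v T h a w a' w') x).col 0 = a' ∧
      (jac (extendAcross v T h a w a' w') x).col 1 = h⁻¹ • (w' - w) := by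
  have hcont : Continuous fun y : V2 => (y 1 - T) / h - y 0 := by fun_prop
  have heq : extendAcross v T h a w a' w' =ᶠ[𝓝 x] fun y => y 0 • a' +
      y 1 • (h⁻¹ • (w' - w)) + (w - (T / h) • (w' - w)) := by
    filter_upwards [eventually_extendAcross_eq hv hh hx₀ hx₁,
      hcont.continuousAt.eventually (lt_mem_nhds (sub_pos.2 hx))] with y hy hlt
    rw [hy, stripShift, max_eq_right hlt.le]
    module
  rw [jac_congr heq]
  exact jac_affine_col _ _ _ x

end Strip

/-- A map built up to height `T` on `Rect`: it satisfies the constraint of `A_ε` there with shear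
integral at most `K`, it maps `x` into the target set `Q x`, and above `T` it is the segment
`r ↦ r • a + w`, constant in `x₂`, so that the construction can be continued. -/
structure IsBuiltUpTo (lam ε : ℝ) (Q : V2 → Set V2) (T : ℝ) (a w : V2) (K : ℝ≥0∞)
    (v : V2 → V2) : Prop where
  lipschitz : ∃ C, LipschitzWith C v
  eq_above : ∀ x : V2, T ≤ x 1 → x 0 ∈ Icc (0 : ℝ) 1 → v x = x 0 • a + w
  admissible : ∀ᵐ x, x ∈ Rect → x 1 < T → AdmissibleAt lam ε v x
  shear_le : ∫⁻ x in Rect ∩ {x | x 1 < T}, ENNReal.ofReal |shear v x| ≤ K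
  mem_target : ∀ x ∈ Rect, x 1 < T → v x ∈ Q x

lemma IsBuiltUpTo.mono {lam ε : ℝ} {Q Q' : V2 → Set V2} {T : ℝ} {a w : V2} {K K' : ℝ≥0∞}
    {v : V2 → V2} (hv : IsBuiltUpTo lam ε Q T a w K v) (hK : K ≤ K')
    (hQ : ∀ x ∈ Rect, x 1 < T → Q x ⊆ Q' x) : IsBuiltUpTo lam ε Q' T a w K' v :=
  { hv with
    shear_le := hv.shear_le.trans hK
    mem_target := fun x hx hT => hQ x hx hT (hv.mem_target x hx hT) }

section Extend

variable {v : V2 → V2} {T h : ℝ} {a w a' w' : V2}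

lemma ae_jac_extendAcross (hh : 0 < h)
    (hv : ∀ x : V2, T ≤ x 1 → x 0 ∈ Icc (0 : ℝ) 1 → v x = x 0 • a + w) (a' w' : V2) :
    ∀ᵐ x : V2, x ∈ Rect → x 1 ∈ Ico T (T + h) → x 1 ∈ Ioo T (T + h) ∧
      ((jac (extendAcross v T h a w a' w') x).col 0 = a ∧
          (jac (extendAcross v T h a w a' w') x).col 1 = h⁻¹ • (w' - w - a + a') ∨
        (jac (extendAcross v T h a w a' w') x).col 0 = a' ∧
          (jac (extendAcross v T h a w a' w') x).col 1 = h⁻¹ • (w' - w)) := by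
  filter_upwards [ae_snd_ne T, ae_ne_of_line (p := h) (q := -1) (-T) (Or.inl hh.ne')]
    with x hT hdiag hx hxT
  have hx₁ : x 1 ∈ Ioo T (T + h) := ⟨lt_of_le_of_ne hxT.1 (Ne.symm hT), hxT.2⟩
  have hne : (x 1 - T) / h ≠ x 0 := by
    intro heq
    rw [div_eq_iff hh.ne'] at heq
    exact hdiag (by linarith)
  exact ⟨hx₁, hne.lt_or_gt.imp (jac_extendAcross_lower hv hh hx.1 hx₁)
    (jac_extendAcross_upper hv hh hx.1 hx₁)⟩

lemma IsShearStrip.ae_admissibleAt {lam ε κ : ℝ} (S : IsShearStrip h a w a' w') (hh : 0 < h)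
    (hv : ∀ x : V2, T ≤ x 1 → x 0 ∈ Icc (0 : ℝ) 1 → v x = x 0 • a + w)
    (hκ : |dot a (w' - w - a + a')| ≤ κ) (hκ' : |dot a' (w' - w)| ≤ κ)
    (hrigid : κ = 0 ∨ ∀ x : V2, x 1 ∈ Ioo T (T + h) → x ∉ rigid2 lam ε) :
    ∀ᵐ x : V2, x ∈ Rect → x 1 ∈ Ico T (T + h) →
      AdmissibleAt lam ε (extendAcross v T h a w a' w') x ∧
        |shear (extendAcross v T h a w a' w') x| ≤ h⁻¹ * κ := by
  filter_upwards [ae_jac_extendAcross hh hv a' w'] with x hjac hx hxT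
  obtain ⟨hx₁, hcols⟩ := hjac hx hxT
  have hshear : |shear (extendAcross v T h a w a' w') x| ≤ h⁻¹ * κ := by
    rcases hcols with ⟨h₀, h₁⟩ | ⟨h₀, h₁⟩ <;>
      rw [shear, h₀, h₁, dot_smul_right, abs_mul, abs_of_pos (inv_pos.2 hh)] <;> gcongr
  refine ⟨⟨?_, ?_, fun hx_rigid => ?_⟩, hshear⟩
  · rcases hcols with ⟨h₀, -⟩ | ⟨h₀, -⟩ <;> rw [h₀]
    exacts [S.unit, S.unit']
  · rcases hcols with ⟨h₀, h₁⟩ | ⟨h₀, h₁⟩ <;> rw [h₀, h₁, wedge_smul_right]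
    · have : wedge a (w' - w - a + a') = h := by
        simpa only [wedge_add_right, wedge_sub_right, wedge_self, sub_zero] using S.wedge_lower
      rw [this, inv_mul_cancel₀ hh.ne']
    · rw [S.wedge_upper, inv_mul_cancel₀ hh.ne']
  · rcases hrigid with rfl | hsoft
    · rwa [mul_zero, abs_nonpos_iff] at hshear
    · exact absurd hx_rigid (hsoft x hx₁)

lemma jac_extendAcross_of_lt (v : V2 → V2) (hh : 0 < h) (a w a' w' : V2) {x : V2} (hx : x ∈ Rect)
    (hT : x 1 < T) : jac (extendAcross v T h a w a' w') x = jac v x := by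
  refine jac_congr ?_
  filter_upwards [(continuous_apply 0).continuousAt.eventually (lt_mem_nhds hx.1.1),
    (continuous_apply 1).continuousAt.eventually (gt_mem_nhds hT)] with y h₀ h₁
  exact extendAcross_of_le hh h₀.le h₁.le

theorem IsBuiltUpTo.extendAcross {lam ε κ : ℝ} {Q : V2 → Set V2} {K : ℝ≥0∞}
    (hv : IsBuiltUpTo lam ε Q T a w K v) (hh : 0 < h) (S : IsShearStrip h a w a' w')
    (hκ : |dot a (w' - w - a + a')| ≤ κ) (hκ' : |dot a' (w' - w)| ≤ κ)
    (hrigid : κ = 0 ∨ ∀ x : V2, x 1 ∈ Ioo T (T + h) → x ∉ rigid2 lam ε)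
    (hQ : ∀ x ∈ Rect, x 1 ∈ Ico T (T + h) →
      x 0 • a + w + stripShift a w a' w' ((x 1 - T) / h) (x 0) ∈ Q x) :
    IsBuiltUpTo lam ε Q (T + h) a' w' (K + ENNReal.ofReal κ) (extendAcross v T h a w a' w') := by
  have hstrip := S.ae_admissibleAt hh hv.eq_above hκ hκ' hrigid
  refine ⟨exists_lipschitzWith_extendAcross hv.lipschitz T h a w a' w',
    fun x hx₁ hx₀ => extendAcross_of_ge hv.eq_above hh hx₀ hx₁, ?_, ?_, fun x hx hT => ?_⟩
  · filter_upwards [hv.admissible, hstrip] with x hbelow hmid hx hT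
    rcases lt_or_ge (x 1) T with hlt | hge
    · exact (hbelow hx hlt).congr (jac_extendAcross_of_lt v hh a w a' w' hx hlt).symm
    · exact (hmid hx ⟨hge, hT⟩).1
  · have hsplit : Rect ∩ {x : V2 | x 1 < T + h} ⊆
        (Rect ∩ {x | x 1 < T}) ∪ (Rect ∩ {x | x 1 ∈ Ico T (T + h)}) := fun x hx =>
      (lt_or_ge (x 1) T).imp (fun hlt => ⟨hx.1, hlt⟩) fun hge => ⟨hx.1, hge, hx.2⟩
    refine (lintegral_mono_set hsplit).trans ((lintegral_union_le _ _ _).trans ?_)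
    gcongr
    · refine le_trans (le_of_eq ?_) hv.shear_le
      refine setLIntegral_congr_fun
        (measurableSet_Rect.inter (measurable_pi_apply 1 measurableSet_Iio)) fun x hx => ?_
      simp only [shear_congr (jac_extendAcross_of_lt v hh a w a' w' hx.1 hx.2)]
    · calc _ ≤ ∫⁻ _ in Rect ∩ {x : V2 | x 1 ∈ Ico T (T + h)}, ENNReal.ofReal (h⁻¹ * κ) := by
            refine setLIntegral_mono_ae measurable_const.aemeasurable ?_
            filter_upwards [hstrip] with x hmid hx
            exact ENNReal.ofReal_le_ofReal (hmid hx.1 hx.2).2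
        _ ≤ ENNReal.ofReal (h⁻¹ * κ) * ENNReal.ofReal h := by
            rw [setLIntegral_const]; gcongr; exact volume_Rect_strip_le T h
        _ = ENNReal.ofReal κ := by
            rw [← ENNReal.ofReal_mul' hh.le]; congr 1; field_simp
  · rcases lt_or_ge (x 1) T with hlt | hge
    · rw [extendAcross_of_le hh hx.1.1.le hlt.le]; exact hv.mem_target x hx hlt
    · rw [extendAcross_of_mem hv.eq_above hh (Ioo_subset_Icc_self hx.1) ⟨hge, hT.le⟩]
      exact hQ x hx ⟨hge, hT⟩

end Extend

/-! ### Joining two arbitrary unit segments -/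

lemma isShearStrip_self_iff {h : ℝ} {a w w' : V2} (ha : dot a a = 1) :
    IsShearStrip h a w a w' ↔ wedge a (w' - w) = h :=
  ⟨fun S => S.wedge_upper, fun hw =>
    ⟨ha, ha, by rw [wedge_add_right, wedge_self, add_zero, hw], hw⟩⟩

lemma stripShift_self (a w w' : V2) (s r : ℝ) : stripShift a w a w' s r = s • (w' - w) := by
  rw [stripShift]; module

/-- The vector `h • perp a' - (h τ + 1) • a'`, where `τ = -(a ∧ a') / (1 + a · a')` is minus the
tangent of half the angle from `a` to `a'`, solves both area constraints of a strip. -/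
lemma exists_wedge_eq_of_dot_nonneg {a a' : V2} (ha : dot a a = 1) (ha' : dot a' a' = 1)
    (hdot : 0 ≤ dot a a') {h : ℝ} (hh : 0 ≤ h) :
    ∃ z : V2, ‖z‖ ≤ 2 * h + 1 ∧ wedge a (z + a') = h ∧ wedge a' z = h := by
  have hpyth : wedge a a' ^ 2 + dot a a' ^ 2 = 1 := by
    rw [wedge_sq_add_dot_sq, ha, ha', one_mul]
  have hpos : 0 < 1 + dot a a' := by linarith
  set τ := -wedge a a' / (1 + dot a a') with hτ
  have hτ_mul : τ * (1 + dot a a') = -wedge a a' := div_mul_cancel₀ _ hpos.ne'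
  have hτ_le : |τ| ≤ 1 := by
    have : |wedge a a'| ≤ 1 := by
      rw [abs_le_one_iff_mul_self_le_one]; nlinarith [sq_nonneg (dot a a')]
    rw [hτ, abs_div, abs_neg, abs_of_pos hpos, div_le_one hpos]
    linarith
  have hτ_sol : dot a a' - τ * wedge a a' = 1 := by
    refine mul_left_cancel₀ hpos.ne' ?_
    linear_combination hpyth - wedge a a' * hτ_mul
  refine ⟨h • perp a' - (h * τ + 1) • a', ?_, ?_, ?_⟩
  · have hcoef : |h * τ + 1| ≤ h + 1 := by
      have := abs_add_le (h * τ) 1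
      rw [abs_mul, abs_of_nonneg hh, abs_one] at this
      nlinarith
    have ha'_le := norm_le_one_of_dot_self ha'
    calc ‖h • perp a' - (h * τ + 1) • a'‖ ≤ h * ‖perp a'‖ + |h * τ + 1| * ‖a'‖ := by
          refine (norm_sub_le _ _).trans_eq ?_
          rw [norm_smul, norm_smul, Real.norm_eq_abs, Real.norm_eq_abs, abs_of_nonneg hh]
      _ ≤ h * 1 + (h + 1) * 1 := by gcongr; exact (norm_perp_le a').trans ha'_le
      _ = 2 * h + 1 := by ring
  · rw [wedge_add_right, wedge_sub_right, wedge_smul_right, wedge_smul_right, wedge_perp]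
    linear_combination h * hτ_sol
  · rw [wedge_sub_right, wedge_smul_right, wedge_smul_right, wedge_perp, ha', wedge_self]
    ring

lemma exists_isShearStrip_of_dot_nonneg {a a' : V2} (ha : dot a a = 1) (ha' : dot a' a' = 1)
    (hdot : 0 ≤ dot a a') {h : ℝ} (hh : 0 ≤ h) :
    ∃ z : V2, ‖z‖ ≤ 2 * h + 1 ∧ ∀ w, IsShearStrip h a w a' (w + z) := by
  obtain ⟨z, hz, hlower, hupper⟩ := exists_wedge_eq_of_dot_nonneg ha ha' hdot hh
  exact ⟨z, hz, fun w => ⟨ha, ha', by rwa [add_sub_cancel_left], by rwa [add_sub_cancel_left]⟩⟩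

lemma exists_unit_perp_dot_nonneg {a : V2} (ha : dot a a = 1) (a' : V2) :
    ∃ b, dot b b = 1 ∧ dot a b = 0 ∧ |wedge b a| = 1 ∧ 0 ≤ dot b a' := by
  have key (σ : ℝ) (hσ : σ * σ = 1) (hσ' : 0 ≤ σ * dot (perp a) a') :
      ∃ b, dot b b = 1 ∧ dot a b = 0 ∧ |wedge b a| = 1 ∧ 0 ≤ dot b a' := by
    refine ⟨σ • perp a, ?_, ?_, ?_, ?_⟩
    · rw [dot_smul_left, dot_smul_right, dot_perp_perp, ha, mul_one, hσ]
    · rw [dot_smul_right, dot_perp_self, mul_zero]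
    · have : wedge (perp a) a = -1 := by
        rw [← ha, wedge, dot_eq, perp_zero, perp_one]; ring
      rw [wedge_smul_left, this, mul_neg_one, abs_neg, ← sq_eq_sq₀ (abs_nonneg σ) zero_le_one,
        sq_abs, sq, hσ, one_pow]
    · rwa [dot_smul_left]
  rcases le_total 0 (dot (perp a) a') with hpos | hneg
  · exact key 1 (by norm_num) (by linarith)
  · exact key (-1) (by norm_num) (by linarith)

/-- Sliding along `a` prepares the single real condition left after the two quarter turns
`a → b → a'` with `b ⟂ a`: the slide along `b` in between must have the prescribed area. -/
lemma exists_isShearStrip_chain {a a' w w' : V2} {h B : ℝ} (ha : dot a a = 1)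
    (ha' : dot a' a' = 1) (hh : 0 < h) (hw : ‖w‖ ≤ B) (hw' : ‖w'‖ ≤ B) :
    ∃ b w₁ w₂ w₃ : V2, IsShearStrip h a w a w₁ ∧ IsShearStrip h a w₁ b w₂ ∧
      IsShearStrip h b w₂ b w₃ ∧ IsShearStrip h b w₃ a' w' ∧
      ∀ z ∈ ({w₁, w₂, w₃} : Set V2), ‖z‖ ≤ 5 * B + 14 * h + 5 := by
  have hB : 0 ≤ B := (norm_nonneg _).trans hw
  obtain ⟨b, hb, hab, hba, hba'⟩ := exists_unit_perp_dot_nonneg ha a'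
  obtain ⟨z₁, hz₁, S₁⟩ := exists_isShearStrip_of_dot_nonneg ha hb hab.ge hh.le
  obtain ⟨z₂, hz₂, S₂⟩ := exists_isShearStrip_of_dot_nonneg hb ha' hba' hh.le
  set w₀ := w + h • perp a
  set α := wedge b a * (wedge b (w' - z₂ - (w₀ + z₁)) - h) with hα
  have hba_sq : wedge b a * wedge b a = 1 := by rw [← abs_mul_abs_self, hba, one_mul]
  have ha_le := norm_le_one_of_dot_self ha
  have hw₀ : ‖w₀‖ ≤ B + h := by
    refine (norm_add_le _ _).trans (add_le_add hw ?_)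
    rw [norm_smul, Real.norm_eq_abs, abs_of_pos hh]
    exact mul_le_of_le_one_right hh.le ((norm_perp_le a).trans ha_le)
  have hw₃ : ‖w' - z₂‖ ≤ B + (2 * h + 1) := (norm_sub_le _ _).trans (add_le_add hw' hz₂)
  have hα_le : ‖α • a‖ ≤ 4 * B + 11 * h + 4 := by
    have h₁ := abs_wedge_le_of_unit hb (w' - z₂ - (w₀ + z₁))
    have h₂ := norm_sub_le (w' - z₂) (w₀ + z₁)
    have h₃ := norm_add_le w₀ z₁
    have h₄ := abs_sub (wedge b (w' - z₂ - (w₀ + z₁))) h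
    rw [abs_of_pos hh] at h₄
    rw [norm_smul, Real.norm_eq_abs, hα, abs_mul, hba, one_mul]
    refine (mul_le_of_le_one_right (abs_nonneg _) ha_le).trans ?_
    linarith
  have hw₁ := norm_add_le w₀ (α • a)
  have hw₂ := norm_add_le (w₀ + α • a) z₁
  refine ⟨b, w₀ + α • a, w₀ + α • a + z₁, w' - z₂, (isShearStrip_self_iff ha).2 ?_, S₁ _,
    (isShearStrip_self_iff hb).2 ?_, by simpa using S₂ (w' - z₂), ?_⟩
  · rw [add_sub_right_comm, add_sub_cancel_left, wedge_add_right, wedge_smul_right,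
      wedge_smul_right, wedge_perp, ha, wedge_self]
    ring
  · rw [add_right_comm, ← sub_sub, wedge_sub_right, wedge_smul_right, hα]
    linear_combination (h - wedge b (w' - z₂ - (w₀ + z₁))) * hba_sq
  · rintro z (rfl | rfl | rfl) <;> linarith

lemma norm_stripShift_le {a w a' w' : V2} {B s r : ℝ} (ha : dot a a = 1) (ha' : dot a' a' = 1)
    (hw : ‖w‖ ≤ B) (hw' : ‖w'‖ ≤ B) (hs : s ∈ Icc (0 : ℝ) 1) (hr : r ∈ Icc (0 : ℝ) 1) :
    ‖r • a + w + stripShift a w a' w' s r‖ ≤ 3 * B + 5 := by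
  have hunit {c : V2} (hc : dot c c = 1) := norm_le_one_of_dot_self hc
  have hsmul {t : ℝ} (ht : t ∈ Icc (0 : ℝ) 1) (z : V2) : ‖t • z‖ ≤ ‖z‖ := by
    rw [norm_smul, Real.norm_eq_abs, abs_of_nonneg ht.1]
    exact mul_le_of_le_one_left (norm_nonneg z) ht.2
  have hmax : max 0 (s - r) ∈ Icc (0 : ℝ) 1 :=
    ⟨le_max_left _ _, max_le zero_le_one (by linarith [hs.2, hr.1])⟩
  have hd : ‖w' - w - a + a'‖ ≤ ‖w'‖ + ‖w‖ + ‖a‖ + ‖a'‖ :=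
    norm_add_le_of_le (norm_sub_le_of_le (norm_sub_le _ _) le_rfl) le_rfl
  calc ‖r • a + w + stripShift a w a' w' s r‖
      ≤ ‖a‖ + ‖w‖ + ((‖w'‖ + ‖w‖ + ‖a‖ + ‖a'‖) + (‖a‖ + ‖a'‖)) :=
        norm_add_le_of_le (norm_add_le_of_le (hsmul hr a) le_rfl)
          (norm_add_le_of_le ((hsmul hs _).trans hd) ((hsmul hmax _).trans (norm_sub_le a a')))
    _ ≤ 3 * B + 5 := by linarith [hunit ha, hunit ha']

section Jump

variable {lam ε : ℝ} {Q : V2 → Set V2} {T h B : ℝ} {a w a' w' : V2} {K : ℝ≥0∞} {v : V2 → V2}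

lemma IsBuiltUpTo.exists_of_isShearStrip (hv : IsBuiltUpTo lam ε Q T a w K v) (hh : 0 < h)
    (S : IsShearStrip h a w a' w') (hw : ‖w‖ ≤ B) (hw' : ‖w'‖ ≤ B)
    (hsoft : ∀ x : V2, x 1 ∈ Ioo T (T + h) → x ∉ rigid2 lam ε)
    (hQ : ∀ x ∈ Rect, x 1 ∈ Ico T (T + h) → Metric.closedBall 0 (3 * B + 5) ⊆ Q x) :
    ∃ v', IsBuiltUpTo lam ε Q (T + h) a' w' (K + ENNReal.ofReal (4 * B + 4)) v' := by
  have ha := norm_le_one_of_dot_self S.unit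
  have ha' := norm_le_one_of_dot_self S.unit'
  have hd' : ‖w' - w‖ ≤ 2 * B := by linarith [norm_sub_le w' w]
  have hd : ‖w' - w - a + a'‖ ≤ 2 * B + 2 := by
    linarith [norm_add_le (w' - w - a) a', norm_sub_le (w' - w) a]
  refine ⟨_, hv.extendAcross hh S ?_ ?_ (Or.inr hsoft) fun x hx hx₁ => hQ x hx hx₁ ?_⟩
  · linarith [abs_dot_le_of_unit S.unit (w' - w - a + a')]
  · linarith [abs_dot_le_of_unit S.unit' (w' - w)]
  · rw [mem_closedBall_zero_iff]
    exact norm_stripShift_le S.unit S.unit' hw hw'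
      ⟨div_nonneg (by linarith [hx₁.1]) hh.le, by rw [div_le_one hh]; linarith [hx₁.2]⟩
      (Ioo_subset_Icc_self hx.1)

theorem IsBuiltUpTo.exists_jump (hv : IsBuiltUpTo lam ε Q T a w K v) (hh : 0 < h)
    (ha : dot a a = 1) (ha' : dot a' a' = 1) (hw : ‖w‖ ≤ B) (hw' : ‖w'‖ ≤ B)
    (hsoft : ∀ x : V2, x 1 ∈ Ioo T (T + h) → x ∉ rigid2 lam ε)
    (hQ : ∀ x ∈ Rect, x 1 ∈ Ico T (T + h) →
      Metric.closedBall 0 (15 * B + 12 * h + 20) ⊆ Q x) :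
    ∃ v', IsBuiltUpTo lam ε Q (T + h) a' w' (K + ENNReal.ofReal (80 * B + 64 * h + 96)) v' := by
  obtain ⟨k, rfl⟩ : ∃ k, h = 4 * k := ⟨h / 4, by ring⟩
  have hk : 0 < k := by linarith
  have hB : 0 ≤ B := (norm_nonneg _).trans hw
  obtain ⟨b, w₁, w₂, w₃, S₁, S₂, S₃, S₄, hnorm⟩ := exists_isShearStrip_chain ha ha' hk hw hw'
  set B' := 5 * B + 14 * k + 5
  have step {n : ℕ} (hn : n < 4) {c z c' z' : V2} {K : ℝ≥0∞} {v : V2 → V2}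
      (hv : IsBuiltUpTo lam ε Q (T + n * k) c z K v) (S : IsShearStrip k c z c' z')
      (hz : ‖z‖ ≤ B') (hz' : ‖z'‖ ≤ B') :
      ∃ v', IsBuiltUpTo lam ε Q (T + (n + 1 : ℕ) * k) c' z'
        (K + ENNReal.ofReal (4 * B' + 4)) v' := by
    have hn' : (n : ℝ) + 1 ≤ 4 := by exact_mod_cast hn
    have h₀ : 0 ≤ n * k := by positivity
    have h₁ : n * k + k ≤ 4 * k := by nlinarith
    rw [Nat.cast_succ, add_one_mul, ← add_assoc]
    refine hv.exists_of_isShearStrip hk S hz hz' (fun x hx => hsoft x ?_) fun x hx hx₁ =>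
      (Metric.closedBall_subset_closedBall (by linarith)).trans (hQ x hx ?_)
    · exact ⟨by linarith [hx.1], by linarith [hx.2]⟩
    · exact ⟨by linarith [hx₁.1], by linarith [hx₁.2]⟩
  obtain ⟨v₁, hv₁⟩ := step (n := 0) (by norm_num) (by simpa using hv) S₁ (by linarith)
    (hnorm _ (by simp))
  obtain ⟨v₂, hv₂⟩ := step (by norm_num) hv₁ S₂ (hnorm _ (by simp)) (hnorm _ (by simp))
  obtain ⟨v₃, hv₃⟩ := step (by norm_num) hv₂ S₃ (hnorm _ (by simp)) (hnorm _ (by simp))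
  obtain ⟨v₄, hv₄⟩ := step (by norm_num) hv₃ S₄ (hnorm _ (by simp)) (by linarith)
  refine ⟨v₄, IsBuiltUpTo.mono (by simpa using hv₄) ?_ fun _ _ _ => Subset.rfl⟩
  have hsum : ENNReal.ofReal (4 * (4 * B' + 4)) = 4 * ENNReal.ofReal (4 * B' + 4) := by
    rw [ENNReal.ofReal_mul (by norm_num), ENNReal.ofReal_ofNat]
  calc _ = K + 4 * ENNReal.ofReal (4 * B' + 4) := by ring
    _ ≤ _ := by rw [← hsum]; gcongr; linarith

end Jump

/-! ### The layered construction -/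

/-- The rigid motion `r ↦ r • a s + offset a ψ s t` is the trace on the line `x₂ = t` of the
isometry with first column `a s` and translation `ψ s`. -/
def offset (a ψ : ℝ → V2) (s t : ℝ) : V2 := t • perp (a s) + ψ s

/-- The set of admissible images of `x`: the ball around the value at `x` of the limit map
`x ↦ x₁ a(x₂) + x₂ a(x₂)^⊥ + ψ(x₂)` whose radius is controlled by the increment of `Φ` near `x₂`. -/
def nearSet (a ψ : ℝ → V2) (Φ : ℝ → ℝ) (C ε : ℝ) (x : V2) : Set V2 :=
  Metric.closedBall (x 0 • a (x 1) + offset a ψ (x 1) (x 1))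
    (C * (Φ (x 1 + 2 * ε) - Φ (x 1 - 2 * ε)))

/-- The data of a limit map `x ↦ x₁ a(x₂) + x₂ a(x₂)^⊥ + ψ(x₂)` with `x₂ ∈ I`, controlled by a
monotone function `Φ`: between two times either only a slide in direction `a` bounded by the
increment of `Φ` has happened, or `Φ` has increased by at least `1`. -/
structure ControlledOn (I : Set ℝ) (a ψ : ℝ → V2) (Φ : ℝ → ℝ) (M : ℝ) : Prop where
  mono : Monotone Φ
  osc_le : ∀ s ∈ I, ∀ t ∈ I, Φ t - Φ s ≤ M
  norm_le : ∀ t ∈ I, ‖ψ t‖ ≤ M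
  unit : ∀ t ∈ I, dot (a t) (a t) = 1
  slide_or_jump : ∀ s ∈ I, ∀ t ∈ I, s ≤ t →
    (a s = a t ∧ wedge (a s) (ψ t - ψ s) = 0 ∧ ‖ψ t - ψ s‖ ≤ Φ t - Φ s) ∨ 1 ≤ Φ t - Φ s

lemma ControlledOn.comp {I J : Set ℝ} {a ψ : ℝ → V2} {Φ g : ℝ → ℝ} {M : ℝ}
    (H : ControlledOn I a ψ Φ M) (hg : Monotone g) (hgI : MapsTo g J I) :
    ControlledOn J (a ∘ g) (ψ ∘ g) (Φ ∘ g) M where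
  mono := H.mono.comp hg
  osc_le _ hs _ ht := H.osc_le _ (hgI hs) _ (hgI ht)
  norm_le _ ht := H.norm_le _ (hgI ht)
  unit _ ht := H.unit _ (hgI ht)
  slide_or_jump _ hs _ ht hst := H.slide_or_jump _ (hgI hs) _ (hgI ht) (hg hst)

section Target

variable {a ψ : ℝ → V2} {Φ : ℝ → ℝ} {M C ε : ℝ}

lemma ControlledOn.norm_offset_le (H : ControlledOn univ a ψ Φ M) (s t : ℝ) :
    ‖offset a ψ s t‖ ≤ |t| + M := by
  refine norm_add_le_of_le ?_ (H.norm_le s trivial)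
  rw [norm_smul, Real.norm_eq_abs]
  exact mul_le_of_le_one_right (abs_nonneg t)
    ((norm_perp_le _).trans (norm_le_one_of_dot_self (H.unit s trivial)))

lemma ControlledOn.norm_smul_add_offset_le (H : ControlledOn univ a ψ Φ M) (s : ℝ) {x : V2}
    (hx : x ∈ Rect) : ‖x 0 • a s + offset a ψ s (x 1)‖ ≤ 2 + M := by
  have h₀ : ‖x 0 • a s‖ ≤ 1 := by
    rw [norm_smul, Real.norm_eq_abs, abs_of_pos hx.1.1]
    exact mul_le_one₀ hx.1.2.le (norm_nonneg _) (norm_le_one_of_dot_self (H.unit s trivial))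
  have h₁ : |x 1| ≤ 1 := abs_le.2 ⟨hx.2.1.le, hx.2.2.le⟩
  linarith [norm_add_le_of_le h₀ (H.norm_offset_le s (x 1))]

lemma ControlledOn.closedBall_subset_nearSet (H : ControlledOn univ a ψ Φ M) {B : ℝ} {x : V2}
    (hx : x ∈ Rect) (hjump : 1 ≤ Φ (x 1 + 2 * ε) - Φ (x 1 - 2 * ε)) (hC : B + 2 + M ≤ C)
    (hC₀ : 0 ≤ C) : Metric.closedBall 0 B ⊆ nearSet a ψ Φ C ε x := by
  intro y hy
  rw [mem_closedBall_zero_iff] at hy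
  rw [nearSet, mem_closedBall_iff_norm]
  calc ‖y - (x 0 • a (x 1) + offset a ψ (x 1) (x 1))‖ ≤ B + (2 + M) :=
        norm_sub_le_of_le hy (H.norm_smul_add_offset_le _ hx)
    _ ≤ C * 1 := by linarith
    _ ≤ C * (Φ (x 1 + 2 * ε) - Φ (x 1 - 2 * ε)) := by gcongr

lemma ControlledOn.mem_nearSet (H : ControlledOn univ a ψ Φ M) (hε : 0 ≤ ε) (hC : 4 + 3 * M ≤ C)
    {s : ℝ} {x z : V2} (hx : x ∈ Rect) (hs : s ≤ x 1) (hs' : x 1 - 2 * ε ≤ s)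
    (hz : ‖z‖ ≤ Φ (x 1 + 2 * ε) - Φ (x 1 - 2 * ε)) :
    x 0 • a s + offset a ψ s (x 1) + z ∈ nearSet a ψ Φ C ε x := by
  have hM : 0 ≤ M := (norm_nonneg _).trans (H.norm_le 0 trivial)
  have hΦs := H.mono hs'
  have hΦx := H.mono (show x 1 ≤ x 1 + 2 * ε by linarith)
  rcases H.slide_or_jump s trivial (x 1) trivial hs with ⟨ha, -, hψ⟩ | hjump
  · have hdiff : x 0 • a s + offset a ψ s (x 1) + z - (x 0 • a (x 1) + offset a ψ (x 1) (x 1)) =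
        z - (ψ (x 1) - ψ s) := by
      rw [offset, offset, ha]; module
    rw [nearSet, mem_closedBall_iff_norm, hdiff]
    refine (norm_sub_le_of_le hz hψ).trans ?_
    nlinarith [norm_nonneg z]
  · refine H.closedBall_subset_nearSet (B := 2 + 2 * M) hx (by linarith) (by linarith)
      (by linarith) ?_
    rw [mem_closedBall_zero_iff]
    have := H.osc_le (x 1 - 2 * ε) trivial (x 1 + 2 * ε) trivial
    linarith [norm_add_le_of_le (H.norm_smul_add_offset_le s hx) (hz.trans this)]

end Target

lemma notMem_rigid2 {lam ε : ℝ} (hε : 0 < ε) (hlam : lam ≤ 1) (k : ℤ) {x : V2}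
    (hx : x 1 ∈ Ioo (k * ε) (k * ε + lam * ε)) : x ∉ rigid2 lam ε := by
  have h₁ : k < x 1 / ε := by rw [lt_div_iff₀ hε]; exact hx.1
  have h₂ : x 1 / ε < k + lam := by rw [div_lt_iff₀ hε, add_mul]; exact hx.2
  have hfloor : ⌊x 1 / ε⌋ = k := by
    rw [Int.floor_eq_iff]; exact ⟨h₁.le, by linarith⟩
  rw [rigid2, mem_ofPred_eq, not_le, Int.fract, hfloor]
  linarith

lemma IsBuiltUpTo.exists_slide {lam ε T h : ℝ} {Q : V2 → Set V2} {a w δ : V2} {K : ℝ≥0∞}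
    {v : V2 → V2} (hv : IsBuiltUpTo lam ε Q T a w K v) (hh : 0 < h) (ha : dot a a = 1)
    (hδ : wedge a δ = 0)
    (hrigid : δ = 0 ∨ ∀ x : V2, x 1 ∈ Ioo T (T + h) → x ∉ rigid2 lam ε)
    (hQ : ∀ x ∈ Rect, x 1 ∈ Ico T (T + h) →
      x 0 • a + (w + (x 1 - T) • perp a) + ((x 1 - T) / h) • δ ∈ Q x) :
    ∃ v', IsBuiltUpTo lam ε Q (T + h) a (w + h • perp a + δ) (K + ENNReal.ofReal (2 * ‖δ‖)) v' := by
  have hdiff : w + h • perp a + δ - w = h • perp a + δ := by abel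
  have hdot : dot a (h • perp a + δ) = dot a δ := by
    rw [dot_add_right, dot_smul_right, dot_perp_self, mul_zero, zero_add]
  have S : IsShearStrip h a w a (w + h • perp a + δ) := by
    rw [isShearStrip_self_iff ha, hdiff, wedge_add_right, wedge_smul_right, wedge_perp, ha, hδ]
    ring
  refine ⟨_, hv.extendAcross hh S ?_ ?_ (hrigid.imp_left fun h₀ => ?_) fun x hx hx₁ => ?_⟩
  · rw [hdiff, sub_add_cancel, hdot]
    exact abs_dot_le_of_unit ha δ
  · rw [hdiff, hdot]
    exact abs_dot_le_of_unit ha δ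
  · rw [h₀, norm_zero, mul_zero]
  · convert hQ x hx hx₁ using 1
    rw [stripShift_self, hdiff, smul_add, smul_smul, div_mul_cancel₀ _ hh.ne']
    abel

section Layer

variable {lam ε E M C : ℝ} {a ψ : ℝ → V2} {Φ : ℝ → ℝ} {K : ℝ≥0∞} {v : V2 → V2}

lemma ControlledOn.sub_le_window (H : ControlledOn univ a ψ Φ M) (hε : 0 ≤ ε) {r t : ℝ}
    (ht : t ∈ Icc r (r + ε)) : Φ r - Φ (r - ε) ≤ Φ (t + 2 * ε) - Φ (t - 2 * ε) :=
  sub_le_sub (H.mono (by linarith [ht.1])) (H.mono (by linarith [ht.2]))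

lemma ControlledOn.exists_slide_layer (H : ControlledOn univ a ψ Φ M) (hε : 0 ≤ ε)
    (hC : 4 + 3 * M ≤ C) {r h : ℝ} (hh : h ∈ Ioc 0 ε)
    (hv : IsBuiltUpTo lam ε (nearSet a ψ Φ C ε) r (a (r - ε)) (offset a ψ (r - ε) r) K v)
    (hsoft : ∀ x : V2, x 1 ∈ Ioo r (r + h) → x ∉ rigid2 lam ε)
    (ha : a (r - ε) = a r) (hwedge : wedge (a (r - ε)) (ψ r - ψ (r - ε)) = 0)
    (hψ : ‖ψ r - ψ (r - ε)‖ ≤ Φ r - Φ (r - ε)) :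
    ∃ v', IsBuiltUpTo lam ε (nearSet a ψ Φ C ε) (r + h) (a r) (offset a ψ r (r + h))
      (K + ENNReal.ofReal (C * (Φ r - Φ (r - ε)))) v' := by
  have hM : 0 ≤ M := (norm_nonneg _).trans (H.norm_le 0 trivial)
  obtain ⟨v', hv'⟩ := hv.exists_slide hh.1 (H.unit _ trivial) hwedge (Or.inr hsoft)
    fun x hx hx₁ => by
      convert H.mem_nearSet (C := C) (s := r - ε) hε hC hx (by linarith [hx₁.1])
        (by linarith [hx₁.2, hh.2]) (z := ((x 1 - r) / h) • (ψ r - ψ (r - ε))) ?_ using 3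
      · rw [offset, offset]; module
      · have hs : (x 1 - r) / h ∈ Icc (0 : ℝ) 1 :=
          ⟨div_nonneg (by linarith [hx₁.1]) hh.1.le, by rw [div_le_one hh.1]; linarith [hx₁.2]⟩
        rw [norm_smul, Real.norm_eq_abs, abs_of_nonneg hs.1]
        exact (mul_le_of_le_one_left (norm_nonneg _) hs.2).trans
          (hψ.trans (H.sub_le_window hε ⟨hx₁.1, by linarith [hx₁.2, hh.2]⟩))
  have hoffset : offset a ψ (r - ε) r + h • perp (a (r - ε)) + (ψ r - ψ (r - ε)) =
      offset a ψ r (r + h) := by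
    rw [offset, offset, ha]; module
  rw [hoffset, ha] at hv'
  refine ⟨v', hv'.mono (add_le_add_right (ENNReal.ofReal_le_ofReal ?_) K)
    fun _ _ _ => Subset.rfl⟩
  nlinarith [norm_nonneg (ψ r - ψ (r - ε))]

lemma ControlledOn.exists_jump_layer (H : ControlledOn univ a ψ Φ M) (hε : ε ∈ Ioc 0 E)
    (hC : 80 * (2 + 3 * E + M) + 64 * E + 96 ≤ C) {r h : ℝ} (hr : |r| ≤ 1 + 2 * E)
    (hh : h ∈ Ioc 0 ε)
    (hv : IsBuiltUpTo lam ε (nearSet a ψ Φ C ε) r (a (r - ε)) (offset a ψ (r - ε) r) K v)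
    (hsoft : ∀ x : V2, x 1 ∈ Ioo r (r + h) → x ∉ rigid2 lam ε)
    (hjump : 1 ≤ Φ r - Φ (r - ε)) :
    ∃ v', IsBuiltUpTo lam ε (nearSet a ψ Φ C ε) (r + h) (a r) (offset a ψ r (r + h))
      (K + ENNReal.ofReal (C * (Φ r - Φ (r - ε)))) v' := by
  have hM : 0 ≤ M := (norm_nonneg _).trans (H.norm_le 0 trivial)
  have hE : 0 < E := hε.1.trans_le hε.2
  have hhE : h ≤ E := hh.2.trans hε.2
  have hoffset {s t : ℝ} (ht : |t| ≤ 1 + 3 * E) : ‖offset a ψ s t‖ ≤ 2 + 3 * E + M := by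
    linarith [H.norm_offset_le s t]
  have hrh : |r + h| ≤ 1 + 3 * E := by
    have := abs_add_le r h
    rw [abs_of_pos hh.1] at this
    linarith
  obtain ⟨v', hv'⟩ := hv.exists_jump hh.1 (H.unit _ trivial) (H.unit _ trivial)
    (hoffset (by linarith)) (hoffset hrh) hsoft fun x hx hx₁ =>
      H.closedBall_subset_nearSet hx
        (hjump.trans (H.sub_le_window hε.1.le ⟨hx₁.1, by linarith [hx₁.2, hh.2]⟩))
        (by linarith) (by linarith)
  refine ⟨v', hv'.mono ?_ fun _ _ _ => Subset.rfl⟩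
  gcongr
  nlinarith

lemma ControlledOn.exists_soft_layer (H : ControlledOn univ a ψ Φ M) (hlam : lam ∈ Ioo (0 : ℝ) 1)
    (hε : ε ∈ Ioc 0 E) (hC : 80 * (2 + 3 * E + M) + 64 * E + 96 ≤ C) {k : ℤ}
    (hk : |k * ε| ≤ 1 + 2 * E)
    (hv : IsBuiltUpTo lam ε (nearSet a ψ Φ C ε) (k * ε) (a ((k - 1) * ε))
      (offset a ψ ((k - 1) * ε) (k * ε)) K v) :
    ∃ v', IsBuiltUpTo lam ε (nearSet a ψ Φ C ε) (k * ε + lam * ε) (a (k * ε))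
      (offset a ψ (k * ε) (k * ε + lam * ε))
      (K + ENNReal.ofReal (C * (Φ (k * ε) - Φ ((k - 1) * ε)))) v' := by
  have hM : 0 ≤ M := (norm_nonneg _).trans (H.norm_le 0 trivial)
  have hE : 0 < E := hε.1.trans_le hε.2
  have hh : lam * ε ∈ Ioc 0 ε :=
    ⟨mul_pos hlam.1 hε.1, mul_le_of_le_one_left hε.1.le hlam.2.le⟩
  have hsoft (x : V2) (hx : x 1 ∈ Ioo (k * ε) (k * ε + lam * ε)) : x ∉ rigid2 lam ε :=
    notMem_rigid2 hε.1 hlam.2.le k hx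
  rw [sub_one_mul] at hv ⊢
  rcases H.slide_or_jump (k * ε - ε) trivial (k * ε) trivial (sub_le_self _ hε.1.le)
    with ⟨ha, hwedge, hψ⟩ | hjump
  · exact H.exists_slide_layer hε.1.le (by linarith) hh hv hsoft ha hwedge hψ
  · exact H.exists_jump_layer hε hC hk hh hv hsoft hjump

lemma ControlledOn.exists_rigid_layer (H : ControlledOn univ a ψ Φ M) (hlam : lam ∈ Ioo (0 : ℝ) 1)
    (hε : 0 < ε) (hC : 4 + 3 * M ≤ C) {k : ℤ}
    (hv : IsBuiltUpTo lam ε (nearSet a ψ Φ C ε) (k * ε + lam * ε) (a (k * ε))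
      (offset a ψ (k * ε) (k * ε + lam * ε)) K v) :
    ∃ v', IsBuiltUpTo lam ε (nearSet a ψ Φ C ε) ((k + 1) * ε) (a (k * ε))
      (offset a ψ (k * ε) ((k + 1) * ε)) K v' := by
  have hL : 0 < lam * ε := mul_pos hlam.1 hε
  have hR : 0 < (1 - lam) * ε := mul_pos (sub_pos.2 hlam.2) hε
  obtain ⟨v', hv'⟩ := hv.exists_slide (δ := 0) hR (H.unit _ trivial) (by simp [wedge])
    (Or.inl rfl) fun x hx hx₁ => by
      convert H.mem_nearSet (s := k * ε) (z := 0) hε.le hC hx (by linarith [hx₁.1])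
        (by linarith [hx₁.2]) ?_ using 1
      · rw [offset, offset]; module
      · rw [norm_zero, sub_nonneg]
        exact H.mono (by linarith)
  refine ⟨v', ?_⟩
  convert hv' using 1
  · ring
  · rw [offset, offset]; module
  · rw [norm_zero, mul_zero, ENNReal.ofReal_zero, add_zero]

lemma isBuiltUpTo_affine (lam ε : ℝ) (Q : V2 → Set V2) {T : ℝ} (hT : T ≤ -1) (a w : V2) :
    IsBuiltUpTo lam ε Q T a w 0 fun x => x 0 • a + w := by
  have hempty (x : V2) (hx : x ∈ Rect) : ¬x 1 < T := by linarith [hx.2.1]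
  refine ⟨?_, fun _ _ _ => rfl, ?_, ?_, fun x hx h => absurd h (hempty x hx)⟩
  · exact ⟨_, ((ContinuousLinearMap.proj (R := ℝ) (φ := fun _ : Fin 2 => ℝ) 0).smulRight
      a).lipschitz.add (LipschitzWith.const w)⟩
  · exact .of_forall fun x hx h => absurd h (hempty x hx)
  · have : Rect ∩ {x : V2 | x 1 < T} = ∅ :=
      eq_empty_of_forall_notMem fun x hx => hempty x hx.1 hx.2
    rw [this, Measure.restrict_empty, lintegral_zero_measure]

lemma ControlledOn.exists_isBuiltUpTo (H : ControlledOn univ a ψ Φ M)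
    (hlam : lam ∈ Ioo (0 : ℝ) 1) (hε : ε ∈ Ioc 0 E)
    (hC : 80 * (2 + 3 * E + M) + 64 * E + 96 ≤ C) {k₀ : ℤ} (hk₀ : k₀ * ε ∈ Icc (-1 - ε) (-1))
    (n : ℕ) (hn : n * ε ≤ 2 + 2 * ε) :
    ∃ v, IsBuiltUpTo lam ε (nearSet a ψ Φ C ε) ((k₀ + n) * ε) (a ((k₀ + n - 1) * ε))
      (offset a ψ ((k₀ + n - 1) * ε) ((k₀ + n) * ε))
      (ENNReal.ofReal (C * (Φ ((k₀ + n - 1) * ε) - Φ ((k₀ - 1) * ε)))) v := by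
  have hM : 0 ≤ M := (norm_nonneg _).trans (H.norm_le 0 trivial)
  have hE : 0 < E := hε.1.trans_le hε.2
  induction n with
  | zero =>
    simp only [Nat.cast_zero, add_zero, sub_self, mul_zero, ENNReal.ofReal_zero]
    exact ⟨_, isBuiltUpTo_affine lam ε _ hk₀.2 _ _⟩
  | succ n ih =>
    push_cast at hn ⊢
    have hnε : 0 ≤ n * ε := mul_nonneg n.cast_nonneg hε.1.le
    obtain ⟨v, hv⟩ := ih (by linarith [hε.1])
    have hk : |((k₀ + n : ℤ) : ℝ) * ε| ≤ 1 + 2 * E := by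
      push_cast
      rw [abs_le, add_mul]
      constructor <;> linarith [hk₀.1, hk₀.2, hε.1, hε.2]
    obtain ⟨v₁, hv₁⟩ := H.exists_soft_layer hlam hε hC (k := k₀ + n) hk (by exact_mod_cast hv)
    obtain ⟨v₂, hv₂⟩ := H.exists_rigid_layer hlam hε.1 (by linarith) hv₁
    refine ⟨v₂, ?_⟩
    push_cast at hv₂
    rw [← ENNReal.ofReal_add] at hv₂
    · convert hv₂ using 2 <;> ring_nf
    · exact mul_nonneg (by linarith) (sub_nonneg.2 (H.mono (by nlinarith [hε.1])))
    · exact mul_nonneg (by linarith) (sub_nonneg.2 (H.mono (by linarith [hε.1])))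

end Layer

theorem exists_admissible_near_controlledOn {lam : ℝ} (hlam : lam ∈ Ioo (0 : ℝ) 1) {E M : ℝ}
    (hE : 0 ≤ E) (hM : 0 ≤ M) : ∃ C : ℝ, 0 ≤ C ∧ ∀ ε ∈ Ioc 0 E, ∀ a ψ Φ,
      ControlledOn univ a ψ Φ M → ∃ v : V2 → V2, (∃ K, LipschitzWith K v) ∧
        (∀ᵐ x, x ∈ Rect → AdmissibleAt lam ε v x) ∧
        ∫⁻ x in Rect, ENNReal.ofReal |shear v x| ≤ ENNReal.ofReal (C * M) ∧
        ∀ x ∈ Rect, v x ∈ nearSet a ψ Φ C ε x := by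
  refine ⟨80 * (2 + 3 * E + M) + 64 * E + 96, by positivity, fun ε hε a ψ Φ H => ?_⟩
  set C := 80 * (2 + 3 * E + M) + 64 * E + 96
  have hk₀ : ⌊-1 / ε⌋ * ε ∈ Icc (-1 - ε) (-1) := by
    have h₁ := Int.floor_le (-1 / ε)
    have h₂ := Int.lt_floor_add_one (-1 / ε)
    rw [le_div_iff₀ hε.1] at h₁
    rw [div_lt_iff₀ hε.1] at h₂
    exact ⟨by linarith, h₁⟩
  have hN : 2 ≤ ⌈2 / ε⌉₊ * ε ∧ ⌈2 / ε⌉₊ * ε ≤ 2 + ε := by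
    have h₁ := Nat.le_ceil (2 / ε)
    have h₂ := (Nat.ceil_lt_add_one (div_nonneg zero_le_two hε.1.le)).le
    rw [div_le_iff₀ hε.1] at h₁
    rw [← sub_le_iff_le_add, le_div_iff₀ hε.1] at h₂
    exact ⟨h₁, by linarith⟩
  obtain ⟨v, hv⟩ := H.exists_isBuiltUpTo hlam hε le_rfl hk₀ (⌈2 / ε⌉₊ + 1)
    (by push_cast; linarith [hε.1])
  have hT (x : V2) (hx : x ∈ Rect) : x 1 < (⌊-1 / ε⌋ + (⌈2 / ε⌉₊ + 1 : ℕ)) * ε := by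
    push_cast
    linarith [hx.2.2, hk₀.1]
  refine ⟨v, hv.lipschitz, ?_, ?_, fun x hx => hv.mem_target x hx (hT x hx)⟩
  · filter_upwards [hv.admissible] with x hx hxR
    exact hx hxR (hT x hxR)
  · have hcost := hv.shear_le
    rw [inter_eq_left.2 fun x hx => by exact hT x hx] at hcost
    refine hcost.trans (ENNReal.ofReal_le_ofReal ?_)
    exact mul_le_mul_of_nonneg_left (H.osc_le _ trivial _ trivial) (by positivity)

/-! ### Sobolev and `BV` maps -/

/-- A test function on `Ω`: smooth, with compact support in `Ω`. -/
structure IsTestFunction {E : Type*} [NormedAddCommGroup E] [NormedSpace ℝ E] (Ω : Set E)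
    (φ : E → ℝ) : Prop where
  contDiff : ContDiff ℝ (⊤ : ℕ∞) φ
  hasCompactSupport : HasCompactSupport φ
  tsupport_subset : tsupport φ ⊆ Ω

section TestFunction

variable {Ω : Set V2} {φ : V2 → ℝ}

lemma pd_eq_zero_of_notMem_tsupport (j : Fin 2) {x : V2} (hx : x ∉ tsupport φ) : pd j φ x = 0 := by
  rw [pd, image_eq_zero_of_notMem_tsupport fun h => hx (tsupport_fderiv_subset ℝ h),
    zero_apply]

namespace IsTestFunction

lemma continuous (hφ : IsTestFunction Ω φ) : Continuous φ := hφ.contDiff.continuous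

lemma continuous_pd (hφ : IsTestFunction Ω φ) (j : Fin 2) : Continuous (pd j φ) :=
  (hφ.contDiff.continuous_fderiv (by simp)).clm_apply continuous_const

lemma exists_bound_pd (hφ : IsTestFunction Ω φ) (j : Fin 2) : ∃ C, ∀ x, ‖pd j φ x‖ ≤ C :=
  (HasCompactSupport.intro hφ.hasCompactSupport fun _ hx =>
    pd_eq_zero_of_notMem_tsupport j hx).exists_bound_of_continuous (hφ.continuous_pd j)

lemma integrable_mul {μ : Measure V2} {f : V2 → ℝ} (hφ : IsTestFunction Ω φ)
    (hf : Integrable f μ) : Integrable (fun x => φ x * f x) μ := by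
  obtain ⟨C, hC⟩ := hφ.hasCompactSupport.exists_bound_of_continuous hφ.continuous
  exact hf.bdd_mul hφ.continuous.aestronglyMeasurable (.of_forall hC)

lemma setIntegral_mul (hφ : IsTestFunction Ω φ) (g : V2 → ℝ) :
    ∫ x in Ω, φ x * g x = ∫ x, φ x * g x :=
  setIntegral_eq_integral_of_forall_compl_eq_zero fun x hx => by
    rw [image_eq_zero_of_notMem_tsupport fun h => hx (hφ.tsupport_subset h), zero_mul]

lemma setIntegral_mul_pd (hφ : IsTestFunction Ω φ) (g : V2 → ℝ) (j : Fin 2) :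
    ∫ x in Ω, g x * pd j φ x = ∫ x, g x * pd j φ x :=
  setIntegral_eq_integral_of_forall_compl_eq_zero fun x hx => by
    rw [pd_eq_zero_of_notMem_tsupport j fun h => hx (hφ.tsupport_subset h), mul_zero]

lemma integral_mul_pd_of_lipschitzWith {f : V2 → ℝ} {C : NNReal} (hφ : IsTestFunction Ω φ)
    (hf : LipschitzWith C f) (j : Fin 2) :
    ∫ x, f x * pd j φ x = -∫ x, φ x * lineDeriv ℝ f x (Pi.single j 1) := by
  obtain ⟨D, hD⟩ := hφ.contDiff.lipschitzWith_of_hasCompactSupport hφ.hasCompactSupport (by simp)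
  have hpd (x : V2) : lineDeriv ℝ φ x (-Pi.single j 1) * f x = -(f x * pd j φ x) := by
    rw [((hφ.contDiff.differentiable (by simp)) x).lineDeriv_eq_fderiv, map_neg, pd]
    ring
  have hibp := hf.integral_lineDeriv_mul_eq (μ := volume) hD hφ.hasCompactSupport (Pi.single j 1)
  simp_rw [hpd, integral_neg] at hibp
  simp_rw [mul_comm (φ _), hibp, neg_neg]

end IsTestFunction

end TestFunction

section Lipschitz

variable {Ω : Set V2} {v : V2 → V2} {C : NNReal}

lemma lipschitzWith_apply {X : Type*} [PseudoEMetricSpace X] {f : X → V2} (hf : LipschitzWith C f)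
    (i : Fin 2) : LipschitzWith C (f · i) := by
  simpa only [one_mul, Function.comp_def] using
    (LipschitzWith.eval (α := fun _ : Fin 2 => ℝ) i).comp hf

lemma abs_jac_le (hv : LipschitzWith C v) (x : V2) (i j : Fin 2) : |jac v x i j| ≤ C := by
  have h := norm_lineDeriv_le_of_lipschitz ℝ (lipschitzWith_apply hv i) (x₀ := x)
    (v := Pi.single j 1)
  rwa [Pi.norm_single, norm_one, mul_one] at h

lemma measurable_jac (hv : LipschitzWith C v) (i j : Fin 2) : Measurable fun x => jac v x i j :=
  measurable_lineDeriv (lipschitzWith_apply hv i).continuous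

lemma isSobolev11On_jac (hΩ : Bornology.IsBounded Ω) (hv : LipschitzWith C v) :
    IsSobolev11On Ω v (jac v) where
  int_u := (hv.continuous.continuousOn.integrableOn_compact hΩ.isCompact_closure).mono_set
    subset_closure
  int_gu i j := Measure.integrableOn_of_bounded hΩ.measure_lt_top.ne
    (measurable_jac hv i j).aestronglyMeasurable (.of_forall fun x => abs_jac_le hv x i j)
  ibp φ h₁ h₂ h₃ i j := by
    have hφ : IsTestFunction Ω φ := ⟨h₁, h₂, h₃⟩
    rw [hφ.setIntegral_mul_pd, hφ.setIntegral_mul]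
    exact hφ.integral_mul_pd_of_lipschitzWith (lipschitzWith_apply hv i) j

end Lipschitz

section Sobolev

variable {Ω : Set V2} {u u' : V2 → V2} {g g' : V2 → Mat2}

lemma IsSobolev11On.congr (h : IsSobolev11On Ω u g) (hu : u =ᵐ[volume.restrict Ω] u')
    (hg : g =ᵐ[volume.restrict Ω] g') : IsSobolev11On Ω u' g' where
  int_u := h.int_u.congr hu
  int_gu i j := (h.int_gu i j).congr (hg.fun_comp (· i j))
  ibp φ h₁ h₂ h₃ i j := by
    calc ∫ x in Ω, u' x i * pd j φ x = ∫ x in Ω, u x i * pd j φ x :=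
          integral_congr_ae (hu.mono fun x hx => by simp only [hx])
      _ = -∫ x in Ω, φ x * g x i j := h.ibp φ h₁ h₂ h₃ i j
      _ = -∫ x in Ω, φ x * g' x i j :=
          congrArg Neg.neg (integral_congr_ae (hg.mono fun x hx => by simp only [hx]))

lemma IsSobolev11On.ae_eq (hΩ : IsOpen Ω) (h : IsSobolev11On Ω u g) (h' : IsSobolev11On Ω u g')
    (i j : Fin 2) : ∀ᵐ x ∂volume.restrict Ω, g x i j = g' x i j := by
  rw [ae_restrict_iff' hΩ.measurableSet]
  have hzero := hΩ.ae_eq_zero_of_integral_contDiff_smul_eq_zero (μ := volume)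
    (f := fun x => g x i j - g' x i j) ((h.int_gu i j).sub (h'.int_gu i j)).locallyIntegrableOn
    fun φ h₁ h₂ h₃ => by
      have hφ : IsTestFunction Ω φ := ⟨h₁, h₂, h₃⟩
      simp_rw [smul_eq_mul]
      rw [← hφ.setIntegral_mul]
      simp_rw [mul_sub]
      rw [integral_sub (hφ.integrable_mul (h.int_gu i j)) (hφ.integrable_mul (h'.int_gu i j))]
      linarith [h.ibp φ h₁ h₂ h₃ i j, h'.ibp φ h₁ h₂ h₃ i j]
  filter_upwards [hzero] with x hx hxΩ using sub_eq_zero.1 (hx hxΩ)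

end Sobolev

/-- The rotation matrix with first column `a`, for unit `a`. -/
def rotOfCol (a : V2) : Mat2 := !![a 0, -a 1; a 1, a 0]

lemma rotOfCol_mem_SO2 {a : V2} (ha : dot a a = 1) : rotOfCol a ∈ SO2 := by
  rw [dot_eq] at ha
  constructor
  · ext i j
    fin_cases i <;> fin_cases j <;> simp [rotOfCol, Matrix.mul_apply] <;> linarith
  · rw [rotOfCol, Matrix.det_fin_two_of]; linarith

lemma rotOfCol_mul_shear {M : Mat2} (hunit : dot (M.col 0) (M.col 0) = 1)
    (harea : wedge (M.col 0) (M.col 1) = 1) :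
    rotOfCol (M.col 0) * (1 + dot (M.col 0) (M.col 1) • outer e1 e2) = M := by
  simp only [dot_eq, wedge, Matrix.col_apply] at hunit harea
  ext i j
  fin_cases i <;> fin_cases j <;>
    simp [rotOfCol, Matrix.mul_apply, outer, e1, e2, dot_eq]
  · linear_combination M 0 1 * hunit + M 1 0 * harea
  · linear_combination M 1 1 * hunit - M 0 0 * harea

lemma measurableSet_rigid2 (lam ε : ℝ) : MeasurableSet (rigid2 lam ε) :=
  measurableSet_le measurable_const (measurable_fract.comp ((measurable_pi_apply 1).div_const _))

lemma memAeps_of_ae_admissibleAt {Ω : Set V2} (hΩ : Bornology.IsBounded Ω)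
    (hΩ' : MeasurableSet Ω) {lam ε : ℝ} {v : V2 → V2} {C : NNReal} (hv : LipschitzWith C v)
    (h : ∀ᵐ x ∂volume.restrict Ω, AdmissibleAt lam ε v x) :
    MemAeps Ω lam ε v (fun x => rotOfCol ((jac v x).col 0)) (shear v) where
  so2 := h.mono fun x hx => rotOfCol_mem_SO2 hx.unit
  int_γ := by
    have hmul (i : Fin 2) : IntegrableOn (fun x => jac v x i 0 * jac v x i 1) Ω :=
      ((isSobolev11On_jac hΩ hv).int_gu i 1).bdd_mul (c := C)
        (measurable_jac hv i 0).aestronglyMeasurable (.of_forall fun x => abs_jac_le hv x i 0)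
    refine ((hmul 0).add (hmul 1)).congr (.of_forall fun x => ?_)
    simp only [shear, dot_eq, Matrix.col_apply, Pi.add_apply]
  sob := (isSobolev11On_jac hΩ hv).congr .rfl
    (h.mono fun x hx => (rotOfCol_mul_shear hx.unit hx.area).symm)
  rig := by
    rw [ae_restrict_iff' (hΩ'.inter (measurableSet_rigid2 lam ε))]
    rw [ae_restrict_iff' hΩ'] at h
    filter_upwards [h] with x hx hxΩ using (hx hxΩ.1).rigid hxΩ.2

section Density

variable {E : Type*} [NormedAddCommGroup E] {Ω : Set E} {φ : E → ℝ}

lemma abs_integral_mul_sub_le [MeasurableSpace E] [OpensMeasurableSpace E] {μ : Measure E}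
    {f g : E → ℝ} (hf : Integrable f μ) (hφ : Continuous φ) (hφ' : HasCompactSupport φ)
    (hg : Continuous g) (hg' : HasCompactSupport g) {δ : ℝ} (h : ∀ x, |φ x - g x| ≤ δ) :
    |∫ x, φ x * f x ∂μ - ∫ x, g x * f x ∂μ| ≤ δ * ∫ x, |f x| ∂μ := by
  obtain ⟨c, hc⟩ := hφ'.exists_bound_of_continuous hφ
  obtain ⟨c', hc'⟩ := hg'.exists_bound_of_continuous hg
  rw [← integral_sub (hf.bdd_mul hφ.aestronglyMeasurable (.of_forall hc))
    (hf.bdd_mul hg.aestronglyMeasurable (.of_forall hc')), ← integral_const_mul, ← Real.norm_eq_abs]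
  refine norm_integral_le_of_norm_le (hf.abs.const_mul δ) (.of_forall fun x => ?_)
  rw [← sub_mul, norm_mul]
  exact mul_le_mul_of_nonneg_right (h x) (abs_nonneg _)

variable [NormedSpace ℝ E]

lemma exists_isTestFunction_near [FiniteDimensional ℝ E] (hΩ : IsOpen Ω) (hφ : Continuous φ)
    (hφ_compact : HasCompactSupport φ) (hφΩ : tsupport φ ⊆ Ω) {δ : ℝ} (hδ : 0 < δ) :
    ∃ g, IsTestFunction Ω g ∧ ∀ x, |φ x - g x| ≤ δ := by
  obtain ⟨r, hr, hrΩ⟩ := hφ_compact.isCompact.exists_cthickening_subset_open hΩ hφΩ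
  obtain ⟨r', hr', hφr'⟩ :=
    Metric.uniformContinuous_iff.1 (hφ_compact.uniformContinuous_of_continuous hφ) δ hδ
  obtain ⟨g, hg, hgφ⟩ := hφ.exists_contDiff_dist_le_of_forall_mem_ball_dist_le (lt_min hr hr')
  have hsupp (x : E) (hx : x ∉ Metric.cthickening r (tsupport φ)) : g x = 0 := by
    have hball (y : E) (hy : y ∈ Metric.ball x (min r r')) : φ y = 0 := by
      by_contra hne
      refine hx (Metric.mem_cthickening_of_dist_le x y r _ (subset_tsupport _ hne) ?_)
      rw [dist_comm]
      exact (Metric.mem_ball.1 hy).le.trans (min_le_left _ _)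
    have hφx := hball x (Metric.mem_ball_self (lt_min hr hr'))
    have := hgφ x 0 fun y hy => by rw [hball y hy, hφx, dist_self]
    rwa [hφx, dist_zero_right, norm_le_zero_iff] at this
  refine ⟨g, ⟨hg, .intro hφ_compact.isCompact.cthickening hsupp, ?_⟩, fun x => ?_⟩
  · refine (closure_minimal (fun x hx => ?_) Metric.isClosed_cthickening).trans hrΩ
    by_contra h
    exact hx (hsupp x h)
  · rw [← Real.dist_eq, dist_comm]
    exact hgφ x δ fun y hy => (hφr' ((Metric.mem_ball.1 hy).trans_le (min_le_right _ _))).le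

variable [MeasurableSpace E] [OpensMeasurableSpace E]

lemma tendsto_integral_mul_of_isTestFunction [FiniteDimensional ℝ E] (hΩ : IsOpen Ω)
    {μ σ : Measure E} {f : ℕ → E → ℝ} {f₀ f₁ : E → ℝ} (hf : ∀ n, Integrable (f n) μ)
    (hf₀ : Integrable f₀ μ) (hf₁ : Integrable f₁ σ) {B : ℝ} (hB : ∀ n, ∫ x, |f n x| ∂μ ≤ B)
    (htest : ∀ g, IsTestFunction Ω g → Tendsto (fun n => ∫ x, g x * f n x ∂μ) atTop
      (𝓝 (∫ x, g x * f₀ x ∂μ + ∫ x, g x * f₁ x ∂σ)))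
    (hφ : Continuous φ) (hφ' : HasCompactSupport φ) (hφΩ : tsupport φ ⊆ Ω) :
    Tendsto (fun n => ∫ x, φ x * f n x ∂μ) atTop
      (𝓝 (∫ x, φ x * f₀ x ∂μ + ∫ x, φ x * f₁ x ∂σ)) := by
  have hB₀ : 0 ≤ B := (integral_nonneg fun x => abs_nonneg _).trans (hB 0)
  have : 0 ≤ ∫ x, |f₀ x| ∂μ := integral_nonneg fun x => abs_nonneg _
  have : 0 ≤ ∫ x, |f₁ x| ∂σ := integral_nonneg fun x => abs_nonneg _
  rw [Metric.tendsto_atTop]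
  intro η hη
  obtain ⟨δ, hδ, hδη⟩ : ∃ δ > 0, δ * (B + ∫ x, |f₀ x| ∂μ + ∫ x, |f₁ x| ∂σ + 1) = η / 2 :=
    ⟨η / 2 / (B + ∫ x, |f₀ x| ∂μ + ∫ x, |f₁ x| ∂σ + 1), by positivity,
      div_mul_cancel₀ _ (by positivity)⟩
  obtain ⟨g, hg, hgφ⟩ := exists_isTestFunction_near hΩ hφ hφ' hφΩ hδ
  have hclose {ν : Measure E} {k : E → ℝ} (hk : Integrable k ν) :=
    abs_integral_mul_sub_le hk hφ hφ' hg.contDiff.continuous hg.hasCompactSupport hgφ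
  obtain ⟨N, hN⟩ := Metric.tendsto_atTop.1 (htest g hg) (η / 2) (half_pos hη)
  refine ⟨N, fun n hn => ?_⟩
  have hn := hN n hn
  have hcloseₙ := (hclose (hf n)).trans (mul_le_mul_of_nonneg_left (hB n) hδ.le)
  have hclose₀ := hclose hf₀
  have hclose₁ := hclose hf₁
  rw [Real.dist_eq, abs_lt] at hn ⊢
  rw [abs_le] at hcloseₙ hclose₀ hclose₁
  constructor <;> linarith

end Density

lemma abs_le_mnorm (M : Mat2) (i j : Fin 2) : |M i j| ≤ mnorm M := by
  refine Real.abs_le_sqrt ?_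
  calc M i j ^ 2 ≤ ∑ j, M i j ^ 2 :=
        Finset.single_le_sum (f := fun j => M i j ^ 2) (fun _ _ => sq_nonneg _) (Finset.mem_univ j)
    _ ≤ ∑ i, ∑ j, M i j ^ 2 :=
        Finset.single_le_sum (f := fun i => ∑ j, M i j ^ 2)
          (fun _ _ => Finset.sum_nonneg fun _ _ => sq_nonneg _) (Finset.mem_univ i)

section BV

variable {Ω : Set V2} {u : V2 → V2} {gu : V2 → Mat2} {σ : Measure V2} {gs : V2 → Mat2}

lemma HasBVDerivOn.integrable_gs (H : HasBVDerivOn Ω u gu σ gs) (i j : Fin 2) :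
    Integrable (fun x => gs x i j) σ := by
  have : IsFiniteMeasure σ := ⟨lt_top_iff_ne_top.2 H.fin⟩
  refine Integrable.of_bound (H.meas_gs i j).aestronglyMeasurable 1 ?_
  filter_upwards [H.unit] with x hx using (abs_le_mnorm (gs x) i j).trans_eq hx

variable {un : ℕ → V2 → V2} {gn : ℕ → V2 → Mat2} {B : ℝ}

lemma l1ConvOn_of_ae_tendsto (hΩ : volume Ω ≠ ⊤) (hun : ∀ n, IntegrableOn (un n) Ω)
    (hu : IntegrableOn u Ω) (hB : ∀ n, ∀ᵐ x ∂volume.restrict Ω, ‖un n x‖ ≤ B)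
    (hlim : ∀ᵐ x ∂volume.restrict Ω, Tendsto (un · x) atTop (𝓝 (u x))) : L1ConvOn Ω un u := by
  have : IsFiniteMeasure (volume.restrict Ω) := isFiniteMeasure_restrict.2 hΩ
  have hvnorm₀ : vnorm 0 = 0 := by simp [vnorm]
  unfold L1ConvOn
  rw [← integral_zero V2 ℝ (μ := volume.restrict Ω)]
  refine tendsto_integral_of_dominated_convergence (fun _ => 2 * (B + B))
    (fun n => continuous_vnorm.comp_aestronglyMeasurable
      ((hun n).aestronglyMeasurable.sub hu.aestronglyMeasurable))
    (integrable_const _) (fun n => ?_) ?_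
  · filter_upwards [ae_all_iff.2 hB, hlim] with x hx hxlim
    have hux : ‖u x‖ ≤ B := le_of_tendsto hxlim.norm (.of_forall hx)
    rw [Real.norm_eq_abs, abs_of_nonneg (vnorm_nonneg _)]
    exact (vnorm_le_two_mul_norm _).trans (by linarith [norm_sub_le (un n x) (u x), hx n])
  · filter_upwards [hlim] with x hx
    rw [← hvnorm₀, ← sub_self (u x)]
    exact (continuous_vnorm.tendsto _).comp (hx.sub_const (u x))

lemma tendsto_integral_mul_grad (hΩ : volume Ω ≠ ⊤) (H : HasBVDerivOn Ω u gu σ gs)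
    (hun : ∀ n, IsSobolev11On Ω (un n) (gn n))
    (hB : ∀ n, ∀ᵐ x ∂volume.restrict Ω, ‖un n x‖ ≤ B)
    (hlim : ∀ᵐ x ∂volume.restrict Ω, Tendsto (un · x) atTop (𝓝 (u x))) (i j : Fin 2)
    {φ : V2 → ℝ} (hφ : IsTestFunction Ω φ) :
    Tendsto (fun n => ∫ x in Ω, φ x * gn n x i j) atTop
      (𝓝 ((∫ x in Ω, φ x * gu x i j) + ∫ x, φ x * gs x i j ∂σ)) := by
  have : IsFiniteMeasure (volume.restrict Ω) := isFiniteMeasure_restrict.2 hΩ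
  obtain ⟨c, hc⟩ := hφ.exists_bound_pd j
  have hibp (n : ℕ) : ∫ x in Ω, φ x * gn n x i j = -∫ x in Ω, un n x i * pd j φ x := by
    rw [(hun n).ibp φ hφ.contDiff hφ.hasCompactSupport hφ.tsupport_subset i j, neg_neg]
  have hibp_u : (∫ x in Ω, φ x * gu x i j) + ∫ x, φ x * gs x i j ∂σ =
      -∫ x in Ω, u x i * pd j φ x := by
    rw [H.ibp φ hφ.contDiff hφ.hasCompactSupport hφ.tsupport_subset i j]; ring
  simp_rw [hibp, hibp_u]
  refine (tendsto_integral_of_dominated_convergence (fun _ => B * c) (fun n => ?_)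
    (integrable_const _) (fun n => ?_) ?_).neg
  · exact ((continuous_apply i).comp_aestronglyMeasurable (hun n).int_u.aestronglyMeasurable).mul
      (hφ.continuous_pd j).aestronglyMeasurable
  · filter_upwards [hB n] with x hx
    rw [norm_mul]
    gcongr
    exacts [(norm_nonneg _).trans hx, (norm_le_pi_norm _ i).trans hx, hc x]
  · filter_upwards [hlim] with x hx using (tendsto_pi_nhds.1 hx i).mul_const _

theorem weakStarToBV_of_ae_tendsto (hΩ : IsOpen Ω) (hΩ' : volume Ω ≠ ⊤)
    (H : HasBVDerivOn Ω u gu σ gs) (hun : ∀ n, IsSobolev11On Ω (un n) (gn n))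
    (hB : ∀ n, ∀ᵐ x ∂volume.restrict Ω, ‖un n x‖ ≤ B)
    (hlim : ∀ᵐ x ∂volume.restrict Ω, Tendsto (un · x) atTop (𝓝 (u x))) {B' : ℝ}
    (hB' : ∀ n i j, ∫ x in Ω, |gn n x i j| ≤ B') : WeakStarToBV Ω un u := by
  refine ⟨gu, σ, gs, H, l1ConvOn_of_ae_tendsto hΩ' (fun n => (hun n).int_u) H.int_u hB hlim,
    fun hn hun' φ hφ hφ' hφΩ i j => ?_⟩
  refine tendsto_integral_mul_of_isTestFunction hΩ (fun n => (hun' n).int_gu i j)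
    (H.int_gu i j) (H.integrable_gs i j) (B := B') (fun n => ?_)
    (fun g hg => tendsto_integral_mul_grad hΩ' H hun' hB hlim i j hg) hφ hφ' hφΩ
  refine (integral_congr_ae ?_).trans_le (hB' n i j)
  filter_upwards [(hun' n).ae_eq hΩ (hun n) i j] with x hx
  rw [hx]

end BV

/-! ### Approximating a controlled profile -/

instance : IsFiniteMeasure (volume.restrict Rect) :=
  isFiniteMeasure_restrict.2 isBounded_Rect.measure_lt_top.ne

lemma volume_real_Rect : volume.real Rect = 2 := by
  have hpi : Rect = Set.pi univ ![Ioo (0 : ℝ) 1, Ioo (-1) 1] := by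
    ext x
    simp only [Set.mem_pi, mem_univ, forall_const, Fin.forall_fin_two]
    rfl
  rw [Measure.real, hpi, volume_pi_pi, Fin.prod_univ_two]
  norm_num

lemma abs_le_one_add_abs_dot_col {M : Mat2} (hunit : dot (M.col 0) (M.col 0) = 1)
    (harea : wedge (M.col 0) (M.col 1) = 1) (i j : Fin 2) :
    |M i j| ≤ 1 + |dot (M.col 0) (M.col 1)| := by
  have hle (i : Fin 2) : |M i 0| ≤ 1 :=
    (norm_le_pi_norm (M.col 0) i).trans (norm_le_one_of_dot_self hunit)
  set γ := dot (M.col 0) (M.col 1) with hγ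
  simp only [dot_eq, wedge, Matrix.col_apply] at hunit harea hγ
  have h₀ : M 0 1 = γ * M 0 0 - M 1 0 := by
    rw [hγ]; linear_combination -M 0 1 * hunit - M 1 0 * harea
  have h₁ : M 1 1 = γ * M 1 0 + M 0 0 := by
    rw [hγ]; linear_combination -M 1 1 * hunit + M 0 0 * harea
  have hmul (i : Fin 2) : |γ * M i 0| ≤ |γ| := by
    rw [abs_mul]; exact mul_le_of_le_one_right (abs_nonneg γ) (hle i)
  have hγ₀ := abs_nonneg γ
  fin_cases i <;> fin_cases j
  · exact (hle 0).trans (by linarith)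
  · exact (congrArg _ h₀).trans_le ((abs_sub _ _).trans (by linarith [hmul 0, hle 1]))
  · exact (hle 1).trans (by linarith)
  · exact (congrArg _ h₁).trans_le ((abs_add_le _ _).trans (by linarith [hmul 1, hle 0]))

lemma integral_abs_jac_le {lam ε : ℝ} {v : V2 → V2} {C : NNReal} (hv : LipschitzWith C v)
    (hadm : ∀ᵐ x ∂volume.restrict Rect, AdmissibleAt lam ε v x) {K : ℝ} (hK : 0 ≤ K)
    (hcost : ∫⁻ x in Rect, ENNReal.ofReal |shear v x| ≤ ENNReal.ofReal K) (i j : Fin 2) :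
    ∫ x in Rect, |jac v x i j| ≤ 2 + K := by
  have hshear : IntegrableOn (shear v) Rect :=
    (memAeps_of_ae_admissibleAt isBounded_Rect measurableSet_Rect hv hadm).int_γ
  have hcost' : ∫ x in Rect, |shear v x| ≤ K := by
    rw [integral_eq_lintegral_of_nonneg_ae (.of_forall fun x => abs_nonneg _)
      hshear.abs.aestronglyMeasurable]
    exact ENNReal.toReal_le_of_le_ofReal hK hcost
  calc ∫ x in Rect, |jac v x i j| ≤ ∫ x in Rect, (1 + |shear v x|) :=
        integral_mono_ae ((isSobolev11On_jac isBounded_Rect hv).int_gu i j).abs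
          ((integrable_const _).add hshear.abs)
          (hadm.mono fun x hx => abs_le_one_add_abs_dot_col hx.unit hx.area i j)
    _ = 2 + ∫ x in Rect, |shear v x| := by
        rw [integral_add (integrable_const _) hshear.abs, setIntegral_const, volume_real_Rect,
          smul_eq_mul, mul_one]
    _ ≤ 2 + K := by linarith

lemma ae_continuousAt_snd {f : ℝ → ℝ} (hf : Monotone f) : ∀ᵐ x : V2, ContinuousAt f (x 1) := by
  have hne : ∀ᵐ x : V2, ∀ t ∈ {t | ¬ContinuousAt f t}, x 1 ≠ t :=
    (ae_ball_iff hf.countable_not_continuousAt).2 fun t _ => ae_snd_ne t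
  filter_upwards [hne] with x hx
  by_contra h
  exact hx _ h rfl

/-- The retraction of `ℝ` onto `[-1 + η, 1 - η]`, used to extend profiles given on `(-1, 1)`. -/
def clamp (η t : ℝ) : ℝ := max (-1 + η) (min t (1 - η))

lemma monotone_clamp (η : ℝ) : Monotone (clamp η) := fun _ _ h =>
  max_le_max le_rfl (min_le_min h le_rfl)

lemma clamp_mem_Ioo {η : ℝ} (hη : 0 < η) (hη' : η < 1) (t : ℝ) : clamp η t ∈ Ioo (-1 : ℝ) 1 :=
  ⟨lt_max_of_lt_left (by linarith),
    max_lt (by linarith) ((min_le_right _ _).trans_lt (by linarith))⟩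

section Recovery

variable {a ψ : ℝ → V2} {Φ : ℝ → ℝ} {M C : ℝ} {ε η : ℕ → ℝ}

lemma tendsto_clamp (hη : Tendsto η atTop (𝓝 0)) {t : ℕ → ℝ} {t₀ : ℝ}
    (ht : Tendsto t atTop (𝓝 t₀)) (ht₀ : t₀ ∈ Ioo (-1 : ℝ) 1) :
    Tendsto (fun n => clamp (η n) (t n)) atTop (𝓝 t₀) := by
  have h := (hη.const_add (-1)).max (ht.min (hη.const_sub 1))
  rwa [sub_zero, add_zero, min_eq_left ht₀.2.le, max_eq_right ht₀.1.le] at h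

lemma eventually_clamp_eq (hη : Tendsto η atTop (𝓝 0)) {t : ℝ} (ht : t ∈ Ioo (-1 : ℝ) 1) :
    ∀ᶠ n in atTop, clamp (η n) t = t := by
  filter_upwards [hη.eventually_lt_const (show 0 < t + 1 by linarith [ht.1]),
    hη.eventually_lt_const (show 0 < 1 - t by linarith [ht.2])] with n h₁ h₂
  rw [clamp, min_eq_left (by linarith), max_eq_right (by linarith)]

lemma tendsto_of_mem_nearSet_clamp (hε : Tendsto ε atTop (𝓝 0)) (hη : Tendsto η atTop (𝓝 0))
    {v : ℕ → V2 → V2} {x : V2} (hx : x ∈ Rect) (hΦ : ContinuousAt Φ (x 1))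
    (hv : ∀ n, v n x ∈ nearSet (a ∘ clamp (η n)) (ψ ∘ clamp (η n)) (Φ ∘ clamp (η n)) C (ε n) x) :
    Tendsto (v · x) atTop (𝓝 (x 0 • a (x 1) + offset a ψ (x 1) (x 1))) := by
  have hradius : Tendsto (fun n => C * (Φ (clamp (η n) (x 1 + 2 * ε n)) -
      Φ (clamp (η n) (x 1 - 2 * ε n)))) atTop (𝓝 0) := by
    have hε₂ : Tendsto (fun n => 2 * ε n) atTop (𝓝 0) := by
      simpa only [mul_zero] using hε.const_mul 2
    have hright : Tendsto (fun n => x 1 + 2 * ε n) atTop (𝓝 (x 1)) := by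
      simpa only [add_zero] using hε₂.const_add (x 1)
    have hleft : Tendsto (fun n => x 1 - 2 * ε n) atTop (𝓝 (x 1)) := by
      simpa only [sub_zero] using hε₂.const_sub (x 1)
    have h := ((hΦ.tendsto.comp (tendsto_clamp hη hright hx.2)).sub
      (hΦ.tendsto.comp (tendsto_clamp hη hleft hx.2))).const_mul C
    rwa [sub_self, mul_zero] at h
  refine tendsto_iff_dist_tendsto_zero.2
    (squeeze_zero' (.of_forall fun _ => dist_nonneg) ?_ hradius)
  filter_upwards [eventually_clamp_eq hη hx.2] with n hn
  have h := hv n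
  simp only [nearSet, offset, Function.comp_apply, hn] at h
  exact h

lemma norm_le_of_mem_nearSet (H : ControlledOn univ a ψ Φ M) (hC : 0 ≤ C) {δ : ℝ} {x y : V2}
    (hx : x ∈ Rect) (hy : y ∈ nearSet a ψ Φ C δ x) : ‖y‖ ≤ C * M + (2 + M) := by
  have hosc := mul_le_mul_of_nonneg_left
    (H.osc_le (x 1 - 2 * δ) trivial (x 1 + 2 * δ) trivial) hC
  have hcenter := H.norm_smul_add_offset_le (x 1) hx
  linarith [norm_le_norm_add_norm_sub' y (x 0 • a (x 1) + offset a ψ (x 1) (x 1)),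
    mem_closedBall_iff_norm.1 hy]

lemma exists_admissible_seq_tendsto_of_controlledOn {lam : ℝ} (hlam : lam ∈ Ioo (0 : ℝ) 1)
    (hεpos : ∀ n, 0 < ε n) (hε : Tendsto ε atTop (𝓝 0))
    (H : ControlledOn (Ioo (-1) 1) a ψ Φ M) :
    ∃ (v : ℕ → V2 → V2) (K : ℕ → NNReal) (B B' : ℝ), (∀ n, LipschitzWith (K n) (v n)) ∧
      (∀ n, ∀ᵐ x ∂volume.restrict Rect, AdmissibleAt lam (ε n) (v n) x) ∧
      (∀ n, ∀ x ∈ Rect, ‖v n x‖ ≤ B) ∧ (∀ n i j, ∫ x in Rect, |jac (v n) x i j| ≤ B') ∧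
      ∀ᵐ x ∂volume.restrict Rect,
        Tendsto (v · x) atTop (𝓝 (x 0 • a (x 1) + offset a ψ (x 1) (x 1))) := by
  have hM : 0 ≤ M := (norm_nonneg _).trans (H.norm_le 0 (by norm_num))
  obtain ⟨E, hE⟩ := hε.bddAbove_range
  have hE' (n : ℕ) : ε n ≤ E := hE (mem_range_self n)
  obtain ⟨C, hC₀, hC⟩ := exists_admissible_near_controlledOn hlam ((hεpos 0).le.trans (hE' 0)) hM
  set η : ℕ → ℝ := fun n => min (ε n) (1 / 2)
  have hη : Tendsto η atTop (𝓝 0) := by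
    have h := hε.min (tendsto_const_nhds (x := (1 / 2 : ℝ)))
    rwa [min_eq_left (by norm_num)] at h
  have hclamp (n : ℕ) : MapsTo (clamp (η n)) univ (Ioo (-1) 1) := fun t _ =>
    clamp_mem_Ioo (lt_min (hεpos n) (by norm_num)) ((min_le_right _ _).trans_lt (by norm_num)) t
  have Hn (n : ℕ) := H.comp (monotone_clamp (η n)) (hclamp n)
  choose v hlip hadm hcost hnear using fun n => hC (ε n) ⟨hεpos n, hE' n⟩ _ _ _ (Hn n)
  choose K hK using hlip
  have hadm' (n : ℕ) := (ae_restrict_iff' measurableSet_Rect).2 (hadm n)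
  refine ⟨v, K, C * M + (2 + M), 2 + C * M, hK, hadm',
    fun n x hx => norm_le_of_mem_nearSet (Hn n) hC₀ hx (hnear n x hx),
    fun n => integral_abs_jac_le (hK n) (hadm' n) (mul_nonneg hC₀ hM) (hcost n), ?_⟩
  filter_upwards [ae_restrict_mem measurableSet_Rect,
    ae_restrict_of_ae (ae_continuousAt_snd H.mono)] with x hx hΦ
  exact tendsto_of_mem_nearSet_clamp hε hη hx hΦ fun n => hnear n x hx

lemma setIntegral_Rect_add_const {v : V2 → V2} (hv : IntegrableOn v Rect) (c : V2) :
    ∫ x in Rect, (v x + c) = (∫ x in Rect, v x) + (2 : ℝ) • c := by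
  rw [integral_add hv (integrable_const _), setIntegral_const, volume_real_Rect]

/-- The constant which, added to `v`, gives it the same mean over the rectangle as `u`. -/
def meanCorrection (u v : V2 → V2) : V2 :=
  (1 / 2 : ℝ) • ((∫ x in Rect, u x) - ∫ x in Rect, v x)

lemma setIntegral_add_meanCorrection (u : V2 → V2) {v : V2 → V2} (hv : IntegrableOn v Rect) :
    ∫ x in Rect, (v x + meanCorrection u v) = ∫ x in Rect, u x := by
  rw [setIntegral_Rect_add_const hv, meanCorrection, smul_smul]
  norm_num

lemma tendsto_meanCorrection {u : V2 → V2} {v : ℕ → V2 → V2} {B : ℝ}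
    (hv : ∀ n, IntegrableOn (v n) Rect) (hB : ∀ n, ∀ᵐ x ∂volume.restrict Rect, ‖v n x‖ ≤ B)
    (hlim : ∀ᵐ x ∂volume.restrict Rect, Tendsto (v · x) atTop (𝓝 (u x))) :
    Tendsto (fun n => meanCorrection u (v n)) atTop (𝓝 0) := by
  have h := ((tendsto_integral_of_dominated_convergence (fun _ => B)
    (fun n => (hv n).aestronglyMeasurable) (integrable_const _) hB hlim).const_sub
    (∫ x in Rect, u x)).const_smul (1 / 2 : ℝ)
  rwa [sub_self, smul_zero] at h

theorem exists_memAeps_weakStarToBV_of_controlledOn {lam : ℝ} (hlam : lam ∈ Ioo (0 : ℝ) 1)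
    (hεpos : ∀ n, 0 < ε n) (hε : Tendsto ε atTop (𝓝 0)) {u : V2 → V2} {gu : V2 → Mat2}
    {σ : Measure V2} {gs : V2 → Mat2} (Hu : HasBVDerivOn Rect u gu σ gs)
    (H : ControlledOn (Ioo (-1) 1) a ψ Φ M)
    (hu : ∀ᵐ x ∂volume.restrict Rect, u x = x 0 • a (x 1) + offset a ψ (x 1) (x 1)) :
    ∃ un : ℕ → V2 → V2, ∃ Rn : ℕ → V2 → Mat2, ∃ γn : ℕ → V2 → ℝ,
      (∀ n, MemAeps Rect lam (ε n) (un n) (Rn n) (γn n)) ∧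
      (∀ n, (∫ x in Rect, un n x) = ∫ x in Rect, u x) ∧
      WeakStarToBV Rect un u := by
  obtain ⟨v, K, B, B', hlip, hadm, hB, hB', hlim⟩ :=
    exists_admissible_seq_tendsto_of_controlledOn hlam hεpos hε H
  have hvint (n : ℕ) : IntegrableOn (v n) Rect := (isSobolev11On_jac isBounded_Rect (hlip n)).int_u
  have hvB (n : ℕ) : ∀ᵐ x ∂volume.restrict Rect, ‖v n x‖ ≤ B :=
    (ae_restrict_mem measurableSet_Rect).mono (hB n)
  have hlim_u : ∀ᵐ x ∂volume.restrict Rect, Tendsto (v · x) atTop (𝓝 (u x)) := by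
    filter_upwards [hlim, hu] with x hx hux using hux ▸ hx
  set c : ℕ → V2 := fun n => meanCorrection u (v n)
  have hc : Tendsto c atTop (𝓝 0) := tendsto_meanCorrection hvint hvB hlim_u
  obtain ⟨b, hb⟩ := hc.norm.bddAbove_range
  have hlip_c (n : ℕ) : LipschitzWith (K n) (fun x => v n x + c n) := by
    simpa only [add_zero] using (hlip n).add (LipschitzWith.const (c n))
  have hadm_c (n : ℕ) : ∀ᵐ x ∂volume.restrict Rect,
      AdmissibleAt lam (ε n) (fun y => v n y + c n) x :=
    (hadm n).mono fun x hx => hx.congr (jac_add_const _ _ _).symm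
  refine ⟨fun n x => v n x + c n, _, _, fun n => memAeps_of_ae_admissibleAt isBounded_Rect
    measurableSet_Rect (hlip_c n) (hadm_c n),
    fun n => setIntegral_add_meanCorrection u (hvint n), ?_⟩
  refine weakStarToBV_of_ae_tendsto isOpen_Rect isBounded_Rect.measure_lt_top.ne Hu
    (fun n => isSobolev11On_jac isBounded_Rect (hlip_c n)) (B := B + b) (fun n => ?_) ?_ (B' := B')
    fun n i j => ?_
  · filter_upwards [hvB n] with x hx using norm_add_le_of_le hx (hb (mem_range_self n))
  · filter_upwards [hlim_u] with x hx
    simpa only [add_zero] using hx.add hc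
  · simpa only [jac_add_const] using hB' n i j

end Recovery

/-! ### Right-continuous representatives -/

/-- `f` is continuous from the right at `t` and has a limit from the left there. -/
structure IsCadlagAt {E : Type*} [TopologicalSpace E] (f : ℝ → E) (t : ℝ) : Prop where
  right : Tendsto f (𝓝[>] t) (𝓝 (f t))
  left : ∃ l, Tendsto f (𝓝[<] t) (𝓝 l)

section Cadlag

variable {E : Type*} [NormedAddCommGroup E] {f : ℝ → E} {p q t : ℝ}

lemma exists_tendsto_nhdsLT [CompleteSpace E] (hf : BoundedVariationOn f (Ioo p q))
    (ht : t ∈ Ioo p q) : ∃ l, Tendsto f (𝓝[<] t) (𝓝 l) := by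
  obtain ⟨l, hl⟩ := hf.exists_tendsto_left t
  rw [inter_comm, nhdsWithin_inter_of_mem'
    (mem_nhdsWithin_of_mem_nhds (Ioo_mem_nhds ht.1 ht.2))] at hl
  exact ⟨l, hl⟩

lemma exists_tendsto_nhdsGT [CompleteSpace E] (hf : BoundedVariationOn f (Ioo p q))
    (ht : t ∈ Ioo p q) : ∃ l, Tendsto f (𝓝[>] t) (𝓝 l) := by
  obtain ⟨l, hl⟩ := hf.exists_tendsto_right t
  rw [inter_comm, nhdsWithin_inter_of_mem'
    (mem_nhdsWithin_of_mem_nhds (Ioo_mem_nhds ht.1 ht.2))] at hl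
  exact ⟨l, hl⟩

lemma tendsto_rightLim_of_boundedVariationOn [CompleteSpace E]
    (hf : BoundedVariationOn f (Ioo p q)) (ht : t ∈ Ioo p q) :
    Tendsto f (𝓝[>] t) (𝓝 (Function.rightLim f t)) :=
  tendsto_rightLim_of_tendsto (exists_tendsto_nhdsGT hf ht)

lemma boundedVariationOn_rightLim (hf : BoundedVariationOn f (Ioo p q)) :
    BoundedVariationOn (Function.rightLim f) (Ioo p q) :=
  ((eVariationOn.eVariationOn_rightLim_le isOpen_Ioo).trans_lt hf.lt_top).ne

lemma isCadlagAt_rightLim [CompleteSpace E] (hf : BoundedVariationOn f (Ioo p q))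
    (ht : t ∈ Ioo p q) : IsCadlagAt (Function.rightLim f) t where
  right := (continuousWithinAt_rightLim_Ici
    (tendsto_rightLim_of_boundedVariationOn hf ht)).mono Ioi_subset_Ici_self
  left := exists_tendsto_nhdsLT (boundedVariationOn_rightLim hf) ht

lemma rightLim_mem_of_isClosed [CompleteSpace E] {K : Set E} (hK : IsClosed K)
    (hf : BoundedVariationOn f (Ioo p q)) (hfK : ∀ s ∈ Ioo p q, f s ∈ K) (ht : t ∈ Ioo p q) :
    Function.rightLim f t ∈ K :=
  hK.mem_of_tendsto (tendsto_rightLim_of_boundedVariationOn hf ht)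
    (mem_of_superset (mem_nhdsWithin_of_mem_nhds (Ioo_mem_nhds ht.1 ht.2)) hfK)

lemma ae_rightLim_eq [NormedSpace ℝ E] [FiniteDimensional ℝ E]
    (hf : BoundedVariationOn f (Ioo p q)) :
    ∀ᵐ t : ℝ, t ∈ Ioo p q → Function.rightLim f t = f t := by
  filter_upwards [hf.locallyBoundedVariationOn.ae_differentiableWithinAt_of_mem] with t hdiff ht
  exact ((hdiff ht).differentiableAt
    (Ioo_mem_nhds ht.1 ht.2)).continuousAt.continuousWithinAt.rightLim_eq

lemma exists_norm_le_of_boundedVariationOn (hf : BoundedVariationOn f (Ioo p q)) :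
    ∃ C, ∀ t ∈ Ioo p q, ‖f t‖ ≤ C := by
  obtain hpq | ⟨r, hr⟩ := (Ioo p q).eq_empty_or_nonempty
  · exact ⟨0, fun t ht => (hpq.subset ht).elim⟩
  · refine ⟨‖f r‖ + (eVariationOn f (Ioo p q)).toReal, fun t ht => ?_⟩
    linarith [hf.dist_le ht hr, dist_eq_norm (f t) (f r), norm_sub_norm_le (f t) (f r)]

end Cadlag

lemma IsCadlagAt.offset {a ψ : ℝ → V2} {t : ℝ} (ha : IsCadlagAt a t) (hψ : IsCadlagAt ψ t) :
    IsCadlagAt (fun s => offset a ψ s s) t where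
  right := ((tendsto_nhdsWithin_of_tendsto_nhds tendsto_id).smul
    ((continuous_perp.tendsto _).comp ha.right)).add hψ.right
  left := by
    obtain ⟨l, hl⟩ := ha.left
    obtain ⟨m, hm⟩ := hψ.left
    exact ⟨_, ((tendsto_nhdsWithin_of_tendsto_nhds tendsto_id).smul
      ((continuous_perp.tendsto l).comp hl)).add hm⟩

lemma ae_apply {P : ℝ → Prop} (i : Fin 2) (hP : ∀ᵐ t, P t) : ∀ᵐ x : V2, P (x i) :=
  (Measure.quasiMeasurePreserving_eval (fun _ : Fin 2 => (volume : Measure ℝ)) i).ae hP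

section Profile

variable {R : ℝ → Mat2} {ψ : ℝ → V2} {p q : ℝ}

lemma eq_rotOfCol_of_mem_SO2 {M : Mat2} (hM : M ∈ SO2) : M = rotOfCol (M.col 0) := by
  obtain ⟨horth, hdet⟩ := hM
  have h00 := congrFun (congrFun horth 0) 0
  have h11 := congrFun (congrFun horth 1) 1
  simp only [Matrix.mul_apply, Fin.sum_univ_two, Matrix.transpose_apply, Matrix.one_apply_eq]
    at h00 h11
  rw [Matrix.det_fin_two] at hdet
  have hsq : (M 0 0 - M 1 1) ^ 2 + (M 0 1 + M 1 0) ^ 2 = 0 := by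
    linear_combination h00 + h11 - 2 * hdet
  have hdiag : M 1 1 = M 0 0 := by nlinarith [hsq, sq_nonneg (M 0 1 + M 1 0)]
  have hskew : M 0 1 = -M 1 0 := by nlinarith [hsq, sq_nonneg (M 0 0 - M 1 1)]
  ext i j
  fin_cases i <;> fin_cases j <;> simp [rotOfCol, hdiag, hskew]

lemma dot_col_zero_of_mem_SO2 {M : Mat2} (hM : M ∈ SO2) : dot (M.col 0) (M.col 0) = 1 := by
  have hdet := hM.2
  rw [eq_rotOfCol_of_mem_SO2 hM, Matrix.det_fin_two] at hdet
  rw [dot_eq]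
  simpa [rotOfCol] using hdet

lemma rotOfCol_mulVec (a x : V2) : (rotOfCol a).mulVec x = x 0 • a + x 1 • perp a := by
  ext i
  fin_cases i <;> simp [rotOfCol, Matrix.mulVec, dotProduct, Fin.sum_univ_two] <;> ring

lemma boundedVariationOn_col (hR : BVm R (Ioo p q)) (j : Fin 2) :
    BoundedVariationOn (fun t => (R t).col j) (Ioo p q) := by
  have hsel : LipschitzWith 1 (fun (M : EuclideanSpace ℝ (Fin 2 × Fin 2)) (i : Fin 2) =>
      M (i, j)) :=
    LipschitzWith.of_dist_le_mul fun M N => by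
      rw [NNReal.coe_one, one_mul, dist_pi_le_iff dist_nonneg]
      exact fun i => PiLp.dist_apply_le M N (i, j)
  have hcol := hsel.comp_boundedVariationOn hR
  exact hcol

lemma boundedVariationOn_of_bvv (hψ : BVv ψ (Ioo p q)) : BoundedVariationOn ψ (Ioo p q) :=
  (PiLp.lipschitzWith_ofLp 2 fun _ : Fin 2 => ℝ).comp_boundedVariationOn hψ

lemma exists_cadlag_profile {u : V2 → V2} (hSO2 : ∀ t ∈ Ioo (-1 : ℝ) 1, R t ∈ SO2)
    (hR : BVm R (Ioo (-1) 1)) (hψ : BVv ψ (Ioo (-1) 1))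
    (hu : ∀ᵐ x ∂volume.restrict Rect, u x = (R (x 1)).mulVec x + ψ (x 1)) :
    ∃ a ψ' : ℝ → V2, (∀ t ∈ Ioo (-1 : ℝ) 1, IsCadlagAt a t) ∧
      (∀ t ∈ Ioo (-1 : ℝ) 1, IsCadlagAt ψ' t) ∧ (∀ t ∈ Ioo (-1 : ℝ) 1, dot (a t) (a t) = 1) ∧
      (∃ C, ∀ t ∈ Ioo (-1 : ℝ) 1, ‖ψ' t‖ ≤ C) ∧
      ∀ᵐ x ∂volume.restrict Rect, u x = x 0 • a (x 1) + offset a ψ' (x 1) (x 1) := by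
  have hbv_a := boundedVariationOn_col hR 0
  have hbv_ψ := boundedVariationOn_of_bvv hψ
  have hclosed : IsClosed {v : V2 | dot v v = 1} :=
    isClosed_eq (by unfold dot; fun_prop) continuous_const
  refine ⟨_, _, fun t => isCadlagAt_rightLim hbv_a, fun t => isCadlagAt_rightLim hbv_ψ,
    fun t => rightLim_mem_of_isClosed hclosed hbv_a fun s hs => dot_col_zero_of_mem_SO2 (hSO2 s hs),
    exists_norm_le_of_boundedVariationOn (boundedVariationOn_rightLim hbv_ψ), ?_⟩
  filter_upwards [hu, ae_restrict_mem measurableSet_Rect,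
    ae_restrict_of_ae (ae_apply 1 (ae_rightLim_eq hbv_a)),
    ae_restrict_of_ae (ae_apply 1 (ae_rightLim_eq hbv_ψ))] with x hux hx ha hψ'
  rw [hux, ha hx.2, _root_.offset, ha hx.2, hψ' hx.2, ← add_assoc, ← rotOfCol_mulVec,
    ← eq_rotOfCol_of_mem_SO2 (hSO2 _ hx.2)]

end Profile

/-! ### Jump points -/

section EssentialLimit

variable {u : V2 → V2} {x L ν : V2} {A : Set V2}

lemma eventually_ae_norm_sub_le (hu : Tendsto u (𝓝[A] x ⊓ ae volume) (𝓝 L)) {δ : ℝ}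
    (hδ : 0 < δ) : ∀ᶠ r in 𝓝[>] (0 : ℝ), ∀ᵐ z, z ∈ Metric.ball x r ∩ A → ‖u z - L‖ ≤ δ := by
  obtain ⟨t, ht, t', ht', htt'⟩ := mem_inf_iff.1 (hu (Metric.closedBall_mem_nhds L hδ))
  obtain ⟨r₀, hr₀, hball⟩ := Metric.mem_nhdsWithin_iff.1 ht
  filter_upwards [Ioo_mem_nhdsGT hr₀] with r hr
  filter_upwards [ht'] with z hz' hz
  have hmem : u z ∈ Metric.closedBall L δ :=
    htt'.ge ⟨hball ⟨Metric.ball_subset_ball hr.2.le hz.1, hz.2⟩, hz'⟩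
  rwa [mem_closedBall_iff_norm] at hmem

lemma tendsto_average_vnorm_sub (hA : MeasurableSet A)
    (hu : Tendsto u (𝓝[A] x ⊓ ae volume) (𝓝 L)) :
    Tendsto (fun r : ℝ => (∫⁻ z in Metric.ball x r ∩ A, ENNReal.ofReal (vnorm (u z - L))) /
      volume (Metric.ball x r)) (𝓝[>] 0) (𝓝 0) := by
  refine ENNReal.tendsto_nhds_zero.2 fun e he => ?_
  obtain ⟨δ, hδ, hδe⟩ := ENNReal.lt_iff_exists_nnreal_btwn.1 he
  have hδpos : (0 : ℝ) < δ / 2 := half_pos (by exact_mod_cast hδ)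
  filter_upwards [eventually_ae_norm_sub_le hu hδpos] with r hr
  refine ENNReal.div_le_of_le_mul ?_
  calc ∫⁻ z in Metric.ball x r ∩ A, ENNReal.ofReal (vnorm (u z - L))
      ≤ ∫⁻ _ in Metric.ball x r ∩ A, δ := by
        refine lintegral_mono_ae ((ae_restrict_iff' (measurableSet_ball.inter hA)).2 ?_)
        filter_upwards [hr] with z hz hmem
        refine (ENNReal.ofReal_le_ofReal ?_).trans_eq ENNReal.ofReal_coe_nnreal
        linarith [vnorm_le_two_mul_norm (u z - L), hz hmem]
    _ = δ * volume (Metric.ball x r ∩ A) := setLIntegral_const _ _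
    _ ≤ e * volume (Metric.ball x r) := mul_le_mul' hδe.le (measure_mono inter_subset_left)

lemma dot_neg_left (a b : V2) : dot (-a) b = -dot a b := by
  simp only [dot_eq, Pi.neg_apply]; ring

lemma dot_neg_right (a b : V2) : dot a (-b) = -dot a b := by
  simp only [dot_eq, Pi.neg_apply]; ring

/-- Reflection in `x` exchanges the two halves of the ball. -/
lemma volume_ball_le_two_mul_halfBall (hν : ν ≠ 0) (x : V2) (r : ℝ) :
    volume (Metric.ball x r) ≤ 2 * volume (Metric.ball x r ∩ {z | 0 < dot (z - x) ν}) := by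
  set H : Set V2 := Metric.ball x r ∩ {z | 0 < dot (z - x) ν}
  set H' : Set V2 := Metric.ball x r ∩ {z | dot (z - x) ν < 0}
  have hdot : Measurable fun z : V2 => dot (z - x) ν := by unfold dot; fun_prop
  have hH : MeasurableSet H := measurableSet_ball.inter (measurableSet_lt measurable_const hdot)
  have hreflect : (fun z => x + x - z) ⁻¹' H = H' := by
    ext z
    have hsub : x + x - z - x = -(z - x) := by abel
    simp only [H, H', mem_preimage, mem_inter_iff, mem_ball_iff_norm, mem_ofPred_eq, hsub,
      norm_neg, dot_neg_left, Left.neg_pos_iff]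
  have hvol : volume H' = volume H := hreflect ▸
    (Measure.measurePreserving_sub_left volume (x + x)).measure_preimage hH.nullMeasurableSet
  have hline : ∀ᵐ z : V2, dot (z - x) ν ≠ 0 := by
    have hν' : ν 0 ≠ 0 ∨ ν 1 ≠ 0 := by
      by_contra! h
      exact hν (funext (Fin.forall_fin_two.2 h))
    filter_upwards [ae_ne_of_line (dot x ν) hν'] with z hz h
    refine hz ?_
    simp only [dot_eq, Pi.sub_apply] at h ⊢
    linarith
  have hcover : Metric.ball x r ≤ᵐ[volume] (H ∪ H' : Set V2) := by
    filter_upwards [hline] with z hz hzb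
    exact hz.lt_or_gt.elim (fun h => Or.inr ⟨hzb, h⟩) fun h => Or.inl ⟨hzb, h⟩
  calc volume (Metric.ball x r) ≤ volume (H ∪ H') := measure_mono_ae hcover
    _ ≤ volume H + volume H' := measure_union_le H H'
    _ = 2 * volume H := by rw [hvol, two_mul]

lemma eq_of_tendsto_average_halfBall (hν : ν ≠ 0) {b : V2}
    (hu : Tendsto u (𝓝 x ⊓ ae volume) (𝓝 L))
    (hb : Tendsto (fun r : ℝ => (∫⁻ z in Metric.ball x r ∩ {z | 0 < dot (z - x) ν},
      ENNReal.ofReal (vnorm (u z - b))) / volume (Metric.ball x r)) (𝓝[>] 0) (𝓝 0)) : b = L := by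
  by_contra hne
  set c := ‖L - b‖ / 2 with hc
  have hcpos : 0 < c := half_pos (norm_pos_iff.2 (sub_ne_zero.2 (Ne.symm hne)))
  rw [← nhdsWithin_univ] at hu
  have hsmall : 0 < ENNReal.ofReal (c / 4) := ENNReal.ofReal_pos.2 (by linarith)
  obtain ⟨r, hr_avg, hr, hrpos : 0 < r⟩ := ((ENNReal.tendsto_nhds_zero.1 hb _ hsmall).and
    ((eventually_ae_norm_sub_le hu hcpos).and self_mem_nhdsWithin)).exists
  set H : Set V2 := Metric.ball x r ∩ {z | 0 < dot (z - x) ν}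
  have hball : volume (Metric.ball x r) ≠ 0 := (Metric.measure_ball_pos _ x hrpos).ne'
  have hball' : volume (Metric.ball x r) ≠ ⊤ := measure_ball_lt_top.ne
  have hfar : ∀ᵐ z, z ∈ H → c ≤ vnorm (u z - b) := by
    filter_upwards [hr] with z hz hzH
    have hnear := hz ⟨hzH.1, mem_univ z⟩
    linarith [norm_sub_le_norm_sub_add_norm_sub L (u z) b, norm_sub_rev L (u z),
      norm_le_vnorm (u z - b)]
  have hdot : Measurable fun z : V2 => dot (z - x) ν := by unfold dot; fun_prop
  have hH : MeasurableSet H := measurableSet_ball.inter (measurableSet_lt measurable_const hdot)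
  have hlower : ENNReal.ofReal c * volume H ≤ ∫⁻ z in H, ENNReal.ofReal (vnorm (u z - b)) := by
    rw [← setLIntegral_const]
    refine lintegral_mono_ae ((ae_restrict_iff' hH).2 ?_)
    filter_upwards [hfar] with z hz hzH using ENNReal.ofReal_le_ofReal (hz hzH)
  have hupper := (ENNReal.div_le_iff hball hball').1 hr_avg
  have hle : ENNReal.ofReal c * volume (Metric.ball x r) ≤
      ENNReal.ofReal (c / 2) * volume (Metric.ball x r) := by
    calc ENNReal.ofReal c * volume (Metric.ball x r)
        ≤ ENNReal.ofReal c * (2 * volume H) := by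
          gcongr; exact volume_ball_le_two_mul_halfBall hν x r
      _ = 2 * (ENNReal.ofReal c * volume H) := mul_left_comm _ _ _
      _ ≤ 2 * (ENNReal.ofReal (c / 4) * volume (Metric.ball x r)) :=
          mul_le_mul' le_rfl (hlower.trans hupper)
      _ = ENNReal.ofReal (c / 2) * volume (Metric.ball x r) := by
          rw [← mul_assoc, ← ENNReal.ofReal_ofNat 2, ← ENNReal.ofReal_mul zero_le_two]
          ring_nf
  have := (ENNReal.ofReal_le_ofReal_iff (half_pos hcpos).le).1
    ((ENNReal.mul_le_mul_iff_left hball hball').1 hle)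
  linarith

end EssentialLimit

section JumpPt

variable {u : V2 → V2} {a w : ℝ → V2} {x : V2}

lemma tendsto_of_ae_eq_affine
    (hu : ∀ᵐ x ∂volume.restrict Rect, u x = x 0 • a (x 1) + w (x 1)) (hx : x ∈ Rect) {S : Set ℝ}
    {α β : V2} (ha : Tendsto a (𝓝[S] x 1) (𝓝 α)) (hw : Tendsto w (𝓝[S] x 1) (𝓝 β)) :
    Tendsto u (𝓝[{z | z 1 ∈ S}] x ⊓ ae volume) (𝓝 (x 0 • α + β)) := by
  have hcoord : Tendsto (fun z : V2 => z 1) (𝓝[{z | z 1 ∈ S}] x) (𝓝[S] x 1) :=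
    (continuous_apply 1).continuousWithinAt.tendsto_nhdsWithin fun _ hz => hz
  have hlim : Tendsto (fun z : V2 => z 0 • a (z 1) + w (z 1)) (𝓝[{z | z 1 ∈ S}] x)
      (𝓝 (x 0 • α + β)) :=
    ((continuous_apply 0).continuousWithinAt.tendsto.smul (ha.comp hcoord)).add (hw.comp hcoord)
  refine (hlim.mono_left inf_le_left).congr' ?_
  have hrect : ∀ᶠ z in 𝓝[{z | z 1 ∈ S}] x ⊓ ae volume, z ∈ Rect :=
    inf_le_left (α := Filter V2) (mem_nhdsWithin_of_mem_nhds (isOpen_Rect.mem_nhds hx))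
  have hae := (ae_restrict_iff' measurableSet_Rect).1 hu
  filter_upwards [hrect, inf_le_right (α := Filter V2) hae] with z hz huz using (huz hz).symm

lemma not_jumpPt_of_continuousAt
    (hu : ∀ᵐ x ∂volume.restrict Rect, u x = x 0 • a (x 1) + w (x 1)) (hx : x ∈ Rect)
    (ha : ContinuousAt a (x 1)) (hw : ContinuousAt w (x 1)) : ¬ JumpPt u x := by
  rintro ⟨b, b', ν, hne, hν, hlim, hlim'⟩
  have hν₀ : ν ≠ 0 := by
    rintro rfl
    simp [vnorm] at hν
  rw [← continuousWithinAt_univ] at ha hw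
  have hess := tendsto_of_ae_eq_affine hu hx ha hw
  simp only [mem_univ, ofPred_true, nhdsWithin_univ] at hess
  refine hne ((eq_of_tendsto_average_halfBall hν₀ hess hlim).trans
    (eq_of_tendsto_average_halfBall (neg_ne_zero.2 hν₀) hess ?_).symm)
  simpa only [dot_neg_right, Left.neg_pos_iff] using! hlim'

lemma jumpPt_of_ne (hu : ∀ᵐ x ∂volume.restrict Rect, u x = x 0 • a (x 1) + w (x 1))
    (hx : x ∈ Rect) {α α' β β' : V2} (ha : Tendsto a (𝓝[>] x 1) (𝓝 α))
    (hw : Tendsto w (𝓝[>] x 1) (𝓝 β)) (ha' : Tendsto a (𝓝[<] x 1) (𝓝 α'))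
    (hw' : Tendsto w (𝓝[<] x 1) (𝓝 β')) (hne : x 0 • α + β ≠ x 0 • α' + β') : JumpPt u x := by
  have habove : {z : V2 | z 1 ∈ Ioi (x 1)} = {z | 0 < dot (z - x) e2} := by
    ext z; simp [dot_eq, e2]
  have hbelow : {z : V2 | z 1 ∈ Iio (x 1)} = {z | dot (z - x) e2 < 0} := by
    ext z; simp [dot_eq, e2]
  have hlim := tendsto_of_ae_eq_affine hu hx ha hw
  have hlim' := tendsto_of_ae_eq_affine hu hx ha' hw'
  rw [habove] at hlim
  rw [hbelow] at hlim'
  have hdot : Measurable fun z : V2 => dot (z - x) e2 := by unfold dot; fun_prop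
  exact ⟨_, _, e2, hne, by simp [vnorm, e2],
    tendsto_average_vnorm_sub (measurableSet_lt measurable_const hdot) hlim,
    tendsto_average_vnorm_sub (measurableSet_lt hdot measurable_const) hlim'⟩

end JumpPt

section JumpTimes

variable {u : V2 → V2} {a w : ℝ → V2}

/-- The heights in `(-1, 1)` at which one of the profiles `a`, `w` is discontinuous. -/
def jumpTimes (a w : ℝ → V2) : Set ℝ :=
  {t ∈ Ioo (-1 : ℝ) 1 | ¬ (ContinuousAt a t ∧ ContinuousAt w t)}

/-- The horizontal slice of the rectangle at height `t`, with the point of abscissa `c` removed. -/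
def puncturedSlice (c t : ℝ) : Set V2 := {x | x 0 ∈ Ioo (0 : ℝ) 1 \ {c} ∧ x 1 = t}

lemma measurableSet_puncturedSlice (c t : ℝ) : MeasurableSet (puncturedSlice c t) :=
  (measurable_pi_apply 0 (measurableSet_Ioo.diff (measurableSet_singleton c))).inter
    (measurableSet_eq_fun (measurable_pi_apply 1) measurable_const)

lemma one_le_hausdorffMeasure_puncturedSlice (c t : ℝ) :
    1 ≤ Measure.hausdorffMeasure (1 : ℝ) (puncturedSlice c t) := by
  have himage : Function.eval 0 '' puncturedSlice c t = Ioo (0 : ℝ) 1 \ {c} := by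
    ext s
    exact ⟨by rintro ⟨x, hx, rfl⟩; exact hx.1, fun hs => ⟨![s, t], ⟨hs, rfl⟩, rfl⟩⟩
  have hproj := (LipschitzWith.eval (α := fun _ : Fin 2 => ℝ) 0).hausdorffMeasure_image_le
    zero_le_one (puncturedSlice c t)
  rw [himage, hausdorffMeasure_real, measure_sdiff_null Real.volume_singleton,
    Real.volume_Ioo] at hproj
  simpa using hproj

lemma exists_forall_ne_of_ne {α α' β β' : V2} (h : ¬ (α = α' ∧ β = β')) :
    ∃ c : ℝ, ∀ s : ℝ, s ≠ c → s • α + β ≠ s • α' + β' := by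
  by_contra! hcon
  obtain ⟨s, -, hs⟩ := hcon 0
  obtain ⟨s', hne, hs'⟩ := hcon s
  have hα : (s' - s) • (α - α') = 0 := by
    calc (s' - s) • (α - α')
        = (s' • α + β - (s' • α' + β')) - (s • α + β - (s • α' + β')) := by module
      _ = 0 := by rw [hs, hs', sub_self, sub_self, sub_self]
  have hα' : α = α' := sub_eq_zero.1 ((smul_eq_zero.1 hα).resolve_left (sub_ne_zero.2 hne))
  exact h ⟨hα', add_left_cancel (hα' ▸ hs)⟩

lemma IsCadlagAt.continuousAt_of_left {f : ℝ → V2} {t : ℝ} (hf : IsCadlagAt f t)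
    (hleft : Tendsto f (𝓝[<] t) (𝓝 (f t))) : ContinuousAt f t :=
  continuousAt_iff_continuous_left'_right'.2 ⟨hleft, hf.right⟩

lemma exists_puncturedSlice_subset_jumpSet
    (hu : ∀ᵐ x ∂volume.restrict Rect, u x = x 0 • a (x 1) + w (x 1)) {t : ℝ}
    (ht : t ∈ jumpTimes a w) (ha : IsCadlagAt a t) (hw : IsCadlagAt w t) :
    ∃ c, puncturedSlice c t ⊆ jumpSet Rect u := by
  obtain ⟨α, hα⟩ := ha.left
  obtain ⟨β, hβ⟩ := hw.left
  have hjump : ¬ (a t = α ∧ w t = β) := by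
    rintro ⟨rfl, rfl⟩
    exact ht.2 ⟨ha.continuousAt_of_left hα, hw.continuousAt_of_left hβ⟩
  obtain ⟨c, hc⟩ := exists_forall_ne_of_ne hjump
  refine ⟨c, ?_⟩
  rintro x ⟨hx0, rfl⟩
  have hx : x ∈ Rect := ⟨hx0.1, ht.1⟩
  exact ⟨hx, jumpPt_of_ne hu hx ha.right hw.right hα hβ (hc _ hx0.2)⟩

lemma finite_jumpTimes (hu : ∀ᵐ x ∂volume.restrict Rect, u x = x 0 • a (x 1) + w (x 1))
    (ha : ∀ t ∈ Ioo (-1 : ℝ) 1, IsCadlagAt a t) (hw : ∀ t ∈ Ioo (-1 : ℝ) 1, IsCadlagAt w t)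
    (hJ : Measure.hausdorffMeasure (1 : ℝ) (jumpSet Rect u) ≠ ⊤) : (jumpTimes a w).Finite := by
  have hslice (t : ℝ) (ht : t ∈ jumpTimes a w) : ∃ c, puncturedSlice c t ⊆ jumpSet Rect u :=
    exists_puncturedSlice_subset_jumpSet hu ht (ha t ht.1) (hw t ht.1)
  choose! c hc using hslice
  by_contra hinf
  obtain ⟨n, hn⟩ := ENNReal.exists_nat_gt hJ
  obtain ⟨F, hF, rfl⟩ := Set.Infinite.exists_subset_card_eq hinf n
  refine hn.not_ge ?_
  have hdisj : (F : Set ℝ).PairwiseDisjoint fun t => puncturedSlice (c t) t :=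
    fun s _ t _ hst => Set.disjoint_left.2 fun x hx hx' => hst (hx.2.symm.trans hx'.2)
  calc (F.card : ℝ≥0∞) = ∑ t ∈ F, 1 := by simp
    _ ≤ ∑ t ∈ F, Measure.hausdorffMeasure (1 : ℝ) (puncturedSlice (c t) t) :=
        Finset.sum_le_sum fun t _ => one_le_hausdorffMeasure_puncturedSlice (c t) t
    _ = Measure.hausdorffMeasure (1 : ℝ) (⋃ t ∈ F, puncturedSlice (c t) t) :=
        (measure_biUnion_finset hdisj fun t _ => measurableSet_puncturedSlice (c t) t).symm
    _ ≤ Measure.hausdorffMeasure (1 : ℝ) (jumpSet Rect u) :=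
        measure_mono (iUnion₂_subset fun t ht => hc t (hF ht))

end JumpTimes

/-! ### Lipschitz bounds on jump-free strips -/

/-- A smooth transition from `0` on `(-∞, s]` to `1` on `[s + h, ∞)`, for `h > 0`; its derivative
is a mollifier supported on the right of `s`. -/
def smoothStep (s h x : ℝ) : ℝ := Real.smoothTransition ((x - s) / h)

section SmoothStep

variable {s h x : ℝ}

lemma contDiff_smoothStep (s h : ℝ) : ContDiff ℝ (⊤ : ℕ∞) (smoothStep s h) :=
  Real.smoothTransition.contDiff.comp (by fun_prop)

lemma differentiable_smoothStep (s h : ℝ) : Differentiable ℝ (smoothStep s h) :=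
  (contDiff_smoothStep s h).differentiable (by simp)

lemma contDiff_deriv_smoothStep (s h : ℝ) : ContDiff ℝ (⊤ : ℕ∞) (deriv (smoothStep s h)) :=
  (contDiff_infty_iff_deriv.1 (contDiff_smoothStep s h)).2

lemma monotone_smoothStep (hh : 0 < h) : Monotone (smoothStep s h) := fun x y hxy => by
  unfold smoothStep
  exact Real.smoothTransition.monotone (by gcongr)

lemma smoothStep_mem_Icc (s h x : ℝ) : smoothStep s h x ∈ Icc 0 1 :=
  ⟨Real.smoothTransition.nonneg _, Real.smoothTransition.le_one _⟩

lemma smoothStep_eq_zero (hh : 0 < h) (hx : x ≤ s) : smoothStep s h x = 0 :=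
  Real.smoothTransition.zero_of_nonpos (div_nonpos_of_nonpos_of_nonneg (by linarith) hh.le)

lemma smoothStep_eq_one (hh : 0 < h) (hx : s + h ≤ x) : smoothStep s h x = 1 :=
  Real.smoothTransition.one_of_one_le ((one_le_div hh).2 (by linarith))

lemma deriv_smoothStep_nonneg (hh : 0 < h) (x : ℝ) : 0 ≤ deriv (smoothStep s h) x :=
  (monotone_smoothStep hh).deriv_nonneg

lemma deriv_smoothStep_eq_zero (hh : 0 < h) (hx : x ∉ Ioo s (s + h)) :
    deriv (smoothStep s h) x = 0 := by
  by_cases hs : x ≤ s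
  · refine IsLocalMin.deriv_eq_zero (.of_forall fun y => ?_)
    exact (smoothStep_eq_zero hh hs).trans_le (smoothStep_mem_Icc s h y).1
  · refine IsLocalMax.deriv_eq_zero (.of_forall fun y => ?_)
    have hx' : s + h ≤ x := not_lt.1 fun h' => hx ⟨not_le.1 hs, h'⟩
    exact (smoothStep_mem_Icc s h y).2.trans_eq (smoothStep_eq_one hh hx').symm

lemma support_deriv_smoothStep_subset (hh : 0 < h) :
    Function.support (deriv (smoothStep s h)) ⊆ Icc s (s + h) := fun _ hx =>
  by_contra fun hx' => hx (deriv_smoothStep_eq_zero hh fun h' => hx' (Ioo_subset_Icc_self h'))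

lemma isTestFunction_deriv_smoothStep {U : Set ℝ} (hh : 0 < h) (hU : Icc s (s + h) ⊆ U) :
    IsTestFunction U (deriv (smoothStep s h)) where
  contDiff := contDiff_deriv_smoothStep s h
  hasCompactSupport := .of_support_subset_isCompact isCompact_Icc
    (support_deriv_smoothStep_subset hh)
  tsupport_subset :=
    (closure_minimal (support_deriv_smoothStep_subset hh) isClosed_Icc).trans hU

lemma integral_deriv_smoothStep (hh : 0 < h) : ∫ x, deriv (smoothStep s h) x = 1 := by
  rw [← setIntegral_eq_integral_of_forall_compl_eq_zero (s := Ioc s (s + h)) fun x hx =>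
      deriv_smoothStep_eq_zero hh fun h' => hx (Ioo_subset_Ioc_self h'),
    ← intervalIntegral.integral_of_le (by linarith), intervalIntegral.integral_deriv_eq_sub
      (fun x _ => differentiable_smoothStep s h x)
      ((contDiff_deriv_smoothStep s h).continuous.intervalIntegrable _ _),
    smoothStep_eq_one hh le_rfl, smoothStep_eq_zero hh le_rfl, sub_zero]

lemma IsTestFunction.integrable_mul_of_continuousOn {U : Set ℝ} {f φ : ℝ → ℝ}
    (hφ : IsTestFunction U φ) (hf : ContinuousOn f U) : Integrable fun x => f x * φ x := by
  rw [← integrableOn_iff_integrable_of_support_subset (s := tsupport φ)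
    fun x hx => subset_tsupport φ (right_ne_zero_of_mul hx)]
  exact ((hf.mono hφ.tsupport_subset).mul
    hφ.contDiff.continuous.continuousOn).integrableOn_compact hφ.hasCompactSupport

lemma IsTestFunction.deriv {U : Set ℝ} {φ : ℝ → ℝ} (hφ : IsTestFunction U φ) :
    IsTestFunction U (deriv φ) where
  contDiff := (contDiff_infty_iff_deriv.1 hφ.contDiff).2
  hasCompactSupport := hφ.hasCompactSupport.deriv
  tsupport_subset := tsupport_deriv_subset.trans hφ.tsupport_subset

lemma abs_integral_mul_deriv_smoothStep_sub_le {f : ℝ → ℝ} {l δ : ℝ} (hh : 0 < h)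
    (hf : ContinuousOn f (Icc s (s + h))) (hl : ∀ x ∈ Icc s (s + h), |f x - l| ≤ δ) :
    |(∫ x, f x * deriv (smoothStep s h) x) - l| ≤ δ := by
  have htest := isTestFunction_deriv_smoothStep hh (Subset.refl (Icc s (s + h)))
  have hint : Integrable (deriv (smoothStep s h)) :=
    htest.contDiff.continuous.integrable_of_hasCompactSupport htest.hasCompactSupport
  have hsub : (∫ x, f x * deriv (smoothStep s h) x) - l =
      ∫ x, (f x - l) * deriv (smoothStep s h) x := by
    simp_rw [sub_mul]
    rw [integral_sub (htest.integrable_mul_of_continuousOn hf) (hint.const_mul l),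
      integral_const_mul, integral_deriv_smoothStep hh, mul_one]
  rw [hsub, ← Real.norm_eq_abs]
  calc ‖∫ x, (f x - l) * deriv (smoothStep s h) x‖
      ≤ ∫ x, δ * deriv (smoothStep s h) x := by
        refine norm_integral_le_of_norm_le (hint.const_mul δ) (.of_forall fun x => ?_)
        rw [Real.norm_eq_abs, abs_mul, abs_of_nonneg (deriv_smoothStep_nonneg hh x)]
        by_cases hx : x ∈ Icc s (s + h)
        · exact mul_le_mul_of_nonneg_right (hl x hx) (deriv_smoothStep_nonneg hh x)
        · rw [deriv_smoothStep_eq_zero hh fun h' => hx (Ioo_subset_Icc_self h'), mul_zero,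
            mul_zero]
    _ = δ := by rw [integral_const_mul, integral_deriv_smoothStep hh, mul_one]

lemma eventually_add_lt {s q : ℝ} (h : s < q) : ∀ᶠ δ in 𝓝[>] (0 : ℝ), s + δ < q :=
  mem_nhdsWithin_of_mem_nhds <| ((continuous_const.add continuous_id).tendsto' 0 s
    (add_zero s)).eventually (gt_mem_nhds h)

lemma tendsto_integral_mul_deriv_smoothStep {f : ℝ → ℝ} {p q : ℝ} (hf : ContinuousOn f (Ioo p q))
    (hs : s ∈ Ioo p q) :
    Tendsto (fun h => ∫ x, f x * deriv (smoothStep s h) x) (𝓝[>] 0) (𝓝 (f s)) := by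
  refine Metric.nhds_basis_closedBall.tendsto_right_iff.2 fun δ hδ => ?_
  have hcont := (hf.continuousAt (Ioo_mem_nhds hs.1 hs.2)).eventually
    (Metric.closedBall_mem_nhds (f s) hδ)
  obtain ⟨l, r, hlr, hsub⟩ := mem_nhds_iff_exists_Ioo_subset.1 hcont
  filter_upwards [eventually_add_lt hs.2, eventually_add_lt hlr.2, self_mem_nhdsWithin]
    with h hq hr hh
  rw [mem_Ioi] at hh
  rw [Metric.mem_closedBall, Real.dist_eq]
  refine abs_integral_mul_deriv_smoothStep_sub_le hh
    (hf.mono fun x hx => ⟨hs.1.trans_le hx.1, hx.2.trans_lt hq⟩) fun x hx => ?_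
  exact hsub ⟨hlr.1.trans_le hx.1, hx.2.trans_lt hr⟩

lemma support_smoothStep_sub_subset {t : ℝ} (hh : 0 < h) (hst : s ≤ t) :
    Function.support (smoothStep s h - smoothStep t h) ⊆ Icc s (t + h) := by
  intro x hx
  by_contra hx'
  refine hx ?_
  rw [Pi.sub_apply, sub_eq_zero]
  by_cases hxs : x ≤ s
  · rw [smoothStep_eq_zero hh hxs, smoothStep_eq_zero hh (hxs.trans hst)]
  · have hx_gt : t + h < x := not_le.1 fun h' => hx' ⟨(not_le.1 hxs).le, h'⟩
    rw [smoothStep_eq_one hh (by linarith), smoothStep_eq_one hh hx_gt.le]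

lemma isTestFunction_smoothStep_sub {U : Set ℝ} {t : ℝ} (hh : 0 < h) (hst : s ≤ t)
    (hU : Icc s (t + h) ⊆ U) : IsTestFunction U (smoothStep s h - smoothStep t h) where
  contDiff := (contDiff_smoothStep s h).sub (contDiff_smoothStep t h)
  hasCompactSupport := .of_support_subset_isCompact isCompact_Icc
    (support_smoothStep_sub_subset hh hst)
  tsupport_subset :=
    (closure_minimal (support_smoothStep_sub_subset hh hst) isClosed_Icc).trans hU

lemma integral_abs_smoothStep_sub_le {t : ℝ} (hh : 0 < h) (hst : s ≤ t) :
    ∫ x, |(smoothStep s h - smoothStep t h) x| ≤ t + h - s := by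
  have hbound : ‖∫ x in Icc s (t + h), |(smoothStep s h - smoothStep t h) x|‖ ≤
      1 * volume.real (Icc s (t + h)) := by
    refine norm_setIntegral_le_of_norm_le_const measure_Icc_lt_top fun x _ => ?_
    rw [Real.norm_eq_abs, abs_abs, Pi.sub_apply]
    exact abs_sub_le_of_nonneg_of_le (smoothStep_mem_Icc s h x).1 (smoothStep_mem_Icc s h x).2
      (smoothStep_mem_Icc t h x).1 (smoothStep_mem_Icc t h x).2
  rw [Real.volume_real_Icc_of_le (by linarith), one_mul,
    setIntegral_eq_integral_of_forall_compl_eq_zero fun x hx => by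
      rw [Function.notMem_support.1 fun h' => hx (support_smoothStep_sub_subset hh hst h'),
        abs_zero]] at hbound
  exact (le_abs_self _).trans hbound

lemma abs_sub_le_of_forall_isTestFunction {f : ℝ → ℝ} {p q C : ℝ} (hf : ContinuousOn f (Ioo p q))
    (hC : 0 ≤ C)
    (H : ∀ β, IsTestFunction (Ioo p q) β → |∫ x, f x * deriv β x| ≤ C * ∫ x, |β x|)
    {t : ℝ} (hs : s ∈ Ioo p q) (ht : t ∈ Ioo p q) (hst : s ≤ t) :
    |f s - f t| ≤ C * (t - s) := by
  have hlim := ((tendsto_integral_mul_deriv_smoothStep hf hs).sub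
    (tendsto_integral_mul_deriv_smoothStep hf ht)).abs
  have hlim' : Tendsto (fun h => C * (t + h - s)) (𝓝[>] 0) (𝓝 (C * (t - s))) :=
    (Continuous.tendsto' (by fun_prop) 0 _ (by rw [add_zero])).mono_left nhdsWithin_le_nhds
  refine le_of_tendsto_of_tendsto hlim hlim' ?_
  filter_upwards [eventually_add_lt hs.2, eventually_add_lt ht.2, self_mem_nhdsWithin]
    with h hsq htq hh
  rw [mem_Ioi] at hh
  have hint {r : ℝ} (hpr : p < r) (hrq : r + h < q) :
      Integrable fun x => f x * deriv (smoothStep r h) x :=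
    (isTestFunction_deriv_smoothStep (U := Ioo p q) hh fun x hx =>
      ⟨hpr.trans_le hx.1, hx.2.trans_lt hrq⟩).integrable_mul_of_continuousOn hf
  have hderiv (x : ℝ) : deriv (smoothStep s h - smoothStep t h) x =
      deriv (smoothStep s h) x - deriv (smoothStep t h) x :=
    deriv_sub (differentiable_smoothStep s h x) (differentiable_smoothStep t h x)
  have hsub : Icc s (t + h) ⊆ Ioo p q := fun x hx => ⟨hs.1.trans_le hx.1, hx.2.trans_lt htq⟩
  have htest := H _ (isTestFunction_smoothStep_sub hh hst hsub)
  simp_rw [hderiv, mul_sub] at htest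
  rw [integral_sub (hint hs.1 hsq) (hint ht.1 htq)] at htest
  exact htest.trans (mul_le_mul_of_nonneg_left (integral_abs_smoothStep_sub_le hh hst) hC)

end SmoothStep

lemma IsTestFunction.mono {E : Type*} [NormedAddCommGroup E] [NormedSpace ℝ E] {U Ω : Set E}
    {φ : E → ℝ} (hφ : IsTestFunction U φ) (h : U ⊆ Ω) : IsTestFunction Ω φ :=
  ⟨hφ.contDiff, hφ.hasCompactSupport, hφ.tsupport_subset.trans h⟩

lemma HasBVDerivOn.isSobolev11On_of_not_jumpPt {Ω U : Set V2} {u : V2 → V2} {gu gs : V2 → Mat2}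
    {σ : Measure V2} (H : HasBVDerivOn Ω u gu σ gs) (hσ : σ {x | ¬ JumpPt u x} = 0) (hU : U ⊆ Ω)
    (hJ : ∀ x ∈ U, ¬ JumpPt u x) : IsSobolev11On U u gu where
  int_u := H.int_u.mono_set hU
  int_gu i j := (H.int_gu i j).mono_set hU
  ibp φ h₁ h₂ h₃ i j := by
    have hφ : IsTestFunction U φ := ⟨h₁, h₂, h₃⟩
    have hφΩ := hφ.mono hU
    have hsing : ∫ x, φ x * gs x i j ∂σ = 0 := by
      refine integral_eq_zero_of_ae ?_
      filter_upwards [show ∀ᵐ x ∂σ, JumpPt u x from hσ] with x hx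
      rw [image_eq_zero_of_notMem_tsupport fun h => hJ x (h₃ h) hx, zero_mul, Pi.zero_apply]
    have hibp := H.ibp φ h₁ h₂ hφΩ.tsupport_subset i j
    rwa [hsing, sub_zero, hφΩ.setIntegral_mul_pd, hφΩ.setIntegral_mul, ← hφ.setIntegral_mul_pd,
      ← hφ.setIntegral_mul] at hibp

/-- The tensor product of two functions of one variable. -/
def tensor (α β : ℝ → ℝ) (x : V2) : ℝ := α (x 0) * β (x 1)

section Tensor

variable {α β : ℝ → ℝ} {p q : ℝ}

lemma contDiff_tensor (hα : ContDiff ℝ (⊤ : ℕ∞) α) (hβ : ContDiff ℝ (⊤ : ℕ∞) β) :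
    ContDiff ℝ (⊤ : ℕ∞) (tensor α β) :=
  (hα.comp (contDiff_apply ℝ ℝ 0)).mul (hβ.comp (contDiff_apply ℝ ℝ 1))

lemma tsupport_tensor_subset (α β : ℝ → ℝ) :
    tsupport (tensor α β) ⊆ univ.pi ![tsupport α, tsupport β] := by
  refine closure_minimal (fun x hx => ?_) (isClosed_set_pi fun i _ => ?_)
  · rw [mem_univ_pi, Fin.forall_fin_two]
    exact ⟨subset_tsupport _ (left_ne_zero_of_mul hx), subset_tsupport _ (right_ne_zero_of_mul hx)⟩
  · fin_cases i
    exacts [isClosed_tsupport α, isClosed_tsupport β]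

lemma isTestFunction_tensor (hα : IsTestFunction (Ioo 0 1) α) (hβ : IsTestFunction (Ioo p q) β) :
    IsTestFunction (strip p q) (tensor α β) where
  contDiff := contDiff_tensor hα.contDiff hβ.contDiff
  hasCompactSupport := by
    refine .of_support_subset_isCompact (isCompact_univ_pi fun i => ?_)
      ((subset_tsupport _).trans (tsupport_tensor_subset α β))
    fin_cases i
    exacts [hα.hasCompactSupport, hβ.hasCompactSupport]
  tsupport_subset x hx := by
    have hx' := tsupport_tensor_subset α β hx
    rw [mem_univ_pi, Fin.forall_fin_two] at hx'
    exact ⟨hα.tsupport_subset hx'.1, hβ.tsupport_subset hx'.2⟩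

lemma pd_one_tensor (hα : ContDiff ℝ (⊤ : ℕ∞) α) (hβ : ContDiff ℝ (⊤ : ℕ∞) β) (x : V2) :
    pd 1 (tensor α β) x = α (x 0) * deriv β (x 1) := by
  rw [pd, ← ((contDiff_tensor hα hβ).differentiable (by simp) x).lineDeriv_eq_fderiv]
  refine HasLineDerivAt.lineDeriv ?_
  have hβ' : HasDerivAt (fun t => β (x 1 + t)) (deriv β (x 1)) 0 :=
    HasDerivAt.comp_const_add (x 1) 0
      (by rw [add_zero]; exact (hβ.differentiable (by simp) (x 1)).hasDerivAt)
  simpa [HasLineDerivAt, tensor] using hβ'.const_mul (α (x 0))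

lemma integral_tensor (f g : ℝ → ℝ) : ∫ x, tensor f g x = (∫ s, f s) * ∫ t, g t := by
  simpa [Fin.prod_univ_two, tensor] using
    integral_fintype_prod_volume_eq_prod (𝕜 := ℝ) (ι := Fin 2) (E := fun _ => ℝ) ![f, g]

lemma integrable_tensor {f g : ℝ → ℝ} (hf : Integrable f) (hg : Integrable g) :
    Integrable (tensor f g) := by
  have h := Integrable.fintype_prod (𝕜 := ℝ) (ι := Fin 2) (E := ℝ) (f := ![f, g])
    (μ := fun _ => volume) (by rw [Fin.forall_fin_two]; exact ⟨hf, hg⟩)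
  simp only [Fin.prod_univ_two] at h
  exact h

end Tensor

section Strip

variable {u : V2 → V2} {a w : ℝ → V2} {gu : V2 → Mat2} {p q M : ℝ}

lemma setIntegral_strip_mul_pd_tensor
    (hu : ∀ᵐ x ∂volume.restrict (strip p q), u x = x 0 • a (x 1) + w (x 1))
    (ha : ContinuousOn a (Ioo p q)) (hw : ContinuousOn w (Ioo p q)) {α β : ℝ → ℝ}
    (hα : IsTestFunction (Ioo 0 1) α) (hβ : IsTestFunction (Ioo p q) β) (i : Fin 2) :
    ∫ x in strip p q, u x i * pd 1 (tensor α β) x =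
      (∫ s, s * α s) * (∫ t, a t i * deriv β t) + (∫ s, α s) * ∫ t, w t i * deriv β t := by
  have hint {f : ℝ → V2} (hf : ContinuousOn f (Ioo p q)) :
      Integrable fun t => f t i * deriv β t :=
    hβ.deriv.integrable_mul_of_continuousOn ((continuous_apply i).comp_continuousOn hf)
  have hα₀ : Integrable α :=
    hα.contDiff.continuous.integrable_of_hasCompactSupport hα.hasCompactSupport
  have hα₁ : Integrable fun s => s * α s := hα.integrable_mul_of_continuousOn continuousOn_id
  rw [← integral_tensor, ← integral_tensor,
    ← integral_add (integrable_tensor hα₁ (hint ha)) (integrable_tensor hα₀ (hint hw))]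
  calc ∫ x in strip p q, u x i * pd 1 (tensor α β) x
      = ∫ x in strip p q, (x 0 * a (x 1) i + w (x 1) i) * pd 1 (tensor α β) x := by
        refine integral_congr_ae ?_
        filter_upwards [hu] with x hx
        rw [hx, Pi.add_apply, Pi.smul_apply, smul_eq_mul]
    _ = ∫ x, (x 0 * a (x 1) i + w (x 1) i) * pd 1 (tensor α β) x :=
        (isTestFunction_tensor hα hβ).setIntegral_mul_pd _ 1
    _ = ∫ x, tensor (fun s => s * α s) (fun t => a t i * deriv β t) x +
          tensor α (fun t => w t i * deriv β t) x := by
        refine integral_congr_ae (.of_forall fun x => ?_)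
        simp only [pd_one_tensor hα.contDiff hβ.contDiff, tensor]
        ring

lemma abs_moment_le (hgu : IsSobolev11On (strip p q) u gu)
    (hu : ∀ᵐ x ∂volume.restrict (strip p q), u x = x 0 • a (x 1) + w (x 1))
    (hM : ∀ᵐ x ∂volume.restrict (strip p q), mnorm (gu x) ≤ M)
    (ha : ContinuousOn a (Ioo p q)) (hw : ContinuousOn w (Ioo p q)) {α β : ℝ → ℝ}
    (hα : IsTestFunction (Ioo 0 1) α) (hβ : IsTestFunction (Ioo p q) β) (i : Fin 2) :
    |(∫ s, s * α s) * (∫ t, a t i * deriv β t) + (∫ s, α s) * ∫ t, w t i * deriv β t| ≤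
      M * ((∫ s, |α s|) * ∫ t, |β t|) := by
  have hφ := isTestFunction_tensor hα hβ
  have habs (x : V2) : |tensor α β x| = tensor (|α ·|) (|β ·|) x := abs_mul _ _
  have hint : Integrable fun x => M * |tensor α β x| := by
    simp_rw [habs]
    exact (integrable_tensor
      (hα.contDiff.continuous.integrable_of_hasCompactSupport hα.hasCompactSupport).abs
      (hβ.contDiff.continuous.integrable_of_hasCompactSupport hβ.hasCompactSupport).abs).const_mul M
  rw [← setIntegral_strip_mul_pd_tensor hu ha hw hα hβ,
    hgu.ibp _ hφ.contDiff hφ.hasCompactSupport hφ.tsupport_subset, abs_neg, ← Real.norm_eq_abs]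
  calc ‖∫ x in strip p q, tensor α β x * gu x i 1‖
      ≤ ∫ x in strip p q, M * |tensor α β x| := by
        refine norm_integral_le_of_norm_le hint.integrableOn ?_
        filter_upwards [hM] with x hx
        rw [Real.norm_eq_abs, abs_mul, mul_comm]
        exact mul_le_mul_of_nonneg_right ((abs_le_mnorm _ _ _).trans hx) (abs_nonneg _)
    _ = ∫ x, M * |tensor α β x| :=
        setIntegral_eq_integral_of_forall_compl_eq_zero fun x hx => by
          rw [image_eq_zero_of_notMem_tsupport fun h => hx (hφ.tsupport_subset h), abs_zero,
            mul_zero]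
    _ = M * ((∫ s, |α s|) * ∫ t, |β t|) := by
        simp_rw [habs]
        rw [integral_const_mul, integral_tensor]

lemma exists_moment_le (hgu : IsSobolev11On (strip p q) u gu)
    (hu : ∀ᵐ x ∂volume.restrict (strip p q), u x = x 0 • a (x 1) + w (x 1))
    (hM : ∀ᵐ x ∂volume.restrict (strip p q), mnorm (gu x) ≤ M)
    (ha : ContinuousOn a (Ioo p q)) (hw : ContinuousOn w (Ioo p q)) {β : ℝ → ℝ}
    (hβ : IsTestFunction (Ioo p q) β) (i : Fin 2) {r h : ℝ} (hr : 0 < r) (hh : 0 < h)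
    (hrh : r + h < 1) :
    ∃ m ∈ Icc r (r + h),
      |m * (∫ t, a t i * deriv β t) + ∫ t, w t i * deriv β t| ≤ M * ∫ t, |β t| := by
  have hα : IsTestFunction (Ioo 0 1) (deriv (smoothStep r h)) :=
    isTestFunction_deriv_smoothStep hh fun x hx => ⟨hr.trans_le hx.1, hx.2.trans_lt hrh⟩
  have hmoment := abs_moment_le hgu hu hM ha hw hα hβ i
  simp_rw [abs_of_nonneg (deriv_smoothStep_nonneg hh _), integral_deriv_smoothStep hh,
    one_mul] at hmoment
  refine ⟨_, ?_, hmoment⟩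
  have hmid : |(∫ s, s * deriv (smoothStep r h) s) - (r + h / 2)| ≤ h / 2 :=
    abs_integral_mul_deriv_smoothStep_sub_le hh continuousOn_id fun x hx => by
      rw [abs_le]; constructor <;> linarith [hx.1, hx.2]
  rw [abs_le] at hmid
  constructor <;> linarith

lemma abs_le_of_abs_affine_le {A W I m₁ m₂ : ℝ} (hm₁ : m₁ ∈ Icc (1 / 8) (1 / 4))
    (hm₂ : 5 / 8 ≤ m₂) (h₁ : |m₁ * A + W| ≤ I) (h₂ : |m₂ * A + W| ≤ I) :
    |A| ≤ 7 * I ∧ |W| ≤ 7 * I := by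
  have hdiff : |(m₂ - m₁) * A| ≤ 2 * I := by
    rw [show (m₂ - m₁) * A = (m₂ * A + W) - (m₁ * A + W) by ring]
    exact (abs_sub _ _).trans (by linarith)
  have hA : |A| ≤ 6 * I := by
    rw [abs_mul, abs_of_pos (by linarith [hm₁.2])] at hdiff
    nlinarith [abs_nonneg A, hm₁.2]
  have hmA : |m₁ * A| ≤ |A| := by
    rw [abs_mul, abs_of_pos (by linarith [hm₁.1])]
    exact mul_le_of_le_one_left (abs_nonneg A) (by linarith [hm₁.2])
  have hW : |W| ≤ |m₁ * A + W| + |m₁ * A| := by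
    rw [show W = (m₁ * A + W) - m₁ * A by ring]
    simpa using abs_sub (m₁ * A + W) (m₁ * A)
  constructor <;> linarith [abs_nonneg A]

lemma abs_integral_mul_deriv_le (hgu : IsSobolev11On (strip p q) u gu)
    (hu : ∀ᵐ x ∂volume.restrict (strip p q), u x = x 0 • a (x 1) + w (x 1))
    (hM : ∀ᵐ x ∂volume.restrict (strip p q), mnorm (gu x) ≤ M)
    (ha : ContinuousOn a (Ioo p q)) (hw : ContinuousOn w (Ioo p q)) {β : ℝ → ℝ}
    (hβ : IsTestFunction (Ioo p q) β) (i : Fin 2) :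
    |∫ t, a t i * deriv β t| ≤ 7 * M * ∫ t, |β t| ∧
      |∫ t, w t i * deriv β t| ≤ 7 * M * ∫ t, |β t| := by
  obtain ⟨m₁, hm₁, h₁⟩ := exists_moment_le hgu hu hM ha hw hβ i (r := 1 / 8) (h := 1 / 8)
    (by norm_num) (by norm_num) (by norm_num)
  obtain ⟨m₂, hm₂, h₂⟩ := exists_moment_le hgu hu hM ha hw hβ i (r := 5 / 8) (h := 1 / 8)
    (by norm_num) (by norm_num) (by norm_num)
  rw [mul_assoc]
  exact abs_le_of_abs_affine_le (by norm_num at hm₁ ⊢; exact hm₁) hm₂.1 h₁ h₂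

lemma abs_sub_le_on_strip (hgu : IsSobolev11On (strip p q) u gu)
    (hu : ∀ᵐ x ∂volume.restrict (strip p q), u x = x 0 • a (x 1) + w (x 1)) (hM₀ : 0 ≤ M)
    (hM : ∀ᵐ x ∂volume.restrict (strip p q), mnorm (gu x) ≤ M)
    (ha : ContinuousOn a (Ioo p q)) (hw : ContinuousOn w (Ioo p q)) {s t : ℝ}
    (hs : s ∈ Ioo p q) (ht : t ∈ Ioo p q) (hst : s ≤ t) (i : Fin 2) :
    |a s i - a t i| ≤ 7 * M * (t - s) ∧ |w s i - w t i| ≤ 7 * M * (t - s) := by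
  have hbound {β : ℝ → ℝ} (hβ : IsTestFunction (Ioo p q) β) :=
    abs_integral_mul_deriv_le hgu hu hM ha hw hβ i
  exact ⟨abs_sub_le_of_forall_isTestFunction ((continuous_apply i).comp_continuousOn ha)
      (by positivity) (fun β hβ => (hbound hβ).1) hs ht hst,
    abs_sub_le_of_forall_isTestFunction ((continuous_apply i).comp_continuousOn hw)
      (by positivity) (fun β hβ => (hbound hβ).2) hs ht hst⟩

end Strip

/-! ### Rigidity on jump-free strips -/

lemma ae_eq_zero_of_integral_add_integral_eq_zero {U : Set V2} (hU : IsOpen U) {f g : V2 → ℝ}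
    {σ : Measure V2} (hσ : σ ⟂ₘ (volume : Measure V2)) (hf : IntegrableOn f U)
    (hg : Integrable g σ)
    (h : ∀ φ, IsTestFunction U φ → (∫ x in U, φ x * f x) + ∫ x, φ x * g x ∂σ = 0) :
    f =ᵐ[volume.restrict U] 0 := by
  classical
  obtain ⟨N, -, hσN, hN⟩ := hσ
  have hfk : f =ᵐ[volume.restrict U] N.piecewise f g :=
    ae_restrict_of_ae <| (measure_eq_zero_iff_ae_notMem.1 hN).mono fun x hx =>
      (piecewise_eq_of_mem N f g (not_not.1 hx)).symm
  have hgk : g =ᵐ[σ] N.piecewise f g :=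
    (measure_eq_zero_iff_ae_notMem.1 hσN).mono fun x hx => (piecewise_eq_of_notMem N f g hx).symm
  have hk₁ := hf.congr hfk
  have hk₂ := hg.congr hgk
  have hk : ∀ᵐ x ∂volume.restrict U + σ, x ∈ U → N.piecewise f g x = 0 :=
    hU.ae_eq_zero_of_integral_contDiff_smul_eq_zero
      ((hk₁.add_measure hk₂).locallyIntegrable.locallyIntegrableOn U) fun φ h₁ h₂ h₃ => by
        have hφ : IsTestFunction U φ := ⟨h₁, h₂, h₃⟩
        simp_rw [smul_eq_mul]
        rw [integral_add_measure (hφ.integrable_mul hk₁) (hφ.integrable_mul hk₂), ← h φ hφ]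
        congr 1 <;> refine integral_congr_ae ?_
        · filter_upwards [hfk] with x hx using by rw [← hx]
        · filter_upwards [hgk] with x hx using by rw [← hx]
  filter_upwards [hfk, (ae_add_measure_iff.1 hk).1, ae_restrict_mem hU.measurableSet]
    with x hx hx₀ hxU using hx.trans (hx₀ hxU)

lemma HasBVDerivOn.ae_eq_of_isSobolev11On {Ω U : Set V2} {u : V2 → V2} {gu gs g : V2 → Mat2}
    {σ : Measure V2} (H : HasBVDerivOn Ω u gu σ gs) (hU : IsOpen U) (hUΩ : U ⊆ Ω)
    (h : IsSobolev11On U u g) (i j : Fin 2) : ∀ᵐ x ∂volume.restrict U, gu x i j = g x i j := by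
  have hint := (H.int_gu i j).mono_set hUΩ
  have hzero := ae_eq_zero_of_integral_add_integral_eq_zero hU H.perp (hint.sub (h.int_gu i j))
    (H.integrable_gs i j) fun φ hφ => by
      have hφΩ := hφ.mono hUΩ
      have hibp := H.ibp φ hφΩ.contDiff hφΩ.hasCompactSupport hφΩ.tsupport_subset i j
      rw [hφΩ.setIntegral_mul_pd, hφΩ.setIntegral_mul, ← hφ.setIntegral_mul_pd,
        ← hφ.setIntegral_mul, h.ibp φ hφ.contDiff hφ.hasCompactSupport hφ.tsupport_subset] at hibp
      simp_rw [Pi.sub_apply, mul_sub]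
      rw [integral_sub (hφ.integrable_mul hint) (hφ.integrable_mul (h.int_gu i j))]
      linarith
  filter_upwards [hzero] with x hx using sub_eq_zero.1 hx

lemma eq_of_ae_deriv_eq_zero {f : ℝ → ℝ} {K : NNReal} (hf : LipschitzWith K f) {p q s t : ℝ}
    (h : ∀ᵐ x, x ∈ Ioo p q → deriv f x = 0) (hs : s ∈ Ioo p q) (ht : t ∈ Ioo p q) : f s = f t := by
  have hftc : ∫ x in s..t, deriv f x = f t - f s :=
    (hf.lipschitzOnWith (s := uIcc s t)).absolutelyContinuousOnInterval.integral_deriv_eq_sub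
  rw [intervalIntegral.integral_zero_ae] at hftc
  · linarith
  · filter_upwards [h] with x hx hxst
    exact hx (ordConnected_Ioo.uIcc_subset hs ht (uIoc_subset_uIcc hxst))

lemma deriv_eq_zero_of_dot_self_eq_one {α : ℝ → V2} {t : ℝ} (hα : DifferentiableAt ℝ α t)
    (hunit : ∀ᶠ s in 𝓝 t, dot (α s) (α s) = 1) (hwedge : wedge (α t) (deriv α t) = 0) :
    deriv α t = 0 := by
  have hcomp (i : Fin 2) := hasDerivAt_pi.1 hα.hasDerivAt i
  have hdot : dot (α t) (deriv α t) = 0 := by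
    have hderiv : HasDerivAt (fun s => dot (α s) (α s)) (2 * dot (α t) (deriv α t)) t := by
      simp_rw [dot_eq]
      exact (((hcomp 0).fun_mul (hcomp 0)).fun_add ((hcomp 1).fun_mul (hcomp 1))).congr_deriv
        (by ring)
    have := hderiv.unique ((hasDerivAt_const t 1).congr_of_eventuallyEq hunit)
    linarith
  have hnorm := wedge_sq_add_dot_sq (α t) (deriv α t)
  rw [hwedge, hdot, hunit.self_of_nhds] at hnorm
  exact dotProduct_self_eq_zero.1 (by linarith : dot (deriv α t) (deriv α t) = 0)

section Strip

variable {p q M : ℝ} {K : NNReal} {u : V2 → V2} {gu : V2 → Mat2} {a w α ω : ℝ → V2}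

lemma ae_ae_of_ae_strip {P : ℝ → ℝ → Prop} (h : ∀ᵐ x ∂volume.restrict (strip p q), P (x 0) (x 1)) :
    ∀ᵐ s, ∀ᵐ t, s ∈ Ioo (0 : ℝ) 1 → t ∈ Ioo p q → P s t := by
  rw [ae_restrict_iff' (isOpen_strip p q).measurableSet] at h
  have hprod := Measure.ae_ae_of_ae_prod
    ((volume_preserving_finTwoArrow ℝ).symm.quasiMeasurePreserving.ae h)
  filter_upwards [hprod] with s hs
  filter_upwards [hs] with t ht h₀ h₁ using ht ⟨h₀, h₁⟩

lemma ae_eq_zero_and_eq_of_ae_strip {c d : ℝ → ℝ} {r : ℝ}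
    (h : ∀ᵐ x ∂volume.restrict (strip p q), x 0 * c (x 1) + d (x 1) = r) :
    ∀ᵐ t, t ∈ Ioo p q → c t = 0 ∧ d t = r := by
  have hdense := Measure.dense_of_ae (ae_ae_of_ae_strip (P := fun s t => s * c t + d t = r) h)
  obtain ⟨s₁, hs₁, hs₁pos, hs₁lt⟩ := hdense.exists_between (show (0 : ℝ) < 1 / 2 by norm_num)
  obtain ⟨s₂, hs₂, hs₂gt, hs₂lt⟩ := hdense.exists_between (show (1 / 2 : ℝ) < 1 by norm_num)
  filter_upwards [hs₁, hs₂] with t h₁ h₂ ht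
  have e₁ := h₁ ⟨hs₁pos, by linarith⟩ ht
  have e₂ := h₂ ⟨by linarith, hs₂lt⟩ ht
  have hc : c t = 0 := by
    have : (s₂ - s₁) * c t = 0 := by linarith
    exact (mul_eq_zero.1 this).resolve_left (by linarith)
  rw [hc] at e₁
  exact ⟨hc, by linarith⟩

lemma lipschitzOnWith_layered (hα : LipschitzWith K α) (hω : LipschitzWith K ω)
    (hbound : ∀ t ∈ Ioo p q, ‖α t‖ ≤ 1) :
    LipschitzOnWith (1 + 2 * K) (fun x : V2 => x 0 • α (x 1) + ω (x 1)) (strip p q) := by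
  refine .of_dist_le_mul fun x hx y hy => ?_
  have h₀ : |x 0 - y 0| ≤ dist x y := dist_le_pi_dist x y 0
  have h₁ : dist (x 1) (y 1) ≤ dist x y := dist_le_pi_dist x y 1
  have hα' := (hα.dist_le_mul (x 1) (y 1)).trans (mul_le_mul_of_nonneg_left h₁ K.2)
  have hω' := (hω.dist_le_mul (x 1) (y 1)).trans (mul_le_mul_of_nonneg_left h₁ K.2)
  have hsplit : x 0 • α (x 1) + ω (x 1) - (y 0 • α (y 1) + ω (y 1)) =
      (x 0 - y 0) • α (x 1) + y 0 • (α (x 1) - α (y 1)) + (ω (x 1) - ω (y 1)) := by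
    module
  have hterm₁ : ‖(x 0 - y 0) • α (x 1)‖ ≤ dist x y := by
    rw [norm_smul, Real.norm_eq_abs]
    exact (mul_le_of_le_one_right (abs_nonneg _) (hbound _ hx.2)).trans h₀
  have hterm₂ : ‖y 0 • (α (x 1) - α (y 1))‖ ≤ K * dist x y := by
    rw [norm_smul, Real.norm_eq_abs, abs_of_pos hy.1.1, ← dist_eq_norm]
    exact (mul_le_of_le_one_left dist_nonneg hy.1.2.le).trans hα'
  rw [dist_eq_norm, hsplit]
  rw [dist_eq_norm (ω _)] at hω'
  push_cast
  linarith [norm_add₃_le (a := (x 0 - y 0) • α (x 1)) (b := y 0 • (α (x 1) - α (y 1)))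
    (c := ω (x 1) - ω (y 1))]

lemma ae_col_eq_of_lipschitz (hgu : IsSobolev11On (strip p q) u gu)
    (hu : ∀ᵐ x ∂volume.restrict (strip p q), u x = x 0 • α (x 1) + ω (x 1))
    (hα : LipschitzWith K α) (hω : LipschitzWith K ω) (hbound : ∀ t ∈ Ioo p q, ‖α t‖ ≤ 1) :
    ∀ᵐ x ∂volume.restrict (strip p q), (gu x).col 0 = α (x 1) ∧
      (gu x).col 1 = x 0 • deriv α (x 1) + deriv ω (x 1) := by
  obtain ⟨G, hG, hGeq⟩ := (lipschitzOnWith_layered hα hω hbound).extend_pi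
  have hopen := isOpen_strip p q
  have huG : u =ᵐ[volume.restrict (strip p q)] G := by
    filter_upwards [hu, ae_restrict_mem hopen.measurableSet] with x hx hxs
      using hx.trans (hGeq hxs)
  have hjac := (hgu.congr huG .rfl).ae_eq hopen (isSobolev11On_jac (isBounded_strip p q) hG)
  filter_upwards [hjac 0 0, hjac 0 1, hjac 1 0, hjac 1 1, ae_restrict_mem hopen.measurableSet,
    ae_restrict_of_ae (ae_apply 1 hα.ae_differentiableAt_real),
    ae_restrict_of_ae (ae_apply 1 hω.ae_differentiableAt_real)] with x h₀₀ h₀₁ h₁₀ h₁₁ hx hαx hωx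
  have hmat : gu x = jac (fun y => y 0 • α (y 1) + ω (y 1)) x := by
    rw [jac_congr (hGeq.eventuallyEq_of_mem (hopen.mem_nhds hx))]
    ext i j
    fin_cases i <;> fin_cases j <;> assumption
  rw [hmat]
  exact jac_layered_col hαx hωx

lemma ae_deriv_eq_of_det_eq_one (hgu : IsSobolev11On (strip p q) u gu)
    (hu : ∀ᵐ x ∂volume.restrict (strip p q), u x = x 0 • α (x 1) + ω (x 1))
    (hα : LipschitzWith K α) (hω : LipschitzWith K ω)
    (hunit : ∀ t ∈ Ioo p q, dot (α t) (α t) = 1)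
    (hdet : ∀ᵐ x ∂volume.restrict (strip p q), (gu x).det = 1) :
    ∀ᵐ t, t ∈ Ioo p q → deriv α t = 0 ∧ wedge (α t) (deriv ω t) = 1 := by
  have hcol := ae_col_eq_of_lipschitz hgu hu hα hω fun t ht => norm_le_one_of_dot_self (hunit t ht)
  have hwedge : ∀ᵐ t, t ∈ Ioo p q → wedge (α t) (deriv α t) = 0 ∧ wedge (α t) (deriv ω t) = 1 := by
    refine ae_eq_zero_and_eq_of_ae_strip ?_
    filter_upwards [hcol, hdet] with x ⟨hcol₀, hcol₁⟩ hx
    rw [← wedge_smul_right, ← wedge_add_right, ← hcol₀, ← hcol₁, ← hx, Matrix.det_fin_two]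
    simp only [wedge, Matrix.col_apply]
    ring
  filter_upwards [hwedge, hα.ae_differentiableAt_real] with t htw htd ht
  refine ⟨deriv_eq_zero_of_dot_self_eq_one htd ?_ (htw ht).1, (htw ht).2⟩
  filter_upwards [Ioo_mem_nhds ht.1 ht.2] using hunit

lemma eq_and_wedge_sub_eq_of_ae_deriv_eq (hα : LipschitzWith K α) (hω : LipschitzWith K ω)
    (hunit : ∀ t ∈ Ioo p q, dot (α t) (α t) = 1)
    (hderiv : ∀ᵐ t, t ∈ Ioo p q → deriv α t = 0 ∧ wedge (α t) (deriv ω t) = 1) {s t : ℝ}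
    (hs : s ∈ Ioo p q) (ht : t ∈ Ioo p q) :
    α s = α t ∧ wedge (α s) (ω t - ω s) = t - s := by
  have hconst {r : ℝ} (hr : r ∈ Ioo p q) : α s = α r := by
    refine funext fun i => eq_of_ae_deriv_eq_zero (f := (α · i)) (lipschitzWith_apply hα i) ?_ hs hr
    filter_upwards [hderiv, hα.ae_differentiableAt_real] with x hx hxd hxpq
    rw [(hasDerivAt_pi.1 hxd.hasDerivAt i).deriv, (hx hxpq).1, Pi.zero_apply]
  have hlip : LipschitzWith (2 * K + 1) fun x => wedge (α s) (ω x) - x := by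
    refine .of_dist_le_mul fun x y => ?_
    have hωxy := hω.dist_le_mul x y
    have hwedge := abs_wedge_le_of_unit (hunit s hs) (ω x - ω y)
    rw [← dist_eq_norm, wedge_sub_right] at hwedge
    rw [Real.dist_eq] at hωxy ⊢
    push_cast
    calc |wedge (α s) (ω x) - x - (wedge (α s) (ω y) - y)|
        = |wedge (α s) (ω x) - wedge (α s) (ω y) - (x - y)| := by congr 1; ring
      _ ≤ |wedge (α s) (ω x) - wedge (α s) (ω y)| + |x - y| := abs_sub _ _
      _ ≤ (2 * K + 1) * |x - y| := by linarith
  have heq := eq_of_ae_deriv_eq_zero hlip (p := p) (q := q) (s := s) (t := t) ?_ hs ht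
  · refine ⟨hconst ht, ?_⟩
    rw [wedge_sub_right]
    linarith
  · filter_upwards [hderiv, hω.ae_differentiableAt_real] with x hx hxd hxpq
    have hcomp (i : Fin 2) := hasDerivAt_pi.1 hxd.hasDerivAt i
    have hwedge : HasDerivAt (fun x => wedge (α s) (ω x) - x) (wedge (α s) (deriv ω x) - 1) x :=
      (((hcomp 1).const_mul _).fun_sub ((hcomp 0).const_mul _)).fun_sub (hasDerivAt_id' x)
    rw [hwedge.deriv, hconst hxpq, (hx hxpq).2, sub_self]

lemma lipschitzOnWith_strip (hgu : IsSobolev11On (strip p q) u gu)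
    (hu : ∀ᵐ x ∂volume.restrict (strip p q), u x = x 0 • a (x 1) + w (x 1)) (hM₀ : 0 ≤ M)
    (hM : ∀ᵐ x ∂volume.restrict (strip p q), mnorm (gu x) ≤ M)
    (ha : ContinuousOn a (Ioo p q)) (hw : ContinuousOn w (Ioo p q)) :
    LipschitzOnWith (7 * M).toNNReal a (Ioo p q) ∧
      LipschitzOnWith (7 * M).toNNReal w (Ioo p q) := by
  have hbound {s t : ℝ} (hs : s ∈ Ioo p q) (ht : t ∈ Ioo p q) (i : Fin 2) :
      |a s i - a t i| ≤ 7 * M * |s - t| ∧ |w s i - w t i| ≤ 7 * M * |s - t| := by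
    rcases le_total s t with hst | hst
    · rw [abs_sub_comm s, abs_of_nonneg (sub_nonneg.2 hst)]
      exact abs_sub_le_on_strip hgu hu hM₀ hM ha hw hs ht hst i
    · rw [abs_of_nonneg (sub_nonneg.2 hst), abs_sub_comm, abs_sub_comm (w s i)]
      exact abs_sub_le_on_strip hgu hu hM₀ hM ha hw ht hs hst i
  constructor <;> refine .of_dist_le_mul fun s hs t ht => ?_ <;>
    rw [Real.coe_toNNReal _ (by positivity)] <;>
    refine (dist_pi_le_iff (by positivity)).2 fun i => ?_
  · exact (hbound hs ht i).1
  · exact (hbound hs ht i).2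

lemma eq_and_wedge_sub_eq_of_det_eq_one (hgu : IsSobolev11On (strip p q) u gu)
    (hu : ∀ᵐ x ∂volume.restrict (strip p q), u x = x 0 • a (x 1) + w (x 1))
    (ha : LipschitzOnWith K a (Ioo p q)) (hw : LipschitzOnWith K w (Ioo p q))
    (hunit : ∀ t ∈ Ioo p q, dot (a t) (a t) = 1)
    (hdet : ∀ᵐ x ∂volume.restrict (strip p q), (gu x).det = 1) {s t : ℝ}
    (hs : s ∈ Ioo p q) (ht : t ∈ Ioo p q) :
    a s = a t ∧ wedge (a s) (w t - w s) = t - s := by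
  obtain ⟨α, hα, haα⟩ := ha.extend_pi
  obtain ⟨ω, hω, hwω⟩ := hw.extend_pi
  have hαunit : ∀ r ∈ Ioo p q, dot (α r) (α r) = 1 := fun r hr => haα hr ▸ hunit r hr
  have hu' : ∀ᵐ x ∂volume.restrict (strip p q), u x = x 0 • α (x 1) + ω (x 1) := by
    filter_upwards [hu, ae_restrict_mem (isOpen_strip p q).measurableSet] with x hx hxs
    rw [hx, haα hxs.2, hwω hxs.2]
  rw [haα hs, haα ht, hwω hs, hwω ht]
  exact eq_and_wedge_sub_eq_of_ae_deriv_eq hα hω hαunit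
    (ae_deriv_eq_of_det_eq_one hgu hu' hα hω hαunit hdet) hs ht

end Strip

/-! ### The profile of a map in `A ∩ SBV_∞` -/

lemma exists_Ioo_subset_of_Icc_subset {U : Set ℝ} (hU : IsOpen U) {s t : ℝ} (hst : s ≤ t)
    (h : Icc s t ⊆ U) : ∃ p < s, ∃ q > t, Ioo p q ⊆ U := by
  obtain ⟨p, r, ⟨hps, hsr⟩, hpr⟩ :=
    mem_nhds_iff_exists_Ioo_subset.1 (hU.mem_nhds (h (left_mem_Icc.2 hst)))
  obtain ⟨r', q, ⟨hrt, htq⟩, hrq⟩ :=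
    mem_nhds_iff_exists_Ioo_subset.1 (hU.mem_nhds (h (right_mem_Icc.2 hst)))
  refine ⟨p, hps, q, htq, fun x hx => ?_⟩
  rcases lt_or_ge x s with hxs | hsx
  · exact hpr ⟨hx.1, hxs.trans hsr⟩
  rcases le_or_gt x t with hxt | htx
  · exact h ⟨hsx, hxt⟩
  · exact hrq ⟨hrt.trans htx, hx.2⟩

/-- The number of points of `F` weakly to the left of `t` plus the number strictly to the left of
`t`, so that the increment from `s` to `t > s` also detects points of `F` at `s` and at `t`. -/
def crossings (F : Finset ℝ) (t : ℝ) : ℝ :=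
  ∑ d ∈ F, ((if d ≤ t then 1 else 0) + if d < t then 1 else 0)

lemma monotone_crossings (F : Finset ℝ) : Monotone (crossings F) := by
  intro s t hst
  refine Finset.sum_le_sum fun d _ => ?_
  split_ifs <;> linarith

lemma crossings_nonneg (F : Finset ℝ) (t : ℝ) : 0 ≤ crossings F t :=
  Finset.sum_nonneg fun d _ => by positivity

lemma crossings_le (F : Finset ℝ) (t : ℝ) : crossings F t ≤ 2 * F.card := by
  rw [mul_comm, ← nsmul_eq_mul]
  refine Finset.sum_le_card_nsmul _ _ _ fun d _ => ?_
  split_ifs <;> norm_num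

lemma one_le_crossings_sub {F : Finset ℝ} {s t d : ℝ} (hst : s < t) (hd : d ∈ F)
    (hdst : d ∈ Icc s t) : 1 ≤ crossings F t - crossings F s := by
  rw [crossings, crossings, ← Finset.sum_sub_distrib]
  refine le_trans ?_ (Finset.single_le_sum (fun c _ => ?_) hd)
  · rw [if_pos hdst.2, if_neg hdst.1.not_gt]
    rcases hdst.1.lt_or_eq with hsd | rfl
    · rw [if_neg hsd.not_ge]
      split_ifs <;> norm_num
    · rw [if_pos le_rfl, if_pos hst]
      norm_num
  · split_ifs <;> linarith

section Profile

variable {u : V2 → V2} {gu gs gu' gs' : V2 → Mat2} {σ σ' : Measure V2} {a w ψ : ℝ → V2}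
  {L M C s t : ℝ}

lemma rigid_of_forall_notMem_jumpTimes (H : HasBVDerivOn Rect u gu σ gs)
    (hdet : ∀ᵐ x ∂volume.restrict Rect, (gu x).det = 1) (H' : HasBVDerivOn Rect u gu' σ' gs')
    (hσ' : σ' {x | ¬ JumpPt u x} = 0) (hM₀ : 0 ≤ M)
    (hM : ∀ᵐ x ∂volume.restrict Rect, mnorm (gu' x) ≤ M)
    (hu : ∀ᵐ x ∂volume.restrict Rect, u x = x 0 • a (x 1) + w (x 1))
    (hunit : ∀ r ∈ Ioo (-1 : ℝ) 1, dot (a r) (a r) = 1) (hfin : (jumpTimes a w).Finite)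
    (hs : s ∈ Ioo (-1 : ℝ) 1) (ht : t ∈ Ioo (-1 : ℝ) 1) (hst : s ≤ t)
    (hjump : ∀ r ∈ Icc s t, r ∉ jumpTimes a w) :
    a s = a t ∧ wedge (a s) (w t - w s) = t - s ∧ ‖w t - w s‖ ≤ 7 * M * (t - s) := by
  obtain ⟨p, hps, q, htq, hpq⟩ := exists_Ioo_subset_of_Icc_subset
    (isOpen_Ioo.inter hfin.isClosed.isOpen_compl) hst
    fun r hr => ⟨⟨hs.1.trans_le hr.1, hr.2.trans_lt ht.2⟩, hjump r hr⟩
  have hspq : s ∈ Ioo p q := ⟨hps, hst.trans_lt htq⟩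
  have htpq : t ∈ Ioo p q := ⟨hps.trans_le hst, htq⟩
  have hsub : strip p q ⊆ Rect := strip_subset_Rect fun r hr => (hpq hr).1
  have hcont (r : ℝ) (hr : r ∈ Ioo p q) : ContinuousAt a r ∧ ContinuousAt w r :=
    not_not.1 fun h => (hpq hr).2 ⟨(hpq hr).1, h⟩
  have hgu' : IsSobolev11On (strip p q) u gu' := H'.isSobolev11On_of_not_jumpPt hσ' hsub fun x hx =>
    not_jumpPt_of_continuousAt hu (hsub hx) (hcont _ hx.2).1 (hcont _ hx.2).2
  have hu_strip := ae_restrict_of_ae_restrict_of_subset hsub hu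
  obtain ⟨ha, hw⟩ := lipschitzOnWith_strip hgu' hu_strip hM₀
    (ae_restrict_of_ae_restrict_of_subset hsub hM)
    (fun r hr => (hcont r hr).1.continuousWithinAt) fun r hr => (hcont r hr).2.continuousWithinAt
  have hdet' : ∀ᵐ x ∂volume.restrict (strip p q), (gu' x).det = 1 := by
    have hgu := H.ae_eq_of_isSobolev11On (isOpen_strip p q) hsub hgu'
    filter_upwards [ae_restrict_of_ae_restrict_of_subset hsub hdet, hgu 0 0, hgu 0 1, hgu 1 0,
      hgu 1 1] with x hx h₀₀ h₀₁ h₁₀ h₁₁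
    rwa [Matrix.det_fin_two, h₀₀, h₀₁, h₁₀, h₁₁, ← Matrix.det_fin_two] at hx
  obtain ⟨hconst, hwedge⟩ := eq_and_wedge_sub_eq_of_det_eq_one hgu' hu_strip ha hw
    (fun r hr => hunit r (hpq hr).1) hdet' hspq htpq
  refine ⟨hconst, hwedge, ?_⟩
  have hdist := hw.dist_le_mul t htpq s hspq
  rwa [dist_eq_norm, Real.coe_toNNReal _ (by positivity), Real.dist_eq,
    abs_of_nonneg (sub_nonneg.2 hst)] at hdist

lemma slide_of_offset (hconst : a s = a t) (hunit : dot (a s) (a s) = 1) (hst : s ≤ t)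
    (hwedge : wedge (a s) (offset a ψ t t - offset a ψ s s) = t - s)
    (hnorm : ‖offset a ψ t t - offset a ψ s s‖ ≤ L * (t - s)) :
    wedge (a s) (ψ t - ψ s) = 0 ∧ ‖ψ t - ψ s‖ ≤ (L + 1) * (t - s) := by
  have hψ : ψ t - ψ s = offset a ψ t t - offset a ψ s s - (t - s) • perp (a s) := by
    rw [offset, offset, ← hconst]
    module
  constructor
  · rw [hψ, wedge_sub_right, hwedge, wedge_smul_right, wedge_perp, hunit, mul_one, sub_self]
  · have hperp : ‖(t - s) • perp (a s)‖ ≤ t - s := by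
      rw [norm_smul, Real.norm_eq_abs, abs_of_nonneg (sub_nonneg.2 hst)]
      exact mul_le_of_le_one_right (sub_nonneg.2 hst)
        ((norm_perp_le _).trans (norm_le_one_of_dot_self hunit))
    rw [hψ, add_one_mul]
    exact (norm_sub_le _ _).trans (add_le_add hnorm hperp)

lemma controlledOn_of_slide_between_jumps {F : Finset ℝ} (hL : 0 ≤ L)
    (hunit : ∀ t ∈ Ioo (-1 : ℝ) 1, dot (a t) (a t) = 1) (hC : ∀ t ∈ Ioo (-1 : ℝ) 1, ‖ψ t‖ ≤ C)
    (hslide : ∀ s ∈ Ioo (-1 : ℝ) 1, ∀ t ∈ Ioo (-1 : ℝ) 1, s ≤ t → (∀ r ∈ Icc s t, r ∉ F) →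
      a s = a t ∧ wedge (a s) (ψ t - ψ s) = 0 ∧ ‖ψ t - ψ s‖ ≤ L * (t - s)) :
    ControlledOn (Ioo (-1) 1) a ψ (fun t => L * t + crossings F t)
      (max C (2 * L + 2 * F.card)) where
  mono := (monotone_id.const_mul hL).add (monotone_crossings F)
  osc_le s hs t ht := by
    refine le_max_of_le_right ?_
    have hlin : L * (t - s) ≤ L * 2 := mul_le_mul_of_nonneg_left (by linarith [hs.1, ht.2]) hL
    linarith [crossings_nonneg F s, crossings_le F t]
  norm_le t ht := le_max_of_le_left (hC t ht)
  unit := hunit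
  slide_or_jump s hs t ht hst := by
    rcases hst.eq_or_lt with rfl | hlt
    · left
      simp [wedge]
    by_cases hjump : ∀ r ∈ Icc s t, r ∉ F
    · obtain ⟨hconst, hwedge, hnorm⟩ := hslide s hs t ht hst hjump
      exact .inl ⟨hconst, hwedge, by linarith [monotone_crossings F hst]⟩
    · push Not at hjump
      obtain ⟨r, hr, hrF⟩ := hjump
      right
      linarith [one_le_crossings_sub hlt hrF hr, mul_le_mul_of_nonneg_left hst hL]

theorem exists_controlledOn (huA : memAOn Rect (-1) 1 u) (huS : memSBVinf Rect u) :
    ∃ (a ψ : ℝ → V2) (Φ : ℝ → ℝ) (M : ℝ), ControlledOn (Ioo (-1) 1) a ψ Φ M ∧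
      ∀ᵐ x ∂volume.restrict Rect, u x = x 0 • a (x 1) + offset a ψ (x 1) (x 1) := by
  obtain ⟨gu, σ, gs, H, ⟨R, ψ₀, hSO2, hR, hψ₀, hu₀⟩, hdet⟩ := huA
  obtain ⟨gu', σ', gs', H', hσ', ⟨M, hM⟩, hJ⟩ := huS
  obtain ⟨a, ψ, ha, hψ, hunit, ⟨C, hC⟩, hu⟩ := exists_cadlag_profile hSO2 hR hψ₀ hu₀
  let w (t : ℝ) : V2 := offset a ψ t t
  have hfin : (jumpTimes a w).Finite :=
    finite_jumpTimes hu ha (fun t ht => (ha t ht).offset (hψ t ht)) hJ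
  refine ⟨a, ψ, _, _, controlledOn_of_slide_between_jumps (F := hfin.toFinset)
    (L := 7 * |M| + 1) (by positivity) hunit hC fun s hs t ht hst hjump => ?_, hu⟩
  obtain ⟨hconst, hwedge, hnorm⟩ := rigid_of_forall_notMem_jumpTimes H hdet H' hσ' (abs_nonneg M)
    (hM.mono fun x hx => hx.trans (le_abs_self M)) hu hunit hfin hs ht hst
    fun r hr hrJ => hjump r hr (hfin.mem_toFinset.2 hrJ)
  exact ⟨hconst, slide_of_offset hconst (hunit s hs) hst hwedge hnorm⟩

end Profile

/-- Proposition 4.4: approximation of maps in `A ∩ SBV_∞(Ω;ℝ²)` on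
`Ω = (0,1) × (−1,1)`: for every `u ∈ A ∩ SBV_∞(Ω;ℝ²)` there is a sequence `u_ε ∈ A_ε` with
`∫_Ω u_ε = ∫_Ω u` and `u_ε ⇀* u` in `BV(Ω;ℝ²)`. -/
theorem approx_SBVinf_Rect
    (lam : ℝ) (hlam : lam ∈ Ioo (0:ℝ) 1)
    (ε : ℕ → ℝ) (hεpos : ∀ n, 0 < ε n) (hε0 : Tendsto ε atTop (𝓝 0))
    (u : V2 → V2)
    (huA : memAOn Rect (-1) 1 u) (huS : memSBVinf Rect u) :
    ∃ un : ℕ → V2 → V2, ∃ Rn : ℕ → V2 → Mat2, ∃ γn : ℕ → V2 → ℝ,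
      (∀ n, MemAeps Rect lam (ε n) (un n) (Rn n) (γn n)) ∧
      (∀ n, (∫ x in Rect, un n x) = ∫ x in Rect, u x) ∧
      WeakStarToBV Rect un u := by
  obtain ⟨a, ψ, Φ, M, hcontrolled, hu⟩ := exists_controlledOn huA huS
  obtain ⟨gu, σ, gs, hderiv, -⟩ := huA
  exact exists_memAeps_weakStarToBV_of_controlledOn hlam hεpos hε0 hderiv hcontrolled hu
end
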